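/- arXiv:1602.01807 — 3 statements merged into one kernel-verified Lean document; each statement's English description precedes it below -/
import Mathlib

section
/- Let p ≡ 3 (mod 8), q = p^s, m ≥ 3 with 2^m exactly dividing q-1, and λ a character of order 2^m on F_q. Define integers A_m, B_m by p^{s/2^{m-2}} = A_m^2 + 2 B_m^2 with A_m ≡ -1 (mod 4), p ∤ A_m. Then G(λ) + G(λ̄) = ± 2 A_m q^{(2^{m-2}-1)/2^{m-1}} i and G(λ) - G(λ̄) = ± 2 |B_m| q^{(2^{m-2}-1)/2^{m-1}} √2. -/
/-!
Write `φ` for the quadratic character of `F`, `q = p ^ s` and `m = k + 3`. The condition `2 ^ m ∣ q - 1`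
forces `s = 2 ^ (k + 1) * t`, and its exactness makes `λ` odd: `λ(-1) = -1`. The restriction of `λ` to
the prime field is therefore its quadratic character, in particular `λ(4) = 1`.

The Gauss sum `G(λ)` is determined by two complementary facts.

* Grouping the terms of `G(λ)` by their trace gives `G(λ) = g σ`, where `g` is the quadratic Gauss sum of
  the prime field, `g ^ 2 = -p`, and `σ` is the sum of `λ` over the elements of trace `1`. This sum is
  invariant under Frobenius, and as `p ≡ 3 (mod 8)` this places `σ` in `ℤ[√-2]`
  (`gaussSum_eq_mul`, `sum_invariant_mem`).
* If `χ` has order `2 ^ (l + 4)`, then `χ φ` is the conjugate `χ ^ p ^ 2 ^ (l + 1)` of `χ`, so that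
  `G(χ φ) = G(χ)`, and the product formula `G(χ) G(χ φ) = G(φ) G(χ ^ 2)`, with `G(φ) = ± √q`, computes
  `G(χ) ^ 2`. Iterating, `G(λ) ^ 2 ^ k` is, up to sign and a power of `p`, the Gauss sum of the
  character `μ = λ ^ 2 ^ k` of order eight (`gaussSum_pow_two_pow`). For `μ` the conjugate of `μ φ` is
  `μ⁻¹`, hence `G(μ) ^ 2 = ± √q κ` with `κ = J(μ, φ)` in `ℤ[√-2]` of norm `q`. Finally `p` does not
  divide `κ`, because modulo a prime above `p` the sum becomes a binomial coefficient which is prime to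
  `p` by Lucas' theorem (`gaussSum_sq_of_order_eight`, `exists_jacobiSum_eq`, `not_dvd_choose`).

Thus `σ ^ 2 ^ (k + 1)` equals `± κ` up to powers of `p`. Comparing norms, `σ = p ^ j (a + b √-2)` with
`p ^ t = a ^ 2 + 2 b ^ 2` primitive and `2 j + t + 1 = s` (`exists_repr_of_pow_eq`). Primitive
representations are unique up to signs (`sq_eq_of_repr`), so `a = ± A` and `b = ± B`. As `λ` is odd,
`G(λ⁻¹)` is minus the complex conjugate of `G(λ)`, and the two claims read off the imaginary and real
parts of `G(λ) = ± √p i p ^ j (a + b √2 i)`.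
-/

/-- The Gauss sum over a finite field of characteristic `p`, with values in `ℂ`. -/
noncomputable def gaussC (p : ℕ) (F : Type*) [Field F] [Fintype F] [Algebra (ZMod p) F]
    (ψ : MulChar F ℂ) : ℂ :=
  ∑ x : F, ψ x *
    Complex.exp (2 * Real.pi * Complex.I * ((Algebra.trace (ZMod p) F x).val : ℂ) / p)

/-! ### Powers of `p` modulo powers of two, and representations by `a ^ 2 + 2 b ^ 2` -/

/-- The exact power of two dividing `p ^ 2 ^ (k + 1) - 1` is `2 ^ (k + 3)`. -/
lemma pow_two_pow_eq {p : ℕ} (hp : p % 8 = 3) (k : ℕ) :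
    ∃ c, p ^ 2 ^ (k + 1) = 1 + 2 ^ (k + 3) * (2 * c + 1) := by
  induction k with
  | zero =>
    obtain ⟨d, rfl⟩ : ∃ d, p = 8 * d + 3 := ⟨p / 8, by omega⟩
    exact ⟨4 * d ^ 2 + 3 * d, by ring⟩
  | succ k ih =>
    obtain ⟨c, hc⟩ := ih
    refine ⟨c + 2 ^ (k + 1) * (2 * c + 1) ^ 2, ?_⟩
    rw [pow_succ 2 (k + 1), pow_mul, hc]
    ring

lemma pow_two_pow_sub_dvd {p s m : ℕ} (hp : p % 8 = 3) (hm : 3 ≤ m) (h : 2 ^ m ∣ p ^ s - 1) :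
    2 ^ (m - 2) ∣ s := by
  obtain ⟨k, rfl⟩ : ∃ k, m = k + 3 := ⟨m - 3, by omega⟩
  have h0 : 1 ≤ p ^ s := Nat.one_le_pow _ _ (by omega)
  have key : orderOf (p : ZMod (2 ^ (k + 3))) = 2 ^ (k + 1) := by
    have h2 : (p : ZMod (2 ^ (k + 3))) ^ 2 ^ (k + 1) = 1 := by
      obtain ⟨c, hc⟩ := pow_two_pow_eq hp k
      rw [← Nat.cast_pow, hc]
      push_cast
      have : ((2 : ZMod (2 ^ (k + 3))) ^ (k + 3)) = 0 := by
        exact_mod_cast ZMod.natCast_self (2 ^ (k + 3))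
      rw [this]; ring
    refine orderOf_eq_prime_pow (fun h => ?_) h2
    rw [← Nat.cast_pow, ← Nat.cast_one, ZMod.natCast_eq_natCast_iff] at h
    rcases k with _ | k
    · have h' : p ^ 2 ^ 0 % 2 ^ (0 + 3) = 1 % 2 ^ (0 + 3) := h
      rw [pow_zero, pow_one, zero_add, show (2 : ℕ) ^ 3 = 8 by norm_num] at h'
      omega
    · obtain ⟨c, hc⟩ := pow_two_pow_eq hp k
      rw [hc] at h
      have h3 := (Nat.modEq_iff_dvd' (by omega)).1 h.symm
      rw [Nat.add_sub_cancel_left, show k + 1 + 3 = (k + 3) + 1 by ring, pow_succ] at h3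
      have := Nat.dvd_of_mul_dvd_mul_left (by positivity) h3
      omega
  rw [show k + 3 - 2 = k + 1 by omega, ← key]
  apply orderOf_dvd_of_pow_eq_one
  rw [← Nat.cast_pow, ← Nat.cast_one, ZMod.natCast_eq_natCast_iff]
  exact ((Nat.modEq_iff_dvd' h0).2 h).symm

/-- Uniqueness up to sign of a primitive representation `p ^ t = a ^ 2 + 2 * b ^ 2`: exactly one of
`A b - a B`, `A b + a B` is divisible by `p`, hence by `p ^ t`, and then it is too small not to
vanish. -/
lemma sq_eq_of_repr {p t : ℕ} (hp : p.Prime) (hp2 : p ≠ 2) {A B a b : ℤ}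
    (h1 : (p : ℤ) ^ t = A ^ 2 + 2 * B ^ 2) (h2 : (p : ℤ) ^ t = a ^ 2 + 2 * b ^ 2)
    (hA : ¬ (p : ℤ) ∣ A) (hb : ¬ (p : ℤ) ∣ b) : A ^ 2 = a ^ 2 ∧ B ^ 2 = b ^ 2 := by
  have hpp : Prime (p : ℤ) := Nat.prime_iff_prime_int.1 hp
  have hpos : (0 : ℤ) < (p : ℤ) ^ t := by have := hp.pos; positivity
  have main : ∀ B' : ℤ, B' ^ 2 = B ^ 2 → (p : ℤ) ^ t ∣ A * b - a * B' →
      A ^ 2 = a ^ 2 ∧ B ^ 2 = b ^ 2 := by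
    rintro B' hB ⟨e, he⟩
    rw [← hB] at h1 ⊢
    have h3 : ((p : ℤ) ^ t) ^ 2 = (A * a + 2 * B' * b) ^ 2 + 2 * ((p : ℤ) ^ t * e) ^ 2 := by
      rw [← he]; nth_rewrite 1 [pow_two, h1]; rw [h2]; ring
    have he0 : e = 0 := by
      by_contra hne
      have : 1 ≤ e ^ 2 := by have := pow_pos (abs_pos.2 hne) 2; rw [sq_abs] at this; omega
      nlinarith [sq_nonneg (A * a + 2 * B' * b), pow_pos hpos 2]
    rw [he0, mul_zero, sub_eq_zero] at he
    have h4 : A ^ 2 = a ^ 2 := by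
      have : A ^ 2 * (p : ℤ) ^ t = a ^ 2 * (p : ℤ) ^ t := by
        nth_rewrite 1 [h2]; rw [h1]
        linear_combination 2 * (A * b + a * B') * he
      exact mul_right_cancel₀ hpos.ne' this
    exact ⟨h4, by linarith⟩
  have hprod : (p : ℤ) ^ t ∣ (A * b - a * B) * (A * b + a * B) := by
    refine ⟨b ^ 2 - B ^ 2, ?_⟩
    have e1 : A ^ 2 = (p : ℤ) ^ t - 2 * B ^ 2 := by linarith
    have e2 : a ^ 2 = (p : ℤ) ^ t - 2 * b ^ 2 := by linarith
    linear_combination b ^ 2 * e1 - B ^ 2 * e2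
  by_cases hd : (p : ℤ) ∣ A * b - a * B
  · have hnd : ¬ (p : ℤ) ∣ A * b + a * B := by
      intro h
      have h3 := dvd_add hd h
      rw [show A * b - a * B + (A * b + a * B) = 2 * (A * b) by ring] at h3
      rcases hpp.dvd_or_dvd h3 with h | h
      · have := Int.natCast_dvd_natCast.1 (show (p : ℤ) ∣ ((2 : ℕ) : ℤ) from h)
        exact hp2 ((Nat.prime_dvd_prime_iff_eq hp Nat.prime_two).1 this)
      · exact (hpp.dvd_or_dvd h).elim hA hb
    exact main B rfl (hpp.pow_dvd_of_dvd_mul_right t hnd hprod)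
  · refine main (-B) (by ring) ?_
    rw [mul_neg, sub_neg_eq_add]
    exact hpp.pow_dvd_of_dvd_mul_left t hd hprod

/-! ### A binomial coefficient prime to `p` -/

/-- For `q = p ^ (2 * r)`, the binomial coefficient `choose ((q - 1) / 2) ((q - 1) / 8)` is prime to `p`:
by Lucas' theorem it is a product of binomial coefficients whose upper entries are the base `p` digits
of `(q - 1) / 2`, and no digit of `(q - 1) / 8` exceeds the corresponding one of `(q - 1) / 2`. -/
lemma not_dvd_choose {p : ℕ} [hpf : Fact p.Prime] (hp : p % 8 = 3) (r : ℕ) :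
    ¬ p ∣ Nat.choose ((p ^ (2 * r) - 1) / 2) ((p ^ (2 * r) - 1) / 8) := by
  have hpp := hpf.out
  have hlt : ∀ a b : ℕ, b ≤ a → a < p → ¬ p ∣ Nat.choose a b := by
    intro a b hab ha h
    have := (Nat.choose_mul_factorial_mul_factorial hab)
    have h2 : p ∣ a.factorial := by rw [← this, mul_assoc]; exact h.mul_right _
    exact absurd ((Nat.Prime.dvd_factorial hpp).1 h2) (by omega)
  have key : ∃ n, p ^ (2 * r) - 1 = 8 * n ∧ ¬ p ∣ Nat.choose (4 * n) n := by
    induction r with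
    | zero => exact ⟨0, by simp, by simpa using hpp.one_lt.ne'⟩
    | succ r ih =>
      obtain ⟨n, hn, hnd⟩ := ih
      obtain ⟨k, hk⟩ : ∃ k, p = 8 * k + 3 := ⟨p / 8, by omega⟩
      have h1 : p ^ (2 * r) = 8 * n + 1 := by
        have := Nat.one_le_pow (2 * r) p hpp.pos; omega
      refine ⟨(p * n + k) * p + (3 * k + 1), ?_, ?_⟩
      · rw [mul_add, pow_add, h1, mul_one]
        apply Nat.sub_eq_of_eq_add
        rw [hk]; ring
      · rw [show 4 * ((p * n + k) * p + (3 * k + 1)) = (p * (4 * n) + (4 * k + 1)) * p + (4 * k + 1)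
          by rw [hk]; ring]
        intro h
        -- Lucas, removing the last two base `p` digits
        have l1 := Choose.choose_modEq_choose_mod_mul_choose_div_nat (p := p)
          (n := (p * (4 * n) + (4 * k + 1)) * p + (4 * k + 1)) (k := (p * n + k) * p + (3 * k + 1))
        have l2 := Choose.choose_modEq_choose_mod_mul_choose_div_nat (p := p)
          (n := p * (4 * n) + (4 * k + 1)) (k := p * n + k)
        have m1 : ∀ x y, y < p → (x * p + y) % p = y := fun x y hy => by
          rw [mul_comm, Nat.mul_add_mod, Nat.mod_eq_of_lt hy]
        have m2 : ∀ x y, y < p → (x * p + y) / p = x := fun x y hy => by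
          rw [mul_comm, Nat.mul_add_div hpp.pos, Nat.div_eq_of_lt hy, add_zero]
        have m3 : ∀ x y, y < p → (p * x + y) % p = y := fun x y hy => by
          rw [mul_comm]; exact m1 x y hy
        have m4 : ∀ x y, y < p → (p * x + y) / p = x := fun x y hy => by
          rw [mul_comm]; exact m2 x y hy
        rw [m1 _ _ (by omega), m1 _ _ (by omega), m2 _ _ (by omega), m2 _ _ (by omega)] at l1
        rw [m3 _ _ (by omega), m3 _ _ (by omega), m4 _ _ (by omega), m4 _ _ (by omega)] at l2
        have h2 := (l1.dvd_iff dvd_rfl).1 h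
        rcases hpp.dvd_mul.1 h2 with h | h
        · exact hlt _ _ (by omega) (by omega) h
        have h3 := (l2.dvd_iff dvd_rfl).1 h
        rcases hpp.dvd_mul.1 h3 with h | h
        · exact hlt _ _ (by omega) (by omega) h
        · exact hnd h
  obtain ⟨n, hn, hnd⟩ := key
  rw [hn, show 8 * n / 2 = 4 * n by omega, show 8 * n / 8 = n by omega]
  exact hnd

/-! ### Powers of elements of `p`-power norm in `ℤ[√-2]` -/

lemma exists_primitive_part {p : ℕ} (hp : p.Prime) (k : ℕ) (σ : ℤ√(-2))
    (h : σ.norm = (p : ℤ) ^ k) :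
    ∃ (j w : ℕ) (τ : ℤ√(-2)), σ = (p : ℤ√(-2)) ^ j * τ ∧ ¬ (p : ℤ√(-2)) ∣ τ ∧
      τ.norm = (p : ℤ) ^ w := by
  induction k using Nat.strong_induction_on generalizing σ with
  | _ k ih =>
    by_cases hd : (p : ℤ√(-2)) ∣ σ
    · obtain ⟨τ, rfl⟩ := hd
      rw [Zsqrtd.norm_mul, Zsqrtd.norm_natCast] at h
      have hp0 : (p : ℤ) ≠ 0 := by exact_mod_cast hp.ne_zero
      have hk : 2 ≤ k := by
        by_contra hlt
        have h2 : p ^ 2 ∣ p ^ k := by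
          have : (p : ℤ) ^ 2 ∣ (p : ℤ) ^ k := ⟨τ.norm, by rw [← h]; ring⟩
          exact_mod_cast this
        have := (Nat.pow_dvd_pow_iff_le_right hp.one_lt).1 h2
        omega
      obtain ⟨l, rfl⟩ : ∃ l, k = l + 2 := ⟨k - 2, by omega⟩
      have h3 : τ.norm = (p : ℤ) ^ l := by
        apply mul_left_cancel₀ (mul_ne_zero hp0 hp0)
        rw [h]; ring
      obtain ⟨j, w, τ', h4, h5, h6⟩ := ih l (by omega) τ h3
      exact ⟨j + 1, w, τ', by rw [h4]; ring, h5, h6⟩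
    · exact ⟨0, k, σ, by simp, hd, h⟩

lemma norm_two (τ : ℤ√(-2)) : τ.norm = τ.re ^ 2 + 2 * τ.im ^ 2 := by
  rw [Zsqrtd.norm_def]; ring

/-- An element of `p`-power norm `> 1` prime to `p` has both coordinates prime to `p`. -/
lemma not_dvd_re {p : ℕ} (hp : p.Prime) (hp2 : p ≠ 2) {w : ℕ} {τ : ℤ√(-2)}
    (h : ¬ (p : ℤ√(-2)) ∣ τ) (hw : τ.norm = (p : ℤ) ^ (w + 1)) :
    ¬ (p : ℤ) ∣ τ.re ∧ ¬ (p : ℤ) ∣ τ.im := by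
  have hpp : Prime (p : ℤ) := Nat.prime_iff_prime_int.1 hp
  have hp2' : ¬ (p : ℤ) ∣ 2 := fun h => by
    have := Int.natCast_dvd_natCast.1 (show (p : ℤ) ∣ ((2 : ℕ) : ℤ) from h)
    exact hp2 ((Nat.prime_dvd_prime_iff_eq hp Nat.prime_two).1 this)
  have hn : (p : ℤ) ∣ τ.re ^ 2 + 2 * τ.im ^ 2 := by
    rw [← norm_two, hw]; exact dvd_pow_self _ (Nat.succ_ne_zero _)
  have hor : ¬ ((p : ℤ) ∣ τ.re ∧ (p : ℤ) ∣ τ.im) := fun hh => h <| by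
    have := (Zsqrtd.intCast_dvd (p : ℤ) τ).2 hh
    simpa using this
  constructor
  · intro hr
    have h3 := (dvd_add_right (dvd_pow hr two_ne_zero)).1 hn
    rcases hpp.dvd_or_dvd h3 with h3 | h3
    · exact hp2' h3
    · exact hor ⟨hr, hpp.dvd_of_dvd_pow h3⟩
  · intro hr
    have h3 := (dvd_add_left (Dvd.dvd.mul_left (dvd_pow hr two_ne_zero) 2)).1 hn
    exact hor ⟨hpp.dvd_of_dvd_pow h3, hr⟩

/-- Powers of an element of `p`-power norm prime to `p` stay prime to `p`. From
`τ ^ 2 = (2 Re τ) τ - N(τ)` one gets `τ ^ (k + 1) ≡ (2 Re τ) ^ k τ` modulo `p`, which avoids unique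
factorization in `ℤ√(-2)`. -/
lemma not_dvd_pow {p : ℕ} (hp : p.Prime) (hp2 : p ≠ 2) {w : ℕ} {τ : ℤ√(-2)}
    (h : ¬ (p : ℤ√(-2)) ∣ τ) (hw : τ.norm = (p : ℤ) ^ w) (n : ℕ) :
    ¬ (p : ℤ√(-2)) ∣ τ ^ n := by
  have hpp : Prime (p : ℤ) := Nat.prime_iff_prime_int.1 hp
  have hp2' : ¬ (p : ℤ) ∣ 2 := fun h => by
    have := Int.natCast_dvd_natCast.1 (show (p : ℤ) ∣ ((2 : ℕ) : ℤ) from h)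
    exact hp2 ((Nat.prime_dvd_prime_iff_eq hp Nat.prime_two).1 this)
  have hone : ∀ ρ : ℤ√(-2), ρ.norm = 1 → ¬ (p : ℤ√(-2)) ∣ ρ := by
    rintro ρ h1 ⟨c, rfl⟩
    rw [Zsqrtd.norm_mul, Zsqrtd.norm_natCast, mul_assoc] at h1
    exact hpp.not_dvd_one ⟨_, h1.symm⟩
  rcases w with _ | w
  · apply hone
    have : (Zsqrtd.normMonoidHom (d := -2)) (τ ^ n) = 1 := by
      rw [map_pow]
      change τ.norm ^ n = 1
      rw [hw]; simp
    exact this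
  rcases n with _ | k
  · exact hone _ (by simp)
  have hre := (not_dvd_re hp hp2 h hw).1
  have hsq : τ ^ 2 - ((2 * τ.re : ℤ) : ℤ√(-2)) * τ = -(p : ℤ√(-2)) ^ (w + 1) := by
    have h1 : (p : ℤ√(-2)) ^ (w + 1) = ((τ.norm : ℤ) : ℤ√(-2)) := by rw [hw]; push_cast; rfl
    rw [h1, norm_two]
    ext <;> simp [pow_two] <;> ring
  have hk : (p : ℤ√(-2)) ∣ τ ^ (k + 1) - ((((2 * τ.re) ^ k : ℤ)) : ℤ√(-2)) * τ := by
    induction k with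
    | zero => simp
    | succ k ih =>
      have : τ ^ (k + 1 + 1) - ((((2 * τ.re) ^ (k + 1) : ℤ)) : ℤ√(-2)) * τ
          = τ * (τ ^ (k + 1) - ((((2 * τ.re) ^ k : ℤ)) : ℤ√(-2)) * τ)
            + ((((2 * τ.re) ^ k : ℤ)) : ℤ√(-2)) * (τ ^ 2 - ((2 * τ.re : ℤ) : ℤ√(-2)) * τ) := by
        push_cast; ring
      rw [this, hsq]
      refine dvd_add (ih.mul_left _) (Dvd.dvd.mul_left ?_ _)
      exact (dvd_pow_self _ (Nat.succ_ne_zero _)).neg_right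
  intro hd
  have h1 := (dvd_sub_right hd).1 hk
  rw [← Int.cast_natCast] at h1
  have h2 := ((Zsqrtd.intCast_dvd (p : ℤ) _).1 h1).1
  rw [Zsqrtd.re_smul] at h2
  rcases hpp.dvd_or_dvd h2 with h3 | h3
  · rcases hpp.dvd_or_dvd (hpp.dvd_of_dvd_pow h3) with h4 | h4
    · exact hp2' h4
    · exact hre h4
  · exact hre h3

/-- If `σ ^ n` agrees up to powers of `p` with some `κ` prime to `p`, then the exact power of `p`
dividing `σ`, and the norm of the primitive part of `σ`, are determined by the norms. -/
lemma exists_repr_of_pow_eq {p : ℕ} (hp : p.Prime) (hp2 : p ≠ 2) {n k t N₁ N₂ : ℕ} (hn : n ≠ 0)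
    (ht : t ≠ 0) {σ κ : ℤ√(-2)} (hσ : σ.norm = (p : ℤ) ^ k) (hκ : κ.norm = (p : ℤ) ^ (t * n))
    (hκp : ¬ (p : ℤ√(-2)) ∣ κ)
    (h : (p : ℤ√(-2)) ^ N₁ * σ ^ n = (p : ℤ√(-2)) ^ N₂ * κ) :
    ∃ (j : ℕ) (a b : ℤ), σ = (p : ℤ√(-2)) ^ j * ⟨a, b⟩ ∧ (p : ℤ) ^ t = a ^ 2 + 2 * b ^ 2 ∧
      ¬ (p : ℤ) ∣ b ∧ k = 2 * j + t := by
  obtain ⟨j, w, τ, rfl, hτ, hw⟩ := exists_primitive_part hp k σ hσ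
  have hτn := not_dvd_pow hp hp2 hτ hw n
  have hp0 : (p : ℤ) ≠ 0 := by exact_mod_cast hp.ne_zero
  have cancel : ∀ (x : ℕ) (α β : ℤ√(-2)), (p : ℤ√(-2)) ^ x * α = (p : ℤ√(-2)) ^ x * β → α = β := by
    intro x α β he
    refine Zsqrtd.eq_of_smul_eq_smul_left (a := (p : ℤ) ^ x) (pow_ne_zero _ hp0) ?_
    push_cast; exact he
  rw [mul_pow, ← pow_mul, ← mul_assoc, ← pow_add] at h
  have heq : τ ^ n = κ := by
    rcases lt_trichotomy (N₁ + j * n) N₂ with hlt | he | hlt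
    · obtain ⟨y, rfl⟩ := Nat.exists_eq_add_of_lt hlt
      rw [add_assoc, pow_add _ (N₁ + j * n), mul_assoc] at h
      exact absurd (cancel _ _ _ h ▸ (dvd_pow_self _ (Nat.succ_ne_zero y)).mul_right _) hτn
    · rw [he] at h; exact cancel _ _ _ h
    · obtain ⟨y, hy⟩ := Nat.exists_eq_add_of_lt hlt
      rw [hy, add_assoc, pow_add _ N₂, mul_assoc] at h
      exact absurd ((cancel _ _ _ h).symm ▸ (dvd_pow_self _ (Nat.succ_ne_zero y)).mul_right _) hκp
  have hpow_inj : ∀ x y : ℕ, (p : ℤ) ^ x = (p : ℤ) ^ y → x = y := fun x y hxy =>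
    Nat.pow_right_injective hp.two_le (by exact_mod_cast hxy)
  have hpow : ∀ (α : ℤ√(-2)) (n : ℕ), (α ^ n).norm = α.norm ^ n := fun α n =>
    map_pow (Zsqrtd.normMonoidHom (d := -2)) α n
  have hwt : w = t := by
    rw [← heq, hpow, hw, ← pow_mul] at hκ
    exact Nat.eq_of_mul_eq_mul_right (Nat.pos_of_ne_zero hn) (hpow_inj _ _ hκ)
  subst hwt
  obtain ⟨w, rfl⟩ := Nat.exists_eq_succ_of_ne_zero ht
  refine ⟨j, τ.re, τ.im, rfl, by rw [← hw, norm_two], (not_dvd_re hp hp2 hτ hw).2, ?_⟩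
  rw [Zsqrtd.norm_mul, hw, hpow, Zsqrtd.norm_natCast] at hσ
  apply hpow_inj
  rw [← hσ]; ring

/-! ### Frobenius-invariant sums of roots of unity of two-power order -/

open Complex in
/-- The embedding `ℤ[√-2] → ℂ` sending the square root of `-2` to `√2 i`. -/
noncomputable def toC : ℤ√(-2) →+* ℂ :=
  Zsqrtd.lift ⟨(Real.sqrt 2 : ℂ) * I, by
    rw [mul_mul_mul_comm, I_mul_I, ← ofReal_mul, Real.mul_self_sqrt (by norm_num)]; norm_num⟩

lemma toC_apply (α : ℤ√(-2)) :
    toC α = (α.re : ℂ) + (α.im : ℂ) * ((Real.sqrt 2 : ℂ) * Complex.I) := rfl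

lemma toC_eq (α : ℤ√(-2)) :
    toC α = (((α.re : ℤ) : ℝ) : ℂ) + (((α.im : ℝ) * Real.sqrt 2 : ℝ) : ℂ) * Complex.I := by
  rw [toC_apply]; push_cast; ring

lemma toC_injective : Function.Injective toC := by
  intro α β h
  rw [toC_eq, toC_eq] at h
  have hre := congrArg Complex.re h
  have him := congrArg Complex.im h
  simp at hre him
  exact Zsqrtd.ext hre him

lemma normSq_toC (α : ℤ√(-2)) : Complex.normSq (toC α) = (α.norm : ℝ) := by
  rw [toC_eq, Complex.normSq_add_mul_I, Zsqrtd.norm_def, mul_pow, Real.sq_sqrt (by norm_num)]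
  push_cast; ring

lemma add_pow_three_eq {z : ℂ} (hz : z ^ 4 = -1) :
    ∃ e : ℤ, (e = 1 ∨ e = -1) ∧ z + z ^ 3 = e * ((Real.sqrt 2 : ℂ) * Complex.I) := by
  have h2 : (Real.sqrt 2 : ℂ) ^ 2 = 2 := by
    rw [← Complex.ofReal_pow, Real.sq_sqrt (by norm_num)]; norm_num
  have h : (z + z ^ 3) ^ 2 = ((Real.sqrt 2 : ℂ) * Complex.I) ^ 2 := by
    rw [mul_pow, h2, Complex.I_sq]
    linear_combination (2 + z ^ 2) * hz
  rcases sq_eq_sq_iff_eq_or_eq_neg.1 h with h | h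
  · exact ⟨1, Or.inl rfl, by rw [h]; simp⟩
  · exact ⟨-1, Or.inr rfl, by rw [h]; simp⟩

/-- A root of `z ^ 4 = -1` has exact order eight. -/
lemma modEq_of_pow_eq {z : ℂ} (hz : z ^ 4 = -1) {a b : ℕ} (h : z ^ a = z ^ b) :
    a ≡ b [MOD 8] := by
  have h8 : z ^ 2 ^ 3 = 1 := by norm_num; linear_combination (z ^ 4 - 1) * hz
  have ho : orderOf z = 2 ^ 3 :=
    orderOf_eq_prime_pow (by norm_num [hz]) h8
  have hfin : IsOfFinOrder z := isOfFinOrder_iff_pow_eq_one.2 ⟨2 ^ 3, by norm_num, h8⟩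
  have := hfin.pow_eq_pow_iff_modEq.1 h
  rwa [ho] at this

/-- The coefficient of `z ^ i`, `i < 4`, in the reduction of `z ^ l` modulo `z ^ 4 + 1`. -/
def coeffMod (i l : ℕ) : ℤ := if l % 8 = i then 1 else if l % 8 = i + 4 then -1 else 0

lemma pow_eq_coeffMod {R : Type*} [CommRing R] {z : R} (hz : z ^ 4 = -1) (l : ℕ) :
    z ^ l = coeffMod 0 l + coeffMod 1 l * z + coeffMod 2 l * z ^ 2 + coeffMod 3 l * z ^ 3 := by
  have h8 : z ^ 8 = 1 := by linear_combination (z ^ 4 - 1) * hz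
  have hl : z ^ l = z ^ (l % 8) := by
    conv_lhs => rw [← Nat.div_add_mod l 8, pow_add, pow_mul, h8, one_pow, one_mul]
  rw [hl]
  unfold coeffMod
  have := Nat.mod_lt l (show 8 > 0 by norm_num)
  generalize l % 8 = k at *
  interval_cases k <;> simp
  · linear_combination hz
  · linear_combination z * hz
  · linear_combination z ^ 2 * hz
  · linear_combination z ^ 3 * hz

/-- A sum of powers of a root `z` of `z ^ 4 = -1`, invariant under the permutation `σ` which cubes
the terms, is an integral combination of `1` and `z + z ^ 3`. The coefficients do not depend on
the ring in which `z` lives, so the same sum can be compared in `ℂ` and in a finite field. -/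
lemma sum_eq_of_invariant {X : Type*} [Fintype X] (σ : Equiv.Perm X) (f : X → ℤ)
    (hf : ∀ x, f (σ x) = f x) (L : X → ℕ) (hL : ∀ x, L (σ x) ≡ 3 * L x [MOD 8])
    {R : Type*} [CommRing R] {z : R} (hz : z ^ 4 = -1) :
    ∑ x, (f x : R) * z ^ L x = ((∑ x, f x * coeffMod 0 (L x) : ℤ) : R) +
      ((∑ x, f x * coeffMod 1 (L x) : ℤ) : R) * (z + z ^ 3) := by
  have hL' : ∀ x, L (σ x) % 8 = 3 * L x % 8 := hL
  have h1 : ∑ x, f x * coeffMod 1 (L x) = ∑ x, f x * coeffMod 3 (L x) := by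
    rw [← Equiv.sum_comp σ (fun x => f x * coeffMod 1 (L x))]
    refine Finset.sum_congr rfl fun x _ => ?_
    rw [hf]; congr 1
    unfold coeffMod; rw [hL']
    split_ifs <;> first | rfl | omega
  have h2 : ∑ x, f x * coeffMod 2 (L x) = 0 := by
    have : ∑ x, f x * coeffMod 2 (L x) = -∑ x, f x * coeffMod 2 (L x) := by
      conv_lhs => rw [← Equiv.sum_comp σ (fun x => f x * coeffMod 2 (L x))]
      rw [← Finset.sum_neg_distrib]
      refine Finset.sum_congr rfl fun x _ => ?_
      rw [hf, ← mul_neg]; congr 1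
      unfold coeffMod; rw [hL']
      split_ifs <;> first | rfl | omega
    omega
  have h3 : ∑ x, (f x : R) * z ^ L x = ((∑ x, f x * coeffMod 0 (L x) : ℤ) : R) +
      ((∑ x, f x * coeffMod 1 (L x) : ℤ) : R) * z + ((∑ x, f x * coeffMod 2 (L x) : ℤ) : R) * z ^ 2
      + ((∑ x, f x * coeffMod 3 (L x) : ℤ) : R) * z ^ 3 := by
    push_cast
    simp only [Finset.sum_mul]
    rw [← Finset.sum_add_distrib, ← Finset.sum_add_distrib, ← Finset.sum_add_distrib]
    refine Finset.sum_congr rfl fun x _ => ?_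
    rw [pow_eq_coeffMod hz (L x)]; ring
  rw [h3, h2, ← h1]
  push_cast; ring

/-- A Frobenius-invariant sum of `2 ^ (k + 3)`-th roots of unity lies in `ℤ[√-2]`. Applying
`σ ^ 2 ^ (k + 1)` multiplies a term `c x` by `c x ^ 2 ^ (k + 3) = ±1`, so the terms of full order cancel
and only `2 ^ (k + 2)`-th roots of unity are left. -/
lemma sum_invariant_mem {p : ℕ} (hp : p % 8 = 3) {X : Type*} [Fintype X] (σ : Equiv.Perm X) (k : ℕ)
    (f : X → ℤ) (hf : ∀ x, f (σ x) = f x) (c : X → ℂ) (hc : ∀ x, c x ^ 2 ^ (k + 3) = 1)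
    (hσ : ∀ x, c (σ x) = c x ^ p) : ∃ α : ℤ√(-2), ∑ x, (f x : ℂ) * c x = toC α := by
  induction k generalizing f c with
  | zero =>
    have hζ := Complex.isPrimitiveRoot_exp 8 (by norm_num)
    set ζ := Complex.exp (2 * Real.pi * Complex.I / (8 : ℕ))
    have hex : ∀ x, ∃ i, ζ ^ i = c x := fun x => by
      obtain ⟨i, -, hi⟩ := hζ.eq_pow_of_pow_eq_one (by simpa using hc x)
      exact ⟨i, hi⟩
    choose L hL using hex
    have hz : ζ ^ 4 = -1 := by
      have := (hζ.pow (by norm_num) (show 8 = 4 * 2 by norm_num)).eq_neg_one_of_two_right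
      exact this
    obtain ⟨e, -, he⟩ := add_pow_three_eq hz
    have h := sum_eq_of_invariant σ f hf L (fun x => by
      apply modEq_of_pow_eq hz
      rw [hL, hσ, mul_comm, pow_mul, hL, ← Nat.div_add_mod p 8, hp,
        pow_add, pow_mul, show c x ^ 8 = 1 by simpa using hc x, one_pow, one_mul]) hz
    refine ⟨⟨∑ x, f x * coeffMod 0 (L x), (∑ x, f x * coeffMod 1 (L x)) * e⟩, ?_⟩
    simp only [hL] at h
    rw [toC_apply, h, he]
    push_cast; ring
  | succ k ih =>
    classical
    obtain ⟨d, hd⟩ := pow_two_pow_eq hp k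
    have hε2 : ∀ x, (c x ^ 2 ^ (k + 3)) ^ 2 = 1 := fun x => by
      rw [← pow_mul, ← pow_succ]; exact hc x
    have hε : ∀ x, c x ^ 2 ^ (k + 3) = 1 ∨ c x ^ 2 ^ (k + 3) = -1 := fun x =>
      by simpa using sq_eq_sq_iff_eq_or_eq_neg.1 ((hε2 x).trans (one_pow 2).symm)
    have hiter : ∀ N x, f ((σ ^ N) x) = f x ∧ c ((σ ^ N) x) = c x ^ p ^ N := by
      intro N
      induction N with
      | zero => simp
      | succ N ihN =>
        intro x
        rw [pow_succ', Equiv.Perm.mul_apply, hf, hσ, (ihN x).1, (ihN x).2, ← pow_mul, ← pow_succ]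
        exact ⟨rfl, rfl⟩
    have hsum : ∑ x, (f x : ℂ) * c x = ∑ x, (f x : ℂ) * c x * c x ^ 2 ^ (k + 3) := by
      rw [← Equiv.sum_comp (σ ^ 2 ^ (k + 1)) (fun x => (f x : ℂ) * c x)]
      refine Finset.sum_congr rfl fun x _ => ?_
      rw [(hiter _ x).1, (hiter _ x).2, hd, pow_add, pow_mul, pow_one, pow_add _ (2 * d), pow_mul _ 2,
        hε2]
      ring
    have hσε : ∀ x, c (σ x) ^ 2 ^ (k + 3) = c x ^ 2 ^ (k + 3) := fun x => by
      rw [hσ, ← pow_mul, mul_comm, pow_mul, ← Nat.div_add_mod p 2, show p % 2 = 1 by omega, pow_add,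
        pow_mul, hε2, one_pow, one_mul, pow_one]
    obtain ⟨α, hα⟩ := ih (fun x => if c x ^ 2 ^ (k + 3) = 1 then f x else 0)
      (fun x => by simp only [hσε, hf]) (fun x => if c x ^ 2 ^ (k + 3) = 1 then c x else 1)
      (fun x => by
        by_cases h : c x ^ 2 ^ (k + 3) = 1 <;> simp [h])
      (fun x => by
        rw [hσε, hσ]
        by_cases h : c x ^ 2 ^ (k + 3) = 1 <;> simp [h])
    refine ⟨α, ?_⟩
    rw [← hα]
    have h2 : 2 * ∑ x, (f x : ℂ) * c x =
        2 * ∑ x, (((if c x ^ 2 ^ (k + 3) = 1 then f x else 0 : ℤ) : ℂ) *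
          (if c x ^ 2 ^ (k + 3) = 1 then c x else 1)) := by
      rw [two_mul]
      nth_rewrite 2 [hsum]
      rw [← Finset.sum_add_distrib, Finset.mul_sum]
      refine Finset.sum_congr rfl fun x _ => ?_
      rcases hε x with h | h
      · simp [h]; ring
      · rw [h]; norm_num
    exact mul_left_cancel₀ two_ne_zero h2

/-! ### The quadratic character and Frobenius -/

open Classical in
/-- The quadratic character of a finite field, with complex values. -/
noncomputable def qchar (F : Type*) [Field F] [Fintype F] : MulChar F ℂ :=
  (quadraticChar F).ringHomComp (Int.castRingHom ℂ)

lemma sum_eq_sum_units {F R : Type*} [Field F] [Fintype F] [AddCommMonoid R] [Fintype Fˣ] (h : F → R)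
    (h0 : h 0 = 0) : ∑ x, h x = ∑ u : Fˣ, h u := by
  symm
  refine Finset.sum_of_injOn (fun u : Fˣ => (u : F)) (fun a _ b _ hab => Units.ext hab) (by simp)
    (fun x _ hx => ?_) (fun _ _ => rfl)
  by_cases hx0 : x = 0
  · rw [hx0, h0]
  · exact absurd ⟨Units.mk0 x hx0, by simp, by simp⟩ hx

/-- The Frobenius automorphism `u ↦ u ^ p` of the unit group, as a permutation. -/
noncomputable def frobUnits (p : ℕ) [Fact p.Prime] (F : Type*) [Field F] [Fintype F]
    [Algebra (ZMod p) F] : Equiv.Perm Fˣ :=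
  (Units.mapEquiv (FiniteField.frobeniusAlgEquivOfAlgebraic (ZMod p) F).toMulEquiv).toEquiv

section PrimeField

variable {p : ℕ} [Fact p.Prime] {F : Type*} [Field F] [Fintype F] [Algebra (ZMod p) F]

lemma frobUnits_val (u : Fˣ) : ((frobUnits p F u : Fˣ) : F) = (u : F) ^ p := by
  have : ((frobUnits p F u : Fˣ) : F) = FiniteField.frobeniusAlgEquivOfAlgebraic (ZMod p) F u := rfl
  rw [this]
  simp [ZMod.card]

/-! ### The Jacobi sum of a character of order eight -/

/-- The reduction modulo `p` of a Jacobi sum: expanding `(1 - u) ^ (4 * N)`, a single monomial has an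
exponent divisible by `q - 1 = 8 * N`. -/
lemma sum_choose_eq [DecidableEq F] {N : ℕ} (hN : 0 < N) (hq : Fintype.card F = 8 * N + 1) :
    ∑ u : Fˣ, (1 - (u : F)) ^ (4 * N) * (u : F) ^ (7 * N) =
      -((-1) ^ N * (Nat.choose (4 * N) N : F)) := by
  have h1 : ∀ u : Fˣ, (1 - (u : F)) ^ (4 * N) * (u : F) ^ (7 * N) =
      ∑ k ∈ Finset.range (4 * N + 1),
        ((-1) ^ k * (Nat.choose (4 * N) k : F)) * (u : F) ^ (k + 7 * N) := by
    intro u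
    rw [sub_eq_neg_add, add_pow, Finset.sum_mul]
    refine Finset.sum_congr rfl fun k _ => ?_
    rw [neg_pow, one_pow, pow_add]; ring
  simp_rw [h1]
  rw [Finset.sum_comm]
  simp_rw [← Finset.mul_sum, FiniteField.sum_pow_units, hq, Nat.add_sub_cancel]
  rw [Finset.sum_eq_single N]
  · rw [if_pos ⟨1, by ring⟩]; ring
  · intro k hk hkN
    rw [if_neg, mul_zero]
    rintro ⟨c, hc⟩
    have hk' := Finset.mem_range.1 hk
    rcases c with _ | _ | c
    · omega
    · omega
    · nlinarith
  · intro h; exact absurd (Finset.mem_range.2 (by omega)) h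

/-- The Jacobi sum of a character `μ` of order eight with the quadratic character lies in `ℤ[√-2]`, by
Frobenius invariance, and is not divisible by `p`: a generator `g` of the unit group being fixed,
replacing `μ(g)` by `g ^ (7 * N)`, `q - 1 = 8 * N`, maps the sum to a binomial coefficient prime
to `p`. -/
lemma exists_jacobiSum_eq (hp : p % 8 = 3) {r : ℕ} (hr : 0 < r)
    (hq : Fintype.card F = p ^ (2 * r)) {μ : MulChar F ℂ} (h8 : μ ^ 8 = 1) (h4 : μ ^ 4 ≠ 1) :
    ∃ κ : ℤ√(-2), ¬ (p : ℤ√(-2)) ∣ κ ∧ jacobiSum μ (qchar F) = toC κ := by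
  classical
  have hpp : p.Prime := Fact.out
  have : CharP F p := charP_of_injective_algebraMap (algebraMap (ZMod p) F).injective p
  have hring : ringChar F ≠ 2 := by rw [ringChar.eq F p]; omega
  have hchoose := not_dvd_choose hp r
  rw [← hq] at hchoose
  obtain ⟨N, hN, hqN⟩ : ∃ N, 0 < N ∧ Fintype.card F = 8 * N + 1 := by
    obtain ⟨c, hc⟩ := pow_two_pow_eq hp 0
    have h9 : p ^ 2 % 8 = 1 := by
      norm_num at hc; omega
    have h1 : p ^ (2 * r) % 8 = 1 := by rw [pow_mul, Nat.pow_mod, h9]; simp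
    have h2 : 1 < p ^ (2 * r) := Nat.one_lt_pow (by omega) hpp.one_lt
    exact ⟨p ^ (2 * r) / 8, by omega, by omega⟩
  rw [hqN, Nat.add_sub_cancel, show 8 * N / 2 = 4 * N by omega, show 8 * N / 8 = N by omega]
    at hchoose
  obtain ⟨g, hg⟩ := IsCyclic.exists_generator (α := Fˣ)
  have hlog : ∀ u : Fˣ, ∃ i : ℕ, g ^ i = u := fun u =>
    mem_powers_iff_mem_zpowers.2 (hg u)
  choose L hL using hlog
  set z : ℂ := μ g with hz
  have hμL : ∀ u : Fˣ, μ u = z ^ L u := fun u => by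
    conv_lhs => rw [← hL u]
    rw [Units.val_pow_eq_pow_val, map_pow]
  have hz8 : z ^ 8 = 1 := by
    rw [hz, ← MulChar.pow_apply_coe, h8, MulChar.one_apply_coe]
  have hz4 : z ^ 4 = -1 := by
    have h : z ^ 4 ≠ 1 := fun h => h4 <| (MulChar.eq_iff hg _ _).2 <| by
      rw [MulChar.pow_apply_coe, MulChar.one_apply_coe]; exact h
    have h2 : (z ^ 4) ^ 2 = 1 ^ 2 := by rw [← pow_mul, hz8]; norm_num
    exact (sq_eq_sq_iff_eq_or_eq_neg.1 h2).resolve_left h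
  have hLσ : ∀ u, L (frobUnits p F u) ≡ 3 * L u [MOD 8] := fun u => by
    apply modEq_of_pow_eq hz4
    rw [← hμL, frobUnits_val, map_pow, hμL, ← pow_mul, ← Nat.div_add_mod p 8, hp, mul_add,
      mul_left_comm, pow_add, pow_mul, hz8, one_pow, one_mul, mul_comm]
  have hf : ∀ u : Fˣ, quadraticChar F (1 - (frobUnits p F u : Fˣ)) = quadraticChar F (1 - (u : F)) := by
    intro u
    rw [frobUnits_val]
    have : (1 : F) - (u : F) ^ p = (1 - (u : F)) ^ p := by
      rw [sub_pow_char, one_pow]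
    rw [this, map_pow]
    by_cases h0 : (1 - (u : F)) = 0
    · rw [h0, MulChar.map_zero, zero_pow hpp.ne_zero]
    · rw [← Nat.div_add_mod p 2, show p % 2 = 1 by omega, pow_add, pow_mul,
        quadraticChar_sq_one h0, one_pow, one_mul, pow_one]
  obtain ⟨e, he1, he⟩ := add_pow_three_eq hz4
  have hC := sum_eq_of_invariant (frobUnits p F) (fun u : Fˣ => quadraticChar F (1 - (u : F))) hf L hLσ
    hz4
  set c : ℤ := ∑ u : Fˣ, quadraticChar F (1 - (u : F)) * coeffMod 0 (L u) with hc
  set d : ℤ := ∑ u : Fˣ, quadraticChar F (1 - (u : F)) * coeffMod 1 (L u) with hd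
  refine ⟨⟨c, d * e⟩, ?_, ?_⟩
  · rw [← Int.cast_natCast, Zsqrtd.intCast_dvd]
    rintro ⟨hdc, hdd⟩
    have hdd' : (p : ℤ) ∣ d := by
      rcases he1 with rfl | rfl
      · simpa using hdd
      · simpa using hdd
    have hz4' : ((g : F) ^ (7 * N)) ^ 4 = -1 := by
      have hgc : orderOf (g : F) = 8 * N := by
        rw [orderOf_units, orderOf_eq_card_of_forall_mem_zpowers hg, Nat.card_eq_fintype_card,
          Fintype.card_units, hqN, Nat.add_sub_cancel]
      have h1 : (g : F) ^ (8 * N) = 1 := hgc ▸ pow_orderOf_eq_one _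
      have h2 : (g : F) ^ (4 * N) ≠ 1 := pow_ne_one_of_lt_orderOf (by omega) (by omega)
      have h3 : (g : F) ^ (4 * N) = -1 := by
        have : ((g : F) ^ (4 * N)) ^ 2 = 1 ^ 2 := by
          rw [← pow_mul, show 4 * N * 2 = 8 * N by ring, h1, one_pow]
        exact (sq_eq_sq_iff_eq_or_eq_neg.1 this).resolve_left h2
      rw [← pow_mul, show 7 * N * 4 = 4 * N * 7 by ring, pow_mul, h3]
      norm_num
    have hF := sum_eq_of_invariant (frobUnits p F) (fun u : Fˣ => quadraticChar F (1 - (u : F))) hf L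
      hLσ hz4'
    rw [← hc, ← hd, (CharP.intCast_eq_zero_iff F p c).2 hdc, (CharP.intCast_eq_zero_iff F p d).2 hdd',
      zero_mul, add_zero] at hF
    have hS := sum_choose_eq hN hqN
    rw [Finset.sum_congr rfl (g := fun u : Fˣ =>
      ((quadraticChar F (1 - (u : F)) : ℤ) : F) * ((g : F) ^ (7 * N)) ^ L u), hF] at hS
    · have h0 : ((4 * N).choose N : F) = 0 := by
        rcases mul_eq_zero.1 (neg_eq_zero.1 hS.symm) with h | h
        · exact absurd h (pow_ne_zero _ (neg_ne_zero.2 one_ne_zero))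
        · exact h
      exact hchoose ((CharP.cast_eq_zero_iff F p _).1 h0)
    · intro u _
      have hu : (g : F) ^ L u = (u : F) := by rw [← Units.val_pow_eq_pow_val, hL]
      rw [quadraticChar_eq_pow_of_char_ne_two' hring, hqN, show (8 * N + 1) / 2 = 4 * N by omega,
        ← pow_mul (g : F), mul_comm (7 * N), pow_mul (g : F), hu]
  · rw [jacobiSum, sum_eq_sum_units _ (by rw [MulChar.map_zero, zero_mul]), toC_apply]
    have : ∀ u : Fˣ, μ u * qchar F (1 - (u : F)) =
        ((quadraticChar F (1 - (u : F)) : ℤ) : ℂ) * z ^ L u := fun u => by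
      rw [hμL, mul_comm]; rfl
    rw [Finset.sum_congr rfl fun u _ => this u, hC, he]
    push_cast; ring

/-! ### Gauss sums with respect to the trace character -/

/-- The additive character `x ↦ exp (2πi Tr(x) / p)` of `F`. -/
noncomputable def trChar (p : ℕ) [Fact p.Prime] (F : Type*) [Field F] [Algebra (ZMod p) F] :
    AddChar F ℂ :=
  (ZMod.stdAddChar (N := p)).compAddMonoidHom (Algebra.trace (ZMod p) F).toAddMonoidHom

omit [Fintype F] in
lemma trChar_apply (x : F) : trChar p F x = ZMod.stdAddChar (Algebra.trace (ZMod p) F x) := rfl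

lemma gaussC_eq (χ : MulChar F ℂ) : gaussC p F χ = gaussSum χ (trChar p F) := by
  refine Finset.sum_congr rfl fun x _ => ?_
  rw [trChar_apply]
  have h := ZMod.stdAddChar_coe (N := p) ((Algebra.trace (ZMod p) F x).val : ℤ)
  rw [Int.cast_natCast, ZMod.natCast_zmod_val] at h
  rw [h]
  push_cast; rfl

lemma trChar_isPrimitive : (trChar p F).IsPrimitive := by
  apply AddChar.IsPrimitive.of_ne_one
  intro h
  obtain ⟨x, hx⟩ := Algebra.trace_surjective (ZMod p) F 1
  have h1 : trChar p F x = 1 := by rw [h]; rfl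
  rw [trChar_apply, hx, ← AddChar.map_zero_eq_one (ZMod.stdAddChar (N := p))] at h1
  exact one_ne_zero (ZMod.injective_stdAddChar h1)

lemma trace_frob (x : F) : Algebra.trace (ZMod p) F (x ^ p) = Algebra.trace (ZMod p) F x := by
  have h := Algebra.trace_eq_of_algEquiv (FiniteField.frobeniusAlgEquivOfAlgebraic (ZMod p) F) x
  rw [← h]
  simp [ZMod.card]

/-- Gauss sums are invariant under the Frobenius action on characters. -/
lemma gaussSum_pow_char (χ : MulChar F ℂ) :
    gaussSum (χ ^ p) (trChar p F) = gaussSum χ (trChar p F) := by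
  rw [gaussSum, gaussSum, ← Equiv.sum_comp
    (FiniteField.frobeniusAlgEquivOfAlgebraic (ZMod p) F).toEquiv (fun x => χ x * trChar p F x)]
  refine Finset.sum_congr rfl fun x _ => ?_
  have hx : (FiniteField.frobeniusAlgEquivOfAlgebraic (ZMod p) F).toEquiv x = x ^ p := by
    simp [ZMod.card]
  rw [hx, trChar_apply, trChar_apply, trace_frob, map_pow,
    MulChar.pow_apply' _ (Fact.out : p.Prime).ne_zero]

lemma gaussSum_pow_char_pow (χ : MulChar F ℂ) (n : ℕ) :
    gaussSum (χ ^ p ^ n) (trChar p F) = gaussSum χ (trChar p F) := by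
  induction n with
  | zero => simp
  | succ n ih => rw [pow_succ, pow_mul, gaussSum_pow_char, ih]

lemma normSq_gaussSum {K : Type*} [Field K] [Fintype K] {χ : MulChar K ℂ} (hχ : χ ≠ 1)
    {ψ : AddChar K ℂ} (hψ : ψ.IsPrimitive) :
    Complex.normSq (gaussSum χ ψ) = Fintype.card K := by
  have h := gaussSum_mul_gaussSum_eq_card hχ hψ
  rw [← star_gaussSum_eq] at h
  have h2 := Complex.mul_conj (gaussSum χ ψ)
  rw [starRingEnd_apply, h] at h2
  exact_mod_cast h2.symm

/-- A Gauss sum over `F` is the quadratic Gauss sum over the prime field times an Eisenstein sum,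
as soon as the character restricts to the quadratic character of the prime field. -/
lemma gaussSum_eq_mul [Fintype Fˣ] {χ : MulChar F ℂ} (hneg : χ (-1) = -1)
    (hχ : ∀ c : ZMod p, χ (algebraMap (ZMod p) F c) = qchar (ZMod p) c) :
    gaussSum χ (trChar p F) = gaussSum (qchar (ZMod p)) (ZMod.stdAddChar (N := p)) *
      ∑ u : Fˣ, (((if Algebra.trace (ZMod p) F u = 1 then 1 else 0 : ℤ)) : ℂ) * χ u := by
  classical
  set T : ZMod p → ℂ := fun c => ∑ x : F, if Algebra.trace (ZMod p) F x = c then χ x else 0 with hT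
  have hscale : ∀ c : ZMod p, c ≠ 0 → ∀ b, T (c * b) = qchar (ZMod p) c * T b := by
    intro c hc b
    have hc' : algebraMap (ZMod p) F c ≠ 0 := by simpa using hc
    simp only [hT]
    rw [← Equiv.sum_comp (Equiv.mulLeft₀ _ hc'), Finset.mul_sum]
    refine Finset.sum_congr rfl fun x _ => ?_
    rw [show Equiv.mulLeft₀ (algebraMap (ZMod p) F c) hc' x = algebraMap (ZMod p) F c * x from rfl,
      map_mul χ, hχ, ← Algebra.smul_def, map_smul, smul_eq_mul]
    simp only [mul_right_inj' hc, mul_ite, mul_zero]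
  have hT0 : T 0 = 0 := by
    have h := hscale (-1) (by simp) 0
    rw [mul_zero, ← hχ, map_neg, map_one, hneg] at h
    have h2 : (2 : ℂ) * T 0 = 0 := by linear_combination h
    simpa using h2
  have hTc : ∀ c, T c = qchar (ZMod p) c * T 1 := by
    intro c
    by_cases hc : c = 0
    · rw [hc, hT0, MulChar.map_zero, zero_mul]
    · have := hscale c hc 1
      rwa [mul_one] at this
  have h1 : gaussSum χ (trChar p F) = ∑ c, T c * ZMod.stdAddChar c := by
    simp only [hT, Finset.sum_mul]
    rw [Finset.sum_comm, gaussSum]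
    refine Finset.sum_congr rfl fun x _ => ?_
    simp only [ite_mul, zero_mul]
    rw [Finset.sum_ite_eq]
    simp [trChar_apply]
  have h2 : T 1 = ∑ u : Fˣ, (((if Algebra.trace (ZMod p) F u = 1 then 1 else 0 : ℤ)) : ℂ) * χ u := by
    simp only [hT]
    rw [sum_eq_sum_units _ (by simp)]
    refine Finset.sum_congr rfl fun x _ => ?_
    split_ifs <;> simp
  rw [h1, ← h2, gaussSum, Finset.sum_mul]
  refine Finset.sum_congr rfl fun c _ => ?_
  rw [hTc]; ring

/-! ### Quadratic characters and the product formula -/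

lemma qchar_sq {K : Type*} [Field K] [Fintype K] : (qchar K) ^ 2 = 1 := by
  classical
  have h : (quadraticChar K) ^ 2 = 1 := (quadraticChar_isQuadratic K).sq_eq_one
  ext u
  have h1 := congrArg (fun ρ : MulChar K ℤ => (ρ u : ℤ)) h
  rw [MulChar.pow_apply_coe] at h1 ⊢
  simp only [MulChar.one_apply_coe] at h1 ⊢
  have : qchar K u = ((quadraticChar K u : ℤ) : ℂ) := by unfold qchar; congr!
  rw [this]; exact_mod_cast h1

lemma qchar_ne_one {K : Type*} [Field K] [Fintype K] (hK : ringChar K ≠ 2) : qchar K ≠ 1 := by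
  classical
  intro h
  obtain ⟨u, hu⟩ := quadraticChar_exists_neg_one' hK
  have h1 : qchar K u = 1 := by rw [h, MulChar.one_apply_coe]
  have : qchar K u = ((quadraticChar K u : ℤ) : ℂ) := by unfold qchar; congr!
  rw [this, hu] at h1
  norm_num at h1

lemma apply_generator_eq_neg_one {K : Type*} [Field K] [Fintype K] {ρ : MulChar K ℂ} (h2 : ρ ^ 2 = 1)
    (h1 : ρ ≠ 1) {g : Kˣ} (hg : ∀ x, x ∈ Subgroup.zpowers g) : ρ g = -1 := by
  have h : (ρ g) ^ 2 = 1 ^ 2 := by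
    rw [← MulChar.pow_apply_coe, h2, MulChar.one_apply_coe, one_pow]
  refine (sq_eq_sq_iff_eq_or_eq_neg.1 h).resolve_left fun h3 => h1 ?_
  rw [MulChar.eq_iff hg, h3, MulChar.one_apply_coe]

/-- The quadratic character is the only multiplicative character of order two. -/
lemma eq_qchar {K : Type*} [Field K] [Fintype K] (hK : ringChar K ≠ 2) {ρ : MulChar K ℂ}
    (h2 : ρ ^ 2 = 1) (h1 : ρ ≠ 1) : ρ = qchar K := by
  obtain ⟨g, hg⟩ := IsCyclic.exists_generator (α := Kˣ)
  rw [MulChar.eq_iff hg, apply_generator_eq_neg_one h2 h1 hg,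
    apply_generator_eq_neg_one qchar_sq (qchar_ne_one hK) hg]

lemma qchar_neg_one {K : Type*} [Field K] [Fintype K] (hK : ringChar K ≠ 2) :
    qchar K (-1) = ((ZMod.χ₄ (Fintype.card K) : ℤ) : ℂ) := by
  classical
  rw [← quadraticChar_neg_one hK]; unfold qchar; congr!

lemma gaussSum_qchar_sq {K : Type*} [Field K] [Fintype K] (hK : ringChar K ≠ 2)
    {ψ : AddChar K ℂ} (hψ : ψ.IsPrimitive) :
    gaussSum (qchar K) ψ ^ 2 = qchar K (-1) * Fintype.card K := by
  have hinv : (qchar K)⁻¹ = qchar K := by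
    rw [inv_eq_iff_mul_eq_one, ← pow_two, qchar_sq]
  have h := gaussSum_mul_gaussSum_eq_card (qchar_ne_one hK) hψ
  rw [hinv] at h
  have e := mul_gaussSum_inv_eq_gaussSum (qchar K) ψ
  linear_combination -(gaussSum (qchar K) ψ) * e + qchar K (-1) * h

/-- If `χ(4) = 1`, the substitution `y = 2x - 1` identifies `J(χ, χ)` with `J(χ, φ)`, `φ` the
quadratic character. -/
lemma jacobiSum_self {K : Type*} [Field K] [Fintype K] (hK : ringChar K ≠ 2) {χ : MulChar K ℂ}
    (hχ : χ ≠ 1) (h4 : χ 4 = 1) : jacobiSum χ χ = jacobiSum χ (qchar K) := by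
  classical
  have h2 : (2 : K) ≠ 0 := Ring.two_ne_zero hK
  have e1 : jacobiSum χ χ = ∑ y : K, χ (1 - y ^ 2) := by
    rw [← Equiv.sum_comp ((Equiv.mulLeft₀ (2 : K) h2).trans (Equiv.subRight 1)), jacobiSum]
    refine Finset.sum_congr rfl fun x _ => ?_
    rw [← map_mul, ← one_mul (χ (x * (1 - x))), ← h4, ← map_mul]
    congr 1
    simp; ring
  have e2 : ∑ y : K, χ (1 - y ^ 2) = ∑ w : K, χ (1 - w) * (1 + qchar K w) := by
    have : ∀ w : K, (1 + qchar K w) = ∑ y : K, if y ^ 2 = w then (1 : ℂ) else 0 := by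
      intro w
      have h := quadraticChar_card_sqrts hK w
      rw [Finset.sum_boole]
      have hq : qchar K w = ((quadraticChar K w : ℤ) : ℂ) := by unfold qchar; congr!
      rw [hq, add_comm, ← Int.cast_one, ← Int.cast_add, ← h, Int.cast_natCast]
      congr 2
      ext y; simp
    simp_rw [this, Finset.mul_sum]
    rw [Finset.sum_comm]
    refine Finset.sum_congr rfl fun y _ => ?_
    simp
  rw [e1, e2, jacobiSum_comm]
  simp_rw [mul_add, mul_one]
  have e3 : ∑ x : K, χ (1 - x) = 0 := by
    rw [← MulChar.sum_eq_zero_of_ne_one hχ]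
    exact Equiv.sum_comp (Equiv.subLeft (1 : K)) (fun x => χ x)
  rw [Finset.sum_add_distrib, e3, zero_add, jacobiSum]
  exact Finset.sum_congr rfl fun x _ => mul_comm _ _

/-- The Hasse-Davenport product formula for the prime `2`, in the case `χ(4) = 1`. -/
lemma gaussSum_mul_gaussSum_qchar {K : Type*} [Field K] [Fintype K] (hK : ringChar K ≠ 2)
    {χ : MulChar K ℂ} (hχ : χ ≠ 1) (h2 : χ ^ 2 ≠ 1) (hq : χ * qchar K ≠ 1) (h4 : χ 4 = 1)
    {ψ : AddChar K ℂ} (hψ : ψ.IsPrimitive) :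
    gaussSum χ ψ * gaussSum (χ * qchar K) ψ = gaussSum (qchar K) ψ * gaussSum (χ ^ 2) ψ := by
  have e1 := jacobiSum_mul_nontrivial (χ := χ) (φ := χ) (by rwa [← pow_two]) ψ
  have e2 := jacobiSum_mul_nontrivial hq ψ
  rw [jacobiSum_self hK hχ h4, ← pow_two] at e1
  have hne : gaussSum χ ψ ≠ 0 :=
    gaussSum_ne_zero_of_nontrivial (by exact_mod_cast Fintype.card_ne_zero) hχ hψ
  apply mul_left_cancel₀ hne
  linear_combination gaussSum (χ ^ 2) ψ * e2 - gaussSum (χ * qchar K) ψ * e1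

/-! ### Characters of two-power order -/

/-- A character of order `2 ^ m` is odd when `2 ^ m` is the full power of two in `q - 1`. -/
lemma apply_neg_one_eq {K : Type*} [Field K] [Fintype K] {m : ℕ} {χ : MulChar K ℂ}
    (h1 : χ ^ 2 ^ (m + 1) = 1) (h2 : χ ^ 2 ^ m ≠ 1) (hdvd : 2 ^ (m + 1) ∣ Fintype.card K - 1)
    (hndvd : ¬ 2 ^ (m + 2) ∣ Fintype.card K - 1) : χ (-1) = -1 := by
  classical
  obtain ⟨g, hg⟩ := IsCyclic.exists_generator (α := Kˣ)
  have h3 : (χ ^ 2 ^ m) g = -1 := apply_generator_eq_neg_one (by rw [← pow_mul, ← pow_succ, h1]) h2 hg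
  obtain ⟨d, hd⟩ := hdvd
  obtain ⟨c, rfl⟩ : Odd d := by
    rw [← Nat.not_even_iff_odd, even_iff_two_dvd]
    rintro ⟨c, rfl⟩
    exact hndvd ⟨c, by rw [hd]; ring⟩
  have hgc : orderOf (g : K) = 2 ^ (m + 1) * (2 * c + 1) := by
    rw [orderOf_units, orderOf_eq_card_of_forall_mem_zpowers hg, Nat.card_eq_fintype_card,
      Fintype.card_units, hd]
  have h4 : (g : K) ^ (2 ^ m * (2 * c + 1)) = -1 := by
    have : ((g : K) ^ (2 ^ m * (2 * c + 1))) ^ 2 = 1 ^ 2 := by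
      rw [← pow_mul, one_pow, ← pow_orderOf_eq_one (g : K), hgc]
      congr 1; ring
    refine (sq_eq_sq_iff_eq_or_eq_neg.1 this).resolve_left ?_
    refine pow_ne_one_of_lt_orderOf (by positivity) ?_
    rw [hgc, pow_succ]
    have : 0 < 2 ^ m * (2 * c + 1) := by positivity
    nlinarith
  rw [← h4, map_pow, pow_mul, ← MulChar.pow_apply_coe, h3, Odd.neg_one_pow ⟨c, rfl⟩]

omit [Fintype F] in
/-- As `p ≡ 3 (mod 4)`, an odd character of two-power order restricts to the quadratic character of
the prime field. -/
lemma apply_algebraMap_eq_qchar (hp : p % 8 = 3) {m : ℕ} {χ : MulChar F ℂ} (h1 : χ ^ 2 ^ m = 1)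
    (hneg : χ (-1) = -1) (c : ZMod p) : χ (algebraMap (ZMod p) F c) = qchar (ZMod p) c := by
  have hring : ringChar (ZMod p) ≠ 2 := by rw [ZMod.ringChar_zmod_n]; omega
  let ρ : MulChar (ZMod p) ℂ :=
    { toMonoidHom := χ.toMonoidHom.comp (algebraMap (ZMod p) F : ZMod p →* F)
      map_nonunit' := fun a ha => by
        have : a = 0 := by simpa using ha
        simpa [this] using MulChar.map_zero χ }
  have hρ : ∀ a, ρ a = χ (algebraMap (ZMod p) F a) := fun a => rfl
  rw [← hρ]
  congr 1
  apply eq_qchar hring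
  · ext u
    rw [MulChar.pow_apply_coe, MulChar.one_apply_coe]
    have e1 : (ρ u) ^ (p - 1) = 1 := by
      rw [← map_pow, ← Units.val_pow_eq_pow_val, ZMod.units_pow_card_sub_one_eq_one]; simp
    have e2 : (ρ u) ^ 2 ^ m = 1 := by
      have hu : IsUnit (algebraMap (ZMod p) F u) := u.isUnit.map _
      obtain ⟨v, hv⟩ := hu
      rw [hρ, ← hv, ← MulChar.pow_apply_coe, h1, MulChar.one_apply_coe]
    have e3 : (p - 1).gcd (2 ^ m) ∣ 2 := by
      obtain ⟨d, hd⟩ : ∃ d, p - 1 = 2 * (2 * d + 1) := ⟨p / 4, by omega⟩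
      rw [hd]
      have hc : Nat.Coprime (2 * d + 1) (2 ^ m) := Nat.Coprime.pow_right _ (by simp)
      rw [Nat.Coprime.gcd_mul_right_cancel _ hc]
      exact Nat.gcd_dvd_left _ _
    obtain ⟨d, hd⟩ := e3
    rw [hd, pow_mul, pow_gcd_eq_one.2 ⟨e1, e2⟩, one_pow]
  · intro h
    have : ρ (-1) = 1 := by rw [h]; exact MulChar.one_apply isUnit_one.neg
    rw [hρ, map_neg, map_one, hneg] at this
    norm_num at this

omit [Fintype F] in
lemma apply_four_eq_one (hp : p % 8 = 3) {m : ℕ} {χ : MulChar F ℂ} (h1 : χ ^ 2 ^ m = 1)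
    (hneg : χ (-1) = -1) : χ 4 = 1 := by
  have h2 : (2 : ZMod p) ≠ 0 := Ring.two_ne_zero (by rw [ZMod.ringChar_zmod_n]; omega)
  have h4 : (4 : F) = algebraMap (ZMod p) F 2 ^ 2 := by rw [map_ofNat]; norm_num
  rw [h4, map_pow, apply_algebraMap_eq_qchar hp h1 hneg]
  have h := MulChar.pow_apply_coe (qchar (ZMod p)) 2 (Units.mk0 _ h2)
  rw [qchar_sq, MulChar.one_apply_coe] at h
  exact h.symm

omit [Fact p.Prime] in
lemma card_mod_four (hp : p % 8 = 3) (r : ℕ) : p ^ (2 * r) % 4 = 1 := by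
  have : p ^ 2 % 4 = 1 := by
    have : p % 4 = 3 := by omega
    simp [Nat.pow_mod, this]
  simp [pow_mul, Nat.pow_mod (p ^ 2), this]

/-- Over a field of order `p ^ (2 * r)` the quadratic Gauss sum is a rational integer. -/
lemma gaussSum_qchar_eq (hp : p % 8 = 3) {r : ℕ} (hq : Fintype.card F = p ^ (2 * r)) :
    ∃ ε : ℤ, ε ^ 2 = 1 ∧ gaussSum (qchar F) (trChar p F) = ε * p ^ r := by
  have : CharP F p := charP_of_injective_algebraMap (algebraMap (ZMod p) F).injective p
  have hring : ringChar F ≠ 2 := by rw [ringChar.eq F p]; omega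
  have h := gaussSum_qchar_sq hring (trChar_isPrimitive (p := p) (F := F))
  rw [qchar_neg_one hring, hq, ZMod.χ₄_nat_one_mod_four (card_mod_four hp r), mul_comm 2 r, pow_mul] at h
  push_cast at h
  rw [one_mul] at h
  rcases sq_eq_sq_iff_eq_or_eq_neg.1 h with h | h
  · exact ⟨1, by norm_num, by rw [h]; simp⟩
  · exact ⟨-1, by norm_num, by rw [h]; simp⟩

/-- Iterating the product formula: as `χ φ` is a conjugate of `χ` under Frobenius, each squaring of
`G(χ)` gives `G(χ ^ 2)` up to sign and a power of `p`. -/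
lemma gaussSum_pow_two_pow (hp : p % 8 = 3) {r : ℕ} (hq : Fintype.card F = p ^ (2 * r)) (k : ℕ) :
    ∀ χ : MulChar F ℂ, χ ^ 2 ^ (k + 3) = 1 → χ ^ 2 ^ (k + 2) ≠ 1 → χ 4 = 1 →
      ∃ (N : ℕ) (ε : ℤ), ε ^ 2 = 1 ∧
        gaussSum χ (trChar p F) ^ 2 ^ k = ε * p ^ N * gaussSum (χ ^ 2 ^ k) (trChar p F) := by
  have : CharP F p := charP_of_injective_algebraMap (algebraMap (ZMod p) F).injective p
  have hring : ringChar F ≠ 2 := by rw [ringChar.eq F p]; omega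
  induction k with
  | zero => intro χ _ _ _; exact ⟨0, 1, by norm_num, by simp⟩
  | succ k ih =>
    intro χ h1 h2 h4
    have hφ : χ ^ 2 ^ (k + 3) = qchar F := eq_qchar hring (by rw [← pow_mul, ← pow_succ, h1]) h2
    have hχ2 : χ ^ 2 ≠ 1 := fun h => h2 (by
      rw [show k + 1 + 2 = (k + 2) + 1 by ring, pow_succ', pow_mul, h, one_pow])
    have hχ : χ ≠ 1 := fun h => hχ2 (by rw [h, one_pow])
    have hχφ : χ * qchar F ≠ 1 := fun h => hχ2 (by
      have := congrArg (· ^ 2) h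
      simpa [mul_pow, qchar_sq] using this)
    obtain ⟨c, hc⟩ := pow_two_pow_eq hp k
    have hconj : χ ^ p ^ 2 ^ (k + 1) = χ * qchar F := by
      rw [hc, pow_add, pow_one, pow_mul, hφ, pow_succ, pow_mul, qchar_sq, one_pow, one_mul]
    have hG := gaussSum_mul_gaussSum_qchar hring hχ hχ2 hχφ h4
      (trChar_isPrimitive (p := p) (F := F))
    rw [← hconj, gaussSum_pow_char_pow, ← pow_two] at hG
    obtain ⟨ε, hε, hQ⟩ := gaussSum_qchar_eq hp hq
    obtain ⟨N, δ, hδ, hN⟩ := ih (χ ^ 2) (by rw [← pow_mul, ← pow_succ', h1])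
      (by rw [← pow_mul, ← pow_succ']; exact h2)
      (by rw [MulChar.pow_apply' _ two_ne_zero, h4, one_pow])
    refine ⟨r * 2 ^ k + N, ε ^ 2 ^ k * δ, ?_, ?_⟩
    · rw [mul_pow, ← pow_mul, mul_comm (2 ^ k), pow_mul, hε, hδ, one_pow, one_mul]
    · rw [pow_succ', pow_mul, hG, mul_pow, hN, hQ, ← pow_mul χ]
      push_cast
      ring

/-- The square of the Gauss sum of a character of order eight is `± √q` times an element of `ℤ[√-2]` of
norm `q` which is not divisible by `p`, namely its Jacobi sum with the quadratic character. -/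
lemma gaussSum_sq_of_order_eight (hp : p % 8 = 3) {r : ℕ} (hr : 0 < r)
    (hq : Fintype.card F = p ^ (2 * r)) {μ : MulChar F ℂ} (h8 : μ ^ 8 = 1) (h4 : μ ^ 4 ≠ 1) :
    ∃ (ε : ℤ) (κ : ℤ√(-2)), ε ^ 2 = 1 ∧ ¬ (p : ℤ√(-2)) ∣ κ ∧ κ.norm = (p : ℤ) ^ (2 * r) ∧
      gaussSum μ (trChar p F) ^ 2 = ε * p ^ r * toC κ := by
  have : CharP F p := charP_of_injective_algebraMap (algebraMap (ZMod p) F).injective p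
  have hring : ringChar F ≠ 2 := by rw [ringChar.eq F p]; omega
  have hprim := trChar_isPrimitive (p := p) (F := F)
  have hφ : μ ^ 4 = qchar F := eq_qchar hring (by rw [← pow_mul, h8]) h4
  have hμ2 : μ ^ 2 ≠ 1 := fun h => h4 (by rw [show 4 = 2 * 2 by rfl, pow_mul, h, one_pow])
  have hμ : μ ≠ 1 := fun h => hμ2 (by rw [h, one_pow])
  have hμφ : μ * qchar F ≠ 1 := fun h => hμ2 (by
    have := congrArg (· ^ 2) h
    simpa [mul_pow, qchar_sq] using this)
  have hinv : μ⁻¹ = μ ^ 7 := by rw [inv_eq_iff_mul_eq_one, ← pow_succ', h8]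
  -- `μ φ = μ ^ 5` is sent to `μ ^ 15 = μ⁻¹` by Frobenius
  have hconj : gaussSum (μ * qchar F) (trChar p F) = gaussSum μ⁻¹ (trChar p F) := by
    rw [← gaussSum_pow_char, ← hφ, ← pow_succ', ← pow_mul, hinv]
    congr 1
    conv_lhs => rw [← Nat.div_add_mod p 8, hp,
      show (4 + 1) * (8 * (p / 8) + 3) = 8 * (5 * (p / 8) + 1) + 7 by ring, pow_add, pow_mul, h8,
      one_pow, one_mul]
  obtain ⟨κ, hκ, hJ⟩ := exists_jacobiSum_eq hp hr hq h8 h4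
  obtain ⟨ε, hε, hQ⟩ := gaussSum_qchar_eq hp hq
  obtain ⟨δ, hδ, hδ'⟩ : ∃ δ : ℤ, δ ^ 2 = 1 ∧ μ (-1) = δ := by
    have : (μ (-1)) ^ 2 = 1 ^ 2 := by rw [← map_pow]; simp
    rcases sq_eq_sq_iff_eq_or_eq_neg.1 this with h | h
    · exact ⟨1, by norm_num, by rw [h]; simp⟩
    · exact ⟨-1, by norm_num, by rw [h]; simp⟩
  have e1 := jacobiSum_mul_nontrivial hμφ (trChar p F)
  have e2 := gaussSum_mul_gaussSum_eq_card hμ hprim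
  have e3 := mul_gaussSum_inv_eq_gaussSum μ⁻¹ (trChar p F)
  have hμinv : (μ⁻¹) (-1) = δ := by
    rw [hinv, MulChar.pow_apply' _ (by norm_num), hδ']
    have : (δ : ℂ) ^ 2 = 1 := by exact_mod_cast hδ
    linear_combination ((δ : ℂ) ^ 5 + δ ^ 3 + δ) * this
  have hδ2 : (δ : ℂ) ^ 2 = 1 := by exact_mod_cast hδ
  have hε2 : (ε : ℂ) ^ 2 = 1 := by exact_mod_cast hε
  rw [hμinv] at e3
  rw [hconj, hQ, hJ] at e1
  rw [hq] at e2
  push_cast at e2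
  have hp0 : (p : ℂ) ≠ 0 := by exact_mod_cast (Fact.out : p.Prime).ne_zero
  have hG0 : gaussSum μ (trChar p F) ≠ 0 :=
    gaussSum_ne_zero_of_nontrivial (by exact_mod_cast Fintype.card_ne_zero) hμ hprim
  have key : gaussSum μ (trChar p F) ^ 2 = ((ε * δ : ℤ) : ℂ) * p ^ r * toC κ := by
    set G := gaussSum μ (trChar p F)
    set H := gaussSum μ⁻¹ (trChar p F)
    have e4 : G * H = δ * p ^ (2 * r) := by
      linear_combination (-G) * e3 + δ * e2
    have e5 : (p : ℂ) ^ r * (ε * (p ^ r) * toC κ * δ) = p ^ r * (ε * (ε * G ^ 2)) := by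
      have e6 : (p : ℂ) ^ (2 * r) = p ^ r * p ^ r := by rw [← pow_add]; ring_nf
      rw [e6] at e4
      linear_combination ε * G * e1 - ε * toC κ * e4
    have e7 := mul_left_cancel₀ (pow_ne_zero r hp0) e5
    push_cast
    linear_combination -e7 - G ^ 2 * hε2
  refine ⟨ε * δ, κ, by rw [mul_pow, hε, hδ, one_mul], hκ, ?_, key⟩
  have hn := congrArg Complex.normSq key
  rw [map_pow, normSq_gaussSum hμ hprim, map_mul, map_mul, map_pow, normSq_toC, hq,
    Complex.normSq_intCast, Complex.normSq_natCast] at hn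
  have hεδ : (((ε * δ : ℤ)) : ℝ) * ((ε * δ : ℤ) : ℝ) = 1 := by
    have : (ε * δ) * (ε * δ) = 1 := by linear_combination hε * δ ^ 2 + hδ
    exact_mod_cast this
  rw [hεδ, one_mul] at hn
  have hn' : ((p : ℤ) ^ (2 * r)) ^ 2 = ((p : ℤ) * p) ^ r * κ.norm := by exact_mod_cast hn
  have hp0' : ((p : ℤ) * p) ^ r ≠ 0 := by
    have : (p : ℤ) ≠ 0 := by exact_mod_cast (Fact.out : p.Prime).ne_zero
    positivity
  refine mul_left_cancel₀ hp0' ?_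
  rw [← hn']; ring

/-! ### Determination of the Gauss sum -/

/-- The Gauss sum of an odd character of order `2 ^ (k + 3)`, where `q = p ^ (2 ^ (k + 1) * t)`, up to
the sign of the square root of `-p`. -/
lemma exists_gaussSum_eq (hp : p % 8 = 3) {k t : ℕ} (ht : 0 < t)
    (hq : Fintype.card F = p ^ (2 ^ (k + 1) * t)) {χ : MulChar F ℂ} (h1 : χ ^ 2 ^ (k + 3) = 1)
    (h2 : χ ^ 2 ^ (k + 2) ≠ 1) (hneg : χ (-1) = -1) :
    ∃ (g : ℂ) (j : ℕ) (a b : ℤ), g ^ 2 = -p ∧ gaussSum χ (trChar p F) = g * (p ^ j * toC ⟨a, b⟩) ∧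
      (p : ℤ) ^ t = a ^ 2 + 2 * b ^ 2 ∧ ¬ (p : ℤ) ∣ b ∧ 2 ^ (k + 1) * t = 2 * j + t + 1 := by
  classical
  have hpp : p.Prime := Fact.out
  have hp2 : p ≠ 2 := by omega
  have hring : ringChar (ZMod p) ≠ 2 := by rw [ZMod.ringChar_zmod_n]; exact hp2
  have hχ : χ ≠ 1 := fun h => h2 (by rw [h, one_pow])
  have hQ := apply_algebraMap_eq_qchar hp h1 hneg
  have h4 := apply_four_eq_one hp h1 hneg
  have hq' : Fintype.card F = p ^ (2 * (2 ^ k * t)) := by rw [hq]; congr 1; ring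
  obtain ⟨N, ε, hε, hN⟩ := gaussSum_pow_two_pow hp hq' k χ h1 h2 h4
  obtain ⟨δ, κ, hδ, hκp, hκ, hκG⟩ := gaussSum_sq_of_order_eight hp (by positivity) hq'
    (μ := χ ^ 2 ^ k) (by rw [← pow_mul, show 2 ^ k * 8 = 2 ^ (k + 3) by ring, h1])
    (by rw [← pow_mul, show 2 ^ k * 4 = 2 ^ (k + 2) by ring]; exact h2)
  obtain ⟨σ, hσ⟩ := sum_invariant_mem hp (frobUnits p F) k
    (fun u => if Algebra.trace (ZMod p) F u = 1 then 1 else 0)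
    (fun u => by rw [frobUnits_val, trace_frob]) (fun u => χ u)
    (fun u => by rw [← MulChar.pow_apply_coe, h1, MulChar.one_apply_coe])
    (fun u => by rw [frobUnits_val, map_pow])
  have hG := gaussSum_eq_mul hneg hQ
  rw [hσ] at hG
  have hprim0 := ZMod.isPrimitive_stdAddChar p
  have hg := gaussSum_qchar_sq hring hprim0
  rw [qchar_neg_one hring, ZMod.card, ZMod.χ₄_nat_three_mod_four (by omega)] at hg
  push_cast at hg
  rw [neg_one_mul] at hg
  set g := gaussSum (qchar (ZMod p)) (ZMod.stdAddChar (N := p))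
  set G := gaussSum χ (trChar p F)
  have hs : 0 < 2 ^ (k + 1) * t := by positivity
  have hσn : σ.norm = (p : ℤ) ^ (2 ^ (k + 1) * t - 1) := by
    have hn := congrArg Complex.normSq hG
    rw [map_mul, normSq_gaussSum hχ trChar_isPrimitive, normSq_gaussSum (qchar_ne_one hring) hprim0,
      normSq_toC, hq, ZMod.card] at hn
    have hn' : (p : ℤ) ^ (2 ^ (k + 1) * t) = p * σ.norm := by exact_mod_cast hn
    obtain ⟨s, hs'⟩ : ∃ s, 2 ^ (k + 1) * t = s + 1 := ⟨2 ^ (k + 1) * t - 1, by omega⟩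
    rw [hs', pow_succ'] at hn'
    rw [hs', Nat.add_sub_cancel]
    exact (mul_left_cancel₀ (by exact_mod_cast hpp.ne_zero) hn').symm
  -- two evaluations of `G ^ 2 ^ (k + 1)`, using `g ^ 2 = -p`
  have hpow : (p : ℤ√(-2)) ^ 2 ^ k * σ ^ 2 ^ (k + 1) = (p : ℤ√(-2)) ^ (2 * N + 2 ^ k * t) *
      ((((-1) ^ 2 ^ k * δ : ℤ) : ℤ√(-2)) * κ) := by
    apply toC_injective
    simp only [map_mul, map_pow, map_natCast, map_intCast]
    have e1 : G ^ 2 ^ (k + 1) = (-p) ^ 2 ^ k * toC σ ^ 2 ^ (k + 1) := by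
      rw [hG, mul_pow, pow_succ' 2 k, pow_mul g, hg]
    have e2 : G ^ 2 ^ (k + 1) = p ^ (2 * N + 2 ^ k * t) * (δ * toC κ) := by
      rw [pow_succ, pow_mul, hN, mul_pow, hκG]
      have : (ε : ℂ) ^ 2 = 1 := by exact_mod_cast hε
      linear_combination (p ^ N) ^ 2 * (δ * p ^ (2 ^ k * t) * toC κ) * this
    rw [e1, neg_pow] at e2
    have e3 : ((-1 : ℂ) ^ 2 ^ k) ^ 2 = 1 := by rw [← pow_mul, mul_comm, pow_mul]; simp
    push_cast
    linear_combination (-1 : ℂ) ^ 2 ^ k * e2 - p ^ 2 ^ k * toC σ ^ 2 ^ (k + 1) * e3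
  have hunit : ((-1) ^ 2 ^ k * δ : ℤ) ^ 2 = 1 := by
    rw [mul_pow, hδ, ← pow_mul, pow_mul', neg_one_sq, one_pow, one_mul]
  set u : ℤ := (-1) ^ 2 ^ k * δ
  obtain ⟨j, a, b, hσj, hrepr, hb, hj⟩ := exists_repr_of_pow_eq hpp hp2 (n := 2 ^ (k + 1))
    (by positivity) ht.ne' hσn (κ := (u : ℤ√(-2)) * κ)
    (by
      rw [Zsqrtd.norm_mul, Zsqrtd.norm_intCast, hκ, ← pow_two, hunit, one_mul]
      congr 1; ring)
    (by
      rintro ⟨x, hx⟩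
      refine hκp ⟨u * x, ?_⟩
      have hu : (u : ℤ√(-2)) ^ 2 = 1 := by exact_mod_cast hunit
      linear_combination (u : ℤ√(-2)) * hx - κ * hu) hpow
  refine ⟨g, j, a, b, hg, ?_, hrepr, hb, by omega⟩
  rw [hG, hσj]; simp

/-- An odd character satisfies `G(χ⁻¹) = -conj G(χ)`. -/
lemma gaussSum_inv_eq {χ : MulChar F ℂ} (hneg : χ (-1) = -1) :
    gaussSum χ⁻¹ (trChar p F) = -(starRingEnd ℂ) (gaussSum χ (trChar p F)) := by
  have h := mul_gaussSum_inv_eq_gaussSum χ⁻¹ (trChar p F)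
  have h1 : (χ⁻¹) (-1) = -1 := by
    rw [MulChar.inv_apply' , ← hneg]; norm_num
  rw [h1] at h
  rw [starRingEnd_apply, star_gaussSum_eq, ← h, neg_one_mul]

/-- With `s = n * t`, the exponent `s * (n - 1) / (2 * n)` is `(s - t) / 2 = j + 1 / 2`. -/
lemma rpow_eq {p s n t j : ℕ} (hp : 0 < p) (hn : 0 < n) (hs : s = n * t) (hj : s = 2 * j + t + 1) :
    ((p : ℝ) ^ s) ^ (((n - 1) / (2 * n) : ℝ)) = Real.sqrt p * p ^ j := by
  have hp' : (0 : ℝ) < p := by exact_mod_cast hp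
  rw [← Real.rpow_natCast, ← Real.rpow_mul hp'.le, Real.sqrt_eq_rpow, ← Real.rpow_natCast (p : ℝ) j,
    ← Real.rpow_add hp']
  congr 1
  have h1 : (s : ℝ) = n * t := by exact_mod_cast hs
  have h2 : (s : ℝ) = 2 * j + t + 1 := by exact_mod_cast hj
  have hn' : (n : ℝ) ≠ 0 := by positivity
  rw [h1] at h2 ⊢
  field_simp
  linear_combination h2

end PrimeField

theorem stmt15 (p s m : ℕ) [Fact p.Prime] (hp : p % 8 = 3) (hs : 0 < s) (hm : 3 ≤ m)
    (F : Type*) [Field F] [Fintype F] [Algebra (ZMod p) F] (hcard : Fintype.card F = p ^ s)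
    (hdvd : 2 ^ m ∣ p ^ s - 1) (hndvd : ¬ 2 ^ (m + 1) ∣ p ^ s - 1)
    (lam : MulChar F ℂ) (hord : orderOf lam = 2 ^ m)
    (A B : ℤ) (hAB : (p : ℤ) ^ (s / 2 ^ (m - 2)) = A ^ 2 + 2 * B ^ 2)
    (hA4 : A ≡ -1 [ZMOD 4]) (hpA : ¬ (p : ℤ) ∣ A) :
    (gaussC p F lam + gaussC p F lam⁻¹ =
        2 * A * ((((p : ℝ) ^ s) ^ (((2 ^ (m - 2) - 1) / 2 ^ (m - 1) : ℝ)) : ℝ) : ℂ) * Complex.I ∨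
      gaussC p F lam + gaussC p F lam⁻¹ =
        -(2 * A * ((((p : ℝ) ^ s) ^ (((2 ^ (m - 2) - 1) / 2 ^ (m - 1) : ℝ)) : ℝ) : ℂ) * Complex.I)) ∧
    (gaussC p F lam - gaussC p F lam⁻¹ =
        2 * |B| * ((((p : ℝ) ^ s) ^ (((2 ^ (m - 2) - 1) / 2 ^ (m - 1) : ℝ)) : ℝ) : ℂ) *
          (Real.sqrt 2 : ℂ) ∨
      gaussC p F lam - gaussC p F lam⁻¹ =
        -(2 * |B| * ((((p : ℝ) ^ s) ^ (((2 ^ (m - 2) - 1) / 2 ^ (m - 1) : ℝ)) : ℝ) : ℂ) *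
          (Real.sqrt 2 : ℂ))) := by
  obtain ⟨k, rfl⟩ : ∃ k, m = k + 3 := ⟨m - 3, by omega⟩
  have hpp : p.Prime := Fact.out
  have hdiv : 2 ^ (k + 1) ∣ s := pow_two_pow_sub_dvd hp hm hdvd
  obtain ⟨t, rfl⟩ := hdiv
  have ht : 0 < t := Nat.pos_of_mul_pos_left hs
  have h1 : lam ^ 2 ^ (k + 3) = 1 := hord ▸ pow_orderOf_eq_one lam
  have h2 : lam ^ 2 ^ (k + 2) ≠ 1 := pow_ne_one_of_lt_orderOf (by positivity)
    (by rw [hord]; exact Nat.pow_lt_pow_right (by norm_num) (by omega))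
  have hneg : lam (-1) = -1 := apply_neg_one_eq (m := k + 2) h1 h2 (by rw [hcard]; exact hdvd)
    (by rw [hcard]; exact hndvd)
  obtain ⟨g, j, a, b, hg, hG, hrepr, hb, hj⟩ := exists_gaussSum_eq hp ht hcard h1 h2 hneg
  have hrpow := rpow_eq hpp.pos (n := 2 ^ (k + 1)) (by positivity) rfl hj
  push_cast at hrpow
  rw [show k + 3 - 2 = k + 1 by omega, Nat.mul_div_cancel_left _ (by positivity)] at hAB
  obtain ⟨hAa, hBb⟩ := sq_eq_of_repr hpp (by omega) hAB hrepr hpA hb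
  rw [show k + 3 - 2 = k + 1 by omega, show k + 3 - 1 = (k + 1) + 1 by omega, pow_succ' (2 : ℝ) (k + 1),
    hrpow, gaussC_eq, gaussC_eq, gaussSum_inv_eq hneg]
  have hr : (Real.sqrt p : ℂ) ^ 2 = p := by
    rw [← Complex.ofReal_pow, Real.sq_sqrt (Nat.cast_nonneg p), Complex.ofReal_natCast]
  obtain ⟨e, he, hge⟩ : ∃ e : ℝ, (e = 1 ∨ e = -1) ∧ g = e * Real.sqrt p * Complex.I := by
    have : g ^ 2 = (Real.sqrt p * Complex.I) ^ 2 := by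
      rw [mul_pow, hr, Complex.I_sq, hg]; ring
    rcases sq_eq_sq_iff_eq_or_eq_neg.1 this with h | h
    · exact ⟨1, Or.inl rfl, by rw [h]; push_cast; ring⟩
    · exact ⟨-1, Or.inr rfl, by rw [h]; push_cast; ring⟩
  have hGe : gaussSum lam (trChar p F) =
      ((-(e * (Real.sqrt p * p ^ j) * (b * Real.sqrt 2)) : ℝ) : ℂ) +
        ((e * (Real.sqrt p * p ^ j) * a : ℝ) : ℂ) * Complex.I := by
    rw [hG, hge, toC_apply]
    push_cast
    linear_combination (e * Real.sqrt p * p ^ j * b * Real.sqrt 2 : ℂ) * Complex.I_sq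
  have hconj : (starRingEnd ℂ) (gaussSum lam (trChar p F)) =
      ((-(e * (Real.sqrt p * p ^ j) * (b * Real.sqrt 2)) : ℝ) : ℂ) -
        ((e * (Real.sqrt p * p ^ j) * a : ℝ) : ℂ) * Complex.I := by
    rw [hGe, map_add, map_mul, Complex.conj_ofReal, Complex.conj_ofReal, Complex.conj_I]; ring
  rw [hconj, hGe]
  have hea : e * a = A ∨ e * a = -A := by
    apply sq_eq_sq_iff_eq_or_eq_neg.1
    have : (A : ℝ) ^ 2 = a ^ 2 := by exact_mod_cast hAa
    rcases he with rfl | rfl <;> rw [this] <;> ring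
  have heb : e * b = |B| ∨ e * b = -|B| := by
    apply sq_eq_sq_iff_eq_or_eq_neg.1
    have : (B : ℝ) ^ 2 = b ^ 2 := by exact_mod_cast hBb
    rcases he with rfl | rfl <;> push_cast <;> rw [sq_abs, this] <;> ring
  constructor
  · rcases hea with h | h
    · left
      have h' : (e : ℂ) * a = A := by exact_mod_cast h
      push_cast
      linear_combination (2 * Real.sqrt p * p ^ j * Complex.I : ℂ) * h'
    · right
      have h' : (e : ℂ) * a = -A := by exact_mod_cast h
      push_cast
      linear_combination (2 * Real.sqrt p * p ^ j * Complex.I : ℂ) * h'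
  · rcases heb with h | h
    · right
      have h' : (e : ℂ) * b = (|B| : ℤ) := by
        rw [← Complex.ofReal_intCast b, ← Complex.ofReal_mul, h, Complex.ofReal_intCast]
      push_cast
      linear_combination (-2 * Real.sqrt p * p ^ j * Real.sqrt 2 : ℂ) * h'
    · left
      have h' : (e : ℂ) * b = -(|B| : ℤ) := by
        rw [← Complex.ofReal_intCast b, ← Complex.ofReal_mul, h, Complex.ofReal_neg,
          Complex.ofReal_intCast]
      push_cast
      linear_combination (-2 * Real.sqrt p * p ^ j * Real.sqrt 2 : ℂ) * h'
end

section
/- Let p ≡ 5 (mod 8), q = p^s, m = 2 with 4 exactly dividing q-1. Define the integer C_1 by q = p^s = C_1^2 + D_1^2 with C_1 ≡ -1 (mod 4), p ∤ C_1. Then the number N of solutions in F_q^n to x_1^4 + ... + x_n^4 = 0 equals q^{n-1} + ((q-1)/(4q)) · [ (-q^{1/2} + q^{1/4} i √(2(q^{1/2}+C_1)))^n + (-q^{1/2} - q^{1/4} i √(2(q^{1/2}+C_1)))^n + (q^{1/2} + q^{1/4} i √(2(q^{1/2}-C_1)))^n + (q^{1/2} - q^{1/4} i √(2(q^{1/2}-C_1)))^n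 ]. -/
/-!
Let `q = p ^ s = 4 k + 1` with `k` odd. Detecting the equation by a primitive additive character
`ψ` gives `q N = ∑ a, S(a) ^ n` with `S(a) = ∑ y, ψ (a y ^ 4)`, and `S(0) = q`. For `a ≠ 0`,
expanding the number of fourth roots of `t` in powers of a quartic character `χ` writes `S(a)`
through `χ(a)` and the Gauss sums `g₁, ρ, g₃` of `χ, χ², χ³`
(`sum_addChar_pow_four`). The value `χ(a)` is equidistributed on the fourth roots of unity
(`sum_comp_complexChar`), so four values remain: `ρ ± (g₁ + g₃)` and `-ρ ± i (g₃ - g₁)`.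

Since `χ(-1) = -1`, one has `ρ² = q`, `g₁ g₃ = -q` and `g₁² + g₃² = -2 Re(J) ρ`, where
`J = J(χ, χ²)` (`gaussSum_relations`). This fixes the squares `(g₁ + g₃)²` and `(i (g₃ - g₁))²`.
Neither the sign of `ρ = ±√q` nor the choice of square roots affects the sum of `n`th powers.

It remains to identify `C` with `-Re(J)`. Here `J` is a Gaussian integer of norm `q`, and:
* `J ≡ -q` modulo `2 + 2i`, because `(χ(x) - 1)(χ²(1 - x) - 1)` is divisible by `(1 + i) * 2` for
  every `x` (`dvd_jacobiSum_add_card`); this fixes the real part modulo 4;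
* `p` does not divide `J`: a ring homomorphism `ℤ[i] → F` turning `χ` into `x ↦ x ^ (3 k)` sends
  `J` to the binomial coefficient `(2 k).choose k`, nonzero by Lucas (`not_dvd_jacobiSum`);
* these properties determine the real part (`two_squares_unique`).
-/

/-! ### Elementary arithmetic -/

/-- In a representation of `p ^ s` as a sum of two squares prime to `p`, the odd term is unique up to
sign, and the congruence modulo 4 fixes the sign. Given a second representation, `p ^ s` divides
`(a C + b D)(a C - b D)`, hence one of the factors, and the two-square identity then leaves only `a C ± b D = ± p ^ s`. -/
theorem two_squares_unique {p s : ℕ} (hpp : p.Prime) (hp2 : p ≠ 2) {a b C D : ℤ}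
    (hab : (p : ℤ) ^ s = a ^ 2 + b ^ 2) (hCD : (p : ℤ) ^ s = C ^ 2 + D ^ 2)
    (ha : a ≡ -1 [ZMOD 4]) (hb : Even b) (hC : C ≡ -1 [ZMOD 4])
    (hpa : ¬ (p : ℤ) ∣ a) (hpC : ¬ (p : ℤ) ∣ C) : a = C := by
  have hpZ : Prime (p : ℤ) := Nat.prime_iff_prime_int.mp hpp
  set q : ℤ := (p : ℤ) ^ s with hq
  have hq0 : 0 < q := by have := hpp.pos; positivity
  have hp2' : ¬ (p : ℤ) ∣ 2 := by
    intro h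
    have : p ∣ 2 := by exact_mod_cast h
    exact hp2 ((Nat.prime_dvd_prime_iff_eq hpp Nat.prime_two).mp this)
  -- It suffices to treat the case where `q` divides `a * C + b * D`; the other sign of `D` is
  -- symmetric.
  have key : ∀ D : ℤ, q = C ^ 2 + D ^ 2 → q ∣ a * C + b * D → a = C := by
    intro D hCD ⟨t, ht⟩
    have h1 : (a * C + b * D) ^ 2 + (a * D - b * C) ^ 2 = q ^ 2 := by
      linear_combination (-(a^2+b^2)) * hCD - q * hab
    have hodd : ¬ Even (a * C + b * D) := by
      have ha' : Odd a := by rw [Int.odd_iff]; unfold Int.ModEq at ha; omega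
      have hC' : Odd C := by rw [Int.odd_iff]; unfold Int.ModEq at hC; omega
      rw [Int.not_even_iff_odd]
      exact (ha'.mul hC').add_even (hb.mul_right D)
    have ht0 : t ≠ 0 := by rintro rfl; simp [ht] at hodd
    have ht1 : t ^ 2 ≤ 1 := by
      rw [ht] at h1
      have : q ^ 2 * t ^ 2 ≤ q ^ 2 * 1 := by nlinarith [sq_nonneg (a * D - b * C)]
      exact le_of_mul_le_mul_left this (by positivity)
    have ht2 : t ^ 2 = 1 := le_antisymm ht1 (by have := sq_pos_of_ne_zero ht0; omega)
    have h2 : a * D - b * C = 0 := by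
      rw [ht] at h1
      have : (a * D - b * C) ^ 2 = 0 := by linear_combination h1 - q ^ 2 * ht2
      exact pow_eq_zero_iff (two_ne_zero) |>.mp this
    have h3 : q * a = q * (t * C) := by
      linear_combination a * hCD + D * h2 + C * ht
    have h4 : a = t * C := mul_left_cancel₀ hq0.ne' h3
    rcases eq_or_eq_neg_of_sq_eq_sq t 1 (by rw [ht2, one_pow]) with rfl | rfl
    · simpa using h4
    · unfold Int.ModEq at ha hC; omega
  have hdvd : q ∣ (a * C + b * D) * (a * C + b * -D) :=
    ⟨a ^ 2 + C ^ 2 - q, by linear_combination D ^ 2 * hab + (q - a ^ 2) * hCD⟩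
  by_cases h1 : (p : ℤ) ∣ a * C + b * D
  · have h2 : ¬ (p : ℤ) ∣ a * C + b * -D := by
      intro h2
      have : (p : ℤ) ∣ 2 * (a * C) := by
        have := dvd_add h1 h2
        ring_nf at this ⊢; exact this
      rcases hpZ.dvd_or_dvd this with h | h
      · exact hp2' h
      · rcases hpZ.dvd_or_dvd h with h | h
        exacts [hpa h, hpC h]
    exact key D hCD ((((hpZ.coprime_iff_not_dvd).mpr h2).pow_left).dvd_of_dvd_mul_right hdvd)
  · exact key (-D) (by rw [hCD]; ring)
      ((((hpZ.coprime_iff_not_dvd).mpr h1).pow_left).dvd_of_dvd_mul_left hdvd)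

/-- The base `p` digits of `k = (p ^ s - 1) / 4` all equal `m = (p - 1) / 4`, and those of `2 k` all
equal `2 m`, so Lucas' theorem makes the binomial coefficient a product of copies of
`(2 m).choose m`, which is prime to `p`. -/
theorem not_dvd_choose_s16 {p : ℕ} [hp : Fact p.Prime] (m : ℕ) (hm : p = 4 * m + 1) :
    ∀ s k : ℕ, p ^ s = 4 * k + 1 → ¬ p ∣ (2 * k).choose k := by
  intro s
  induction s with
  | zero =>
    intro k hk
    obtain rfl : k = 0 := by simpa using hk
    simpa using hp.out.one_lt.ne'
  | succ s ih =>
    intro k hk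
    obtain ⟨k', hk'⟩ : ∃ k', p ^ s = 4 * k' + 1 := by
      have : p ^ s % 4 = 1 := by rw [Nat.pow_mod, hm]; simp [Nat.add_mod]
      exact ⟨p ^ s / 4, by omega⟩
    have hkk : k = m + p * k' := by
      rw [pow_succ, hk'] at hk
      rw [hm] at hk ⊢; linarith
    have h1 := Choose.choose_modEq_choose_mod_mul_choose_div_nat (n := 2 * k) (k := k) (p := p)
    have e1 : 2 * k = 2 * m + p * (2 * k') := by rw [hkk]; ring
    have hmp : m < p := by omega
    have h2mp : 2 * m < p := by have := hp.out.two_le; omega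
    rw [e1, hkk, Nat.add_mul_mod_self_left, Nat.add_mul_mod_self_left,
      Nat.add_mul_div_left _ _ hp.out.pos, Nat.add_mul_div_left _ _ hp.out.pos,
      Nat.mod_eq_of_lt hmp, Nat.mod_eq_of_lt h2mp, Nat.div_eq_of_lt hmp, Nat.div_eq_of_lt h2mp,
      zero_add, zero_add] at h1
    rw [e1, hkk, h1.dvd_iff dvd_rfl, hp.out.dvd_mul, not_or]
    refine ⟨fun h => ?_, ih k' hk'⟩
    have h2 := (hp.out.dvd_factorial).mp
      (h.trans ⟨_, by rw [← Nat.choose_mul_factorial_mul_factorial (show m ≤ 2*m by omega), mul_assoc]⟩)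
    omega

set_option linter.unusedSectionVars false

/-! ### The quartic character and sums of powers -/

section
variable {F : Type*} [Field F] [Fintype F]

/-- A quartic character is encoded by a generator `g` of `Fˣ` together with a character `χ` valued in
the Gaussian integers and sending `g` to `i`. -/
theorem exists_quarticChar {k : ℕ} (hk : Fintype.card F = 4 * k + 1) :
    ∃ (χ : MulChar F GaussianInt) (g : Fˣ), (∀ x, x ∈ Subgroup.zpowers g) ∧ χ g = ⟨0, 1⟩ := by
  classical
  obtain ⟨g, hg⟩ := IsCyclic.exists_generator (α := Fˣ)
  have hI : (⟨0, 1⟩ : GaussianInt) * ⟨0, -1⟩ = 1 := by ext <;> simp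
  have hI' : (⟨0, -1⟩ : GaussianInt) * ⟨0, 1⟩ = 1 := by ext <;> simp
  have hI4 : (⟨0, 1⟩ : GaussianInt) ^ 4 = 1 := by ext <;> simp [pow_succ]
  let ζ : GaussianIntˣ := ⟨⟨0, 1⟩, ⟨0, -1⟩, hI, hI'⟩
  have hζ : ζ ∈ rootsOfUnity (Fintype.card Fˣ) GaussianInt := by
    rw [mem_rootsOfUnity, Fintype.card_units, hk, Nat.add_sub_cancel, pow_mul]
    have : ζ ^ 4 = 1 := Units.ext hI4
    rw [this, one_pow]
  exact ⟨MulChar.ofRootOfUnity hζ hg, g, hg, MulChar.ofRootOfUnity_spec hζ hg⟩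

theorem exists_pow_eq {g : Fˣ} (hg : ∀ x, x ∈ Subgroup.zpowers g) {x : F} (hx : x ≠ 0) :
    ∃ m : ℕ, x = (g : F) ^ m := by
  obtain ⟨m, hm⟩ := (mem_powers_iff_mem_zpowers).mpr (hg (Units.mk0 x hx))
  exact ⟨m, by simpa using (congrArg Units.val hm).symm⟩

theorem sum_pow_eq_ite {k : ℕ} (hk : Fintype.card F = 4 * k + 1) {i : ℕ} (hi : 0 < i) :
    ∑ x : F, x ^ i = if 4 * k ∣ i then -1 else 0 := by
  classical
  have h := FiniteField.sum_pow_units F i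
  rw [hk, Nat.add_sub_cancel] at h
  rw [← h, ← Fintype.sum_subtype_add_sum_subtype (fun x : F => x ≠ 0)]
  have h0 : ∑ x : {x : F // ¬ x ≠ 0}, (x : F) ^ i = 0 :=
    Finset.sum_eq_zero fun x _ => by
      rw [not_not.mp x.2, zero_pow hi.ne']
  rw [h0, add_zero]
  exact (Fintype.sum_equiv unitsEquivNeZero _ _ fun x => rfl).symm

/-- Only the term `x ^ (4 k)` of the polynomial `x ^ (3 k) * (1 - x) ^ (2 k)`, whose exponents lie in
`[3 k, 5 k]`, has a nonzero sum over `F`. -/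
theorem sum_pow_mul_one_sub_pow {k : ℕ} (hk0 : 0 < k) (hk : Fintype.card F = 4 * k + 1) :
    ∑ x : F, x ^ (3 * k) * (1 - x) ^ (2 * k) = - (-1) ^ k * ((2 * k).choose k : F) := by
  classical
  have h1 : ∀ x : F, x ^ (3 * k) * (1 - x) ^ (2 * k) =
      ∑ j ∈ Finset.range (2 * k + 1), (-1) ^ j * ((2 * k).choose j : F) * x ^ (3 * k + j) := by
    intro x
    rw [sub_eq_neg_add, add_pow, Finset.mul_sum]
    refine Finset.sum_congr rfl fun j _ => ?_
    rw [one_pow, neg_pow, pow_add]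
    ring
  simp_rw [h1]
  rw [Finset.sum_comm, Finset.sum_eq_single k]
  · rw [← Finset.mul_sum, sum_pow_eq_ite hk (by omega), if_pos ⟨1, by ring⟩]
    ring
  · intro j hj hjk
    rw [← Finset.mul_sum, sum_pow_eq_ite hk (by omega), if_neg, mul_zero]
    rintro ⟨c, hc⟩
    rw [Finset.mem_range] at hj
    have hc1 : c = 1 := by
      have h2 : 4 * k * c < 4 * k * 2 := by omega
      have h3 := lt_of_mul_lt_mul_left h2 (Nat.zero_le _)
      have h4 : c ≠ 0 := by rintro rfl; omega
      omega
    subst hc1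
    omega
  · intro h
    exact absurd (Finset.mem_range.mpr (by omega)) h

variable {χ : MulChar F GaussianInt} {g : Fˣ}

theorem gaussianI_pow_four : (⟨0, 1⟩ : GaussianInt) ^ 4 = 1 := by ext <;> simp [pow_succ]

theorem char_pow_four (hg : ∀ x, x ∈ Subgroup.zpowers g) (hχ : χ g = ⟨0, 1⟩) {x : F}
    (hx : x ≠ 0) : χ x ^ 4 = 1 := by
  obtain ⟨m, rfl⟩ := exists_pow_eq hg hx
  rw [map_pow, hχ, ← pow_mul, mul_comm, pow_mul, gaussianI_pow_four, one_pow]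

theorem char_cases (hg : ∀ x, x ∈ Subgroup.zpowers g) (hχ : χ g = ⟨0, 1⟩) {x : F}
    (hx : x ≠ 0) : χ x = 1 ∨ χ x = -1 ∨ χ x = ⟨0, 1⟩ ∨ χ x = ⟨0, -1⟩ := by
  have h : (χ x - 1) * ((χ x + 1) * ((χ x - ⟨0, 1⟩) * (χ x - ⟨0, -1⟩))) = 0 := by
    have e : (⟨0, 1⟩ : GaussianInt) * ⟨0, -1⟩ = 1 := by ext <;> simp
    have e' : (⟨0, 1⟩ : GaussianInt) + ⟨0, -1⟩ = 0 := by ext <;> simp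
    linear_combination char_pow_four hg hχ hx + (χ x ^ 2 - 1) * e - (χ x ^ 2 - 1) * χ x * e'
  rcases mul_eq_zero.mp h with h | h
  · exact .inl (sub_eq_zero.mp h)
  rcases mul_eq_zero.mp h with h | h
  · exact .inr (.inl (eq_neg_of_add_eq_zero_left h))
  rcases mul_eq_zero.mp h with h | h
  · exact .inr (.inr (.inl (sub_eq_zero.mp h)))
  · exact .inr (.inr (.inr (sub_eq_zero.mp h)))

theorem char_sq_ne_one (hχ : χ g = ⟨0, 1⟩) : χ ^ 2 ≠ 1 := by
  intro h
  have := congrArg (fun φ : MulChar F GaussianInt => φ g) h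
  simp [hχ, Zsqrtd.ext_iff, pow_succ] at this

theorem char_ne_one (hχ : χ g = ⟨0, 1⟩) : χ ≠ 1 := by
  rintro rfl
  exact char_sq_ne_one hχ (one_pow 2)

/-! ### The Jacobi sum as a Gaussian integer -/

/-- The Jacobi sum is congruent to `-#F` modulo `2 + 2i`. The left side is the sum over `x` of
`(χ x - 1) * (χ² (1 - x) - 1)`, each term of which is divisible by `(1 + i) * 2`. -/
theorem dvd_jacobiSum_add_card (hg : ∀ x, x ∈ Subgroup.zpowers g) (hχ : χ g = ⟨0, 1⟩) :
    (⟨2, 2⟩ : GaussianInt) ∣ jacobiSum χ (χ ^ 2) + Fintype.card F := by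
  have hexp : ∑ x : F, (χ x - 1) * ((χ ^ 2) (1 - x) - 1) =
      jacobiSum χ (χ ^ 2) + Fintype.card F := by
    have h1 : ∑ x : F, (χ ^ 2) (1 - x) = 0 := by
      refine ((Equiv.subLeft (1 : F)).sum_comp fun x => (χ ^ 2) x).trans ?_
      exact MulChar.sum_eq_zero_of_ne_one (char_sq_ne_one hχ)
    have h2 : ∑ x : F, χ x = 0 := MulChar.sum_eq_zero_of_ne_one (char_ne_one hχ)
    calc ∑ x : F, (χ x - 1) * ((χ ^ 2) (1 - x) - 1)
        = ∑ x : F, (χ x * (χ ^ 2) (1 - x) - χ x - (χ ^ 2) (1 - x) + 1) :=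
          Finset.sum_congr rfl fun x _ => by ring
      _ = _ := by
          rw [Finset.sum_add_distrib, Finset.sum_sub_distrib, Finset.sum_sub_distrib, h1, h2]
          simp [jacobiSum]
  rw [← hexp]
  refine Finset.dvd_sum fun x _ => ?_
  by_cases hx : x = 0
  · simp [hx]
  by_cases hx1 : 1 - x = 0
  · obtain rfl : x = 1 := (sub_eq_zero.mp hx1).symm
    simp
  have e1 : (⟨1, 1⟩ : GaussianInt) ∣ χ x - 1 := by
    rcases char_cases hg hχ hx with h | h | h | h <;> rw [h]
    · simp
    · exact ⟨⟨-1, 1⟩, by ext <;> simp⟩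
    · exact ⟨⟨0, 1⟩, by ext <;> simp⟩
    · exact ⟨⟨-1, 0⟩, by ext <;> simp⟩
  have e2 : (⟨2, 0⟩ : GaussianInt) ∣ (χ ^ 2) (1 - x) - 1 := by
    rw [MulChar.pow_apply' _ two_ne_zero]
    rcases char_cases hg hχ hx1 with h | h | h | h <;> rw [h]
    · simp
    · simp
    · exact ⟨⟨-1, 0⟩, by ext <;> simp [pow_succ]⟩
    · exact ⟨⟨-1, 0⟩, by ext <;> simp [pow_succ]⟩
  have := mul_dvd_mul e1 e2
  rwa [show (⟨1, 1⟩ : GaussianInt) * ⟨2, 0⟩ = ⟨2, 2⟩ by ext <;> simp] at this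

theorem jacobiSum_re_im_mod (hg : ∀ x, x ∈ Subgroup.zpowers g) (hχ : χ g = ⟨0, 1⟩)
    (hq : Fintype.card F % 8 = 5) (hnorm : (jacobiSum χ (χ ^ 2)).re ^ 2 + (jacobiSum χ (χ ^ 2)).im ^ 2
      = Fintype.card F) :
    (jacobiSum χ (χ ^ 2)).re % 4 = 1 ∧ Even (jacobiSum χ (χ ^ 2)).im := by
  obtain ⟨z, hz⟩ := dvd_jacobiSum_add_card hg hχ
  set J := jacobiSum χ (χ ^ 2)
  have h1 : J.re = 2 * z.re - 2 * z.im - Fintype.card F := by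
    have := congrArg Zsqrtd.re hz
    simp at this
    linarith
  have h2 : J.im = 2 * z.re + 2 * z.im := by
    have := congrArg Zsqrtd.im hz
    simp at this
    linarith
  have hq' : (Fintype.card F : ℤ) % 8 = 5 := by exact_mod_cast hq
  set q : ℤ := (Fintype.card F : ℤ)
  have h3 : Even J.im := ⟨z.re + z.im, by rw [h2]; ring⟩
  refine ⟨?_, h3⟩
  -- The norm equation forces `J.im ≡ 2` modulo 4, so that `z.re + z.im` is odd.
  have h4 : Odd (z.re + z.im) := by
    by_contra h
    obtain ⟨w, hw⟩ := Int.not_odd_iff_even.mp h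
    obtain ⟨t, ht⟩ : Odd J.re := by rw [Int.odd_iff]; omega
    obtain ⟨v, hv⟩ := Int.even_mul_succ_self t
    have h5 : q = 8 * (v + 2 * w ^ 2) + 1 := by
      rw [← hnorm, ht, h2]
      linear_combination 4 * hv + 4 * (z.re + z.im + 2 * w) * hw
    omega
  obtain ⟨w, hw⟩ := h4
  omega

/-- Modulo a prime of `ℤ[i]` above the characteristic, `χ` is the power map `x ↦ x ^ (3 k)`. -/
theorem ringHom_char_apply {k : ℕ} (hg : ∀ x, x ∈ Subgroup.zpowers g) (hχ : χ g = ⟨0, 1⟩)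
    (f : GaussianInt →+* F) (hf : f ⟨0, 1⟩ = (g : F) ^ (3 * k)) (hk0 : 0 < k) (x : F) :
    f (χ x) = x ^ (3 * k) := by
  by_cases hx : x = 0
  · rw [hx, MulChar.map_zero, map_zero, zero_pow (by omega)]
  · obtain ⟨m, rfl⟩ := exists_pow_eq hg hx
    rw [map_pow, map_pow, hχ, hf, ← pow_mul, ← pow_mul, mul_comm]

theorem orderOf_generator {k : ℕ} (hk : Fintype.card F = 4 * k + 1)
    (hg : ∀ x, x ∈ Subgroup.zpowers g) : orderOf g = 4 * k := by
  classical
  rw [orderOf_eq_card_of_forall_mem_zpowers hg, Nat.card_eq_fintype_card, Fintype.card_units, hk,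
    Nat.add_sub_cancel]

theorem generator_pow_two_mul {k : ℕ} (hk0 : 0 < k) (hk : Fintype.card F = 4 * k + 1)
    (hg : ∀ x, x ∈ Subgroup.zpowers g) : (g : F) ^ (2 * k) = -1 := by
  have ho := orderOf_generator hk hg
  have h1 : ((g : F) ^ (2 * k)) ^ 2 = 1 ^ 2 := by
    rw [← pow_mul, show 2 * k * 2 = 4 * k by ring, ← ho, ← Units.val_pow_eq_pow_val,
      pow_orderOf_eq_one]
    simp
  refine (eq_or_eq_neg_of_sq_eq_sq _ _ h1).resolve_left fun h => ?_
  have h2 : g ^ (2 * k) = 1 := Units.ext (by simpa using h)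
  have := Nat.le_of_dvd (by omega) (orderOf_dvd_of_pow_eq_one h2)
  omega

theorem char_neg_one {k : ℕ} (hk : Fintype.card F = 4 * k + 1) (hkodd : Odd k)
    (hg : ∀ x, x ∈ Subgroup.zpowers g) (hχ : χ g = ⟨0, 1⟩) : χ (-1) = -1 := by
  rw [← generator_pow_two_mul hkodd.pos hk hg, map_pow, hχ, pow_mul,
    show (⟨0, 1⟩ : GaussianInt) ^ 2 = -1 by ext <;> simp [pow_succ], hkodd.neg_one_pow]

/-- Reducing modulo a suitable prime above `p` sends the Jacobi sum to the binomial coefficient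
`(2 k).choose k`, which is nonzero in `F`. -/
theorem not_dvd_jacobiSum {p s k m : ℕ} [Fact p.Prime] (hm : p = 4 * m + 1)
    (hcard : Fintype.card F = p ^ s) (hk : Fintype.card F = 4 * k + 1) (hkodd : Odd k)
    (hg : ∀ x, x ∈ Subgroup.zpowers g) (hχ : χ g = ⟨0, 1⟩) :
    ¬ (p : GaussianInt) ∣ jacobiSum χ (χ ^ 2) := by
  have hchar : CharP F p := by
    have : Fact (1 < p ^ s) := ⟨hcard ▸ Fintype.one_lt_card⟩
    obtain ⟨r, hr⟩ := CharP.exists F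
    have hrp := CharP.char_is_prime F r
    have hs : ((p ^ s : ℕ) : F) = 0 := by rw [← hcard]; exact Nat.cast_card_eq_zero F
    have h := (CharP.cast_eq_zero_iff F r _).mp hs
    rwa [← (Nat.prime_dvd_prime_iff_eq hrp Fact.out).mp (hrp.dvd_of_dvd_pow h)]
  have hI : (g : F) ^ (3 * k) * (g : F) ^ (3 * k) = ((-1 : ℤ) : F) := by
    rw [← pow_add, show 3 * k + 3 * k = 2 * k * 3 by ring, pow_mul,
      generator_pow_two_mul hkodd.pos hk hg]
    norm_num
  let f : GaussianInt →+* F := Zsqrtd.lift ⟨(g : F) ^ (3 * k), hI⟩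
  have hf : f ⟨0, 1⟩ = (g : F) ^ (3 * k) := by simp [f, Zsqrtd.lift]
  rintro ⟨z, hz⟩
  have h0 : f (jacobiSum χ (χ ^ 2)) = 0 := by
    rw [hz, map_mul, map_natCast, CharP.cast_eq_zero, zero_mul]
  have h1 : f (jacobiSum χ (χ ^ 2)) = - (-1) ^ k * ((2 * k).choose k : F) := by
    rw [← sum_pow_mul_one_sub_pow hkodd.pos hk, jacobiSum, map_sum]
    refine Finset.sum_congr rfl fun x _ => ?_
    rw [map_mul, MulChar.pow_apply' _ two_ne_zero, map_pow,
      ringHom_char_apply hg hχ f hf hkodd.pos, ringHom_char_apply hg hχ f hf hkodd.pos]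
    congr 1
    by_cases hx : 1 - x = 0
    · rw [hx, zero_pow (by have := hkodd.pos; omega), zero_pow two_ne_zero,
        zero_pow (by have := hkodd.pos; omega)]
    · have := FiniteField.pow_card_sub_one_eq_one (1 - x) hx
      rw [hk, Nat.add_sub_cancel] at this
      rw [← pow_mul, show 3 * k * 2 = 4 * k + 2 * k by ring, pow_add, this, one_mul]
  rw [h1, hkodd.neg_one_pow, neg_neg, one_mul, CharP.cast_eq_zero_iff F p] at h0
  exact not_dvd_choose_s16 m hm s k (hcard ▸ hk) h0

/-! ### Gauss sums of the complex quartic character -/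

/-- The quartic character with values in `ℂ`. -/
noncomputable def complexChar (χ : MulChar F GaussianInt) : MulChar F ℂ :=
  χ.ringHomComp GaussianInt.toComplex

theorem toComplex_I : GaussianInt.toComplex ⟨0, 1⟩ = Complex.I := by
  simp [GaussianInt.toComplex_def]

theorem complexChar_gen (hχ : χ g = ⟨0, 1⟩) : complexChar χ g = Complex.I := by
  rw [complexChar, MulChar.ringHomComp_apply, hχ, toComplex_I]

theorem complexChar_apply_eq (hg : ∀ x, x ∈ Subgroup.zpowers g) (hχ : χ g = ⟨0, 1⟩) {x : F}
    (hx : x ≠ 0) : complexChar χ x = 1 ∨ complexChar χ x = -1 ∨ complexChar χ x = Complex.I ∨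
      complexChar χ x = -Complex.I := by
  have hI : GaussianInt.toComplex ⟨0, -1⟩ = -Complex.I := by simp [GaussianInt.toComplex_def]
  simp only [complexChar, MulChar.ringHomComp_apply]
  rcases char_cases hg hχ hx with h | h | h | h <;> rw [h] <;> simp [toComplex_I, hI]

theorem complexChar_sq_ne_one (hχ : χ g = ⟨0, 1⟩) : complexChar χ ^ 2 ≠ 1 := by
  intro h
  have := congrArg (fun φ : MulChar F ℂ => φ g) h
  norm_num [MulChar.pow_apply_coe, complexChar_gen hχ] at this

theorem complexChar_ne_one (hχ : χ g = ⟨0, 1⟩) : complexChar χ ≠ 1 := by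
  intro h
  exact complexChar_sq_ne_one hχ (by rw [h, one_pow])

theorem complexChar_pow_three_ne_one (hχ : χ g = ⟨0, 1⟩) : complexChar χ ^ 3 ≠ 1 := by
  intro h
  have := congrArg (fun φ : MulChar F ℂ => φ g) h
  simp [complexChar_gen hχ, pow_succ, Complex.ext_iff] at this

theorem complexChar_pow_four (hg : ∀ x, x ∈ Subgroup.zpowers g) (hχ : χ g = ⟨0, 1⟩) :
    complexChar χ ^ 4 = 1 := by
  ext x
  rcases complexChar_apply_eq hg hχ x.ne_zero with h | h | h | h <;>
    simp [MulChar.pow_apply_coe, h, Even.neg_pow (show Even 4 by decide)]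

theorem complexChar_inv (hg : ∀ x, x ∈ Subgroup.zpowers g) (hχ : χ g = ⟨0, 1⟩) :
    (complexChar χ)⁻¹ = complexChar χ ^ 3 :=
  inv_eq_of_mul_eq_one_right (by rw [← pow_succ', complexChar_pow_four hg hχ])

theorem complexChar_jacobiSum (χ : MulChar F GaussianInt) :
    jacobiSum (complexChar χ) (complexChar χ ^ 2) =
      GaussianInt.toComplex (jacobiSum χ (χ ^ 2)) := by
  rw [← jacobiSum_ringHomComp]
  congr 1
  ext x
  simp [complexChar, MulChar.pow_apply_coe]

theorem jacobiSum_norm (hχ : χ g = ⟨0, 1⟩) :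
    (jacobiSum χ (χ ^ 2)).re ^ 2 + (jacobiSum χ (χ ^ 2)).im ^ 2 = (Fintype.card F : ℤ) := by
  have hr : ringChar ℂ ≠ ringChar F := by
    rw [ringChar.eq_zero]
    exact (CharP.ringChar_ne_zero_of_finite F).symm
  have h := jacobiSum_mul_jacobiSum_inv hr (complexChar_ne_one hχ) (complexChar_sq_ne_one hχ)
    (by rw [← pow_succ']; exact complexChar_pow_three_ne_one hχ)
  have hstar : ∀ φ : MulChar F ℂ, φ⁻¹ = φ.ringHomComp (starRingEnd ℂ) := fun φ => by
    rw [← MulChar.star_eq_inv]; ext; simp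
  rw [hstar, hstar, jacobiSum_ringHomComp, complexChar_jacobiSum, Complex.mul_conj] at h
  have h2 : (Complex.normSq (GaussianInt.toComplex (jacobiSum χ (χ ^ 2)))) = Fintype.card F := by
    exact_mod_cast h
  rw [← GaussianInt.intCast_real_norm] at h2
  have h3 : (jacobiSum χ (χ ^ 2)).norm = (Fintype.card F : ℤ) := by exact_mod_cast h2
  rw [Zsqrtd.norm_def] at h3
  linarith

/-- The products of the Gauss sums of `χ`, `χ²`, `χ³`. The last relation adds up
`g₁² = -J ρ` and its conjugate `g₃² = -J̄ ρ`, where `J` is the Jacobi sum of `χ` and `χ²`. -/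
theorem gaussSum_relations {k : ℕ} (hk : Fintype.card F = 4 * k + 1) (hkodd : Odd k)
    (hg : ∀ x, x ∈ Subgroup.zpowers g) (hχ : χ g = ⟨0, 1⟩) {ψ : AddChar F ℂ}
    (hψ : ψ.IsPrimitive) :
    gaussSum (complexChar χ ^ 2) ψ ^ 2 = Fintype.card F ∧
    gaussSum (complexChar χ) ψ * gaussSum (complexChar χ ^ 3) ψ = - Fintype.card F ∧
    gaussSum (complexChar χ) ψ ^ 2 + gaussSum (complexChar χ ^ 3) ψ ^ 2 =
      -2 * ((jacobiSum χ (χ ^ 2)).re : ℂ) * gaussSum (complexChar χ ^ 2) ψ := by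
  have hneg : complexChar χ (-1) = -1 := by
    rw [complexChar, MulChar.ringHomComp_apply, char_neg_one hk hkodd hg hχ]; simp
  have hq0 : (Fintype.card F : ℂ) ≠ 0 := Nat.cast_ne_zero.mpr Fintype.card_ne_zero
  have h1 : gaussSum (complexChar χ ^ 2) ψ ^ 2 = Fintype.card F := by
    rw [gaussSum_sq (complexChar_sq_ne_one hχ) _ hψ]
    · rw [MulChar.pow_apply' _ two_ne_zero, hneg]; simp
    · intro x
      by_cases hx : x = 0
      · exact .inl (by rw [hx, MulChar.map_zero])
      · rw [MulChar.pow_apply' _ two_ne_zero]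
        rcases complexChar_apply_eq hg hχ hx with h | h | h | h <;> simp [h]
  have h2 : gaussSum (complexChar χ) ψ * gaussSum (complexChar χ ^ 3) ψ = - Fintype.card F := by
    have h := gaussSum_mul_gaussSum_eq_card (complexChar_ne_one hχ) hψ
    have h' := mul_gaussSum_inv_eq_gaussSum (complexChar χ)⁻¹ ψ
    rw [complexChar_inv hg hχ] at h h'
    rw [MulChar.pow_apply' _ three_ne_zero, hneg] at h'
    linear_combination -h - gaussSum (complexChar χ) ψ * h'
  refine ⟨h1, h2, ?_⟩
  have h3 := jacobiSum_mul_nontrivial (χ := complexChar χ) (φ := complexChar χ ^ 2)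
    (by rw [← pow_succ']; exact complexChar_pow_three_ne_one hχ) ψ
  rw [← pow_succ', complexChar_jacobiSum] at h3
  set J := jacobiSum χ (χ ^ 2) with hJ
  have hJC : GaussianInt.toComplex J = J.re + J.im * Complex.I := GaussianInt.toComplex_def J
  have hnorm : (J.re : ℂ) ^ 2 + (J.im : ℂ) ^ 2 = Fintype.card F := by
    exact_mod_cast jacobiSum_norm hχ
  rw [hJC] at h3
  norm_num at h3
  set g1 := gaussSum (complexChar χ) ψ
  set ρ := gaussSum (complexChar χ ^ 2) ψ
  set g3 := gaussSum (complexChar χ ^ 3) ψ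
  set q : ℂ := (Fintype.card F : ℂ)
  have h4 : g1 ^ 2 = -(J.re + J.im * Complex.I) * ρ := by
    apply mul_left_cancel₀ hq0
    linear_combination (-g1 * ρ) * h3 + (J.re + J.im * Complex.I) * ρ * h2 - g1 ^ 2 * h1
  have h5 : g3 ^ 2 = -(J.re - J.im * Complex.I) * ρ := by
    apply mul_left_cancel₀ hq0
    linear_combination g3 * (J.re - J.im * Complex.I) * h3 - g3 ^ 2 * hnorm
      + (J.re - J.im * Complex.I) * ρ * h2 + g3 ^ 2 * J.im ^ 2 * Complex.I_sq
  linear_combination h4 + h5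

/-! ### Counting solutions by additive characters -/

/-- The number of fourth roots of `t`, expressed by the quartic character. -/
theorem card_fourth_roots [DecidableEq F] {k : ℕ} (hk : Fintype.card F = 4 * k + 1) (hkodd : Odd k)
    (hg : ∀ x, x ∈ Subgroup.zpowers g) (hχ : χ g = ⟨0, 1⟩) (t : F) :
    ((Finset.univ.filter fun y : F => y ^ 4 = t).card : ℂ) =
      1 + complexChar χ t + complexChar χ t ^ 2 + complexChar χ t ^ 3 := by
  by_cases ht : t = 0
  · subst ht
    simp [Finset.filter_eq', MulChar.map_zero]
  by_cases hex : ∃ w, w ^ 4 = t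
  · obtain ⟨w, rfl⟩ := hex
    have hw : w ≠ 0 := by rintro rfl; simp at ht
    have hprim : IsPrimitiveRoot ((g : F) ^ k) 4 := by
      have h := IsPrimitiveRoot.orderOf (g : F)
      rw [orderOf_units, orderOf_generator hk hg] at h
      exact h.pow (by have := hkodd.pos; omega) (by ring)
    have hcard := hprim.card_nthRootsFinset
    have himg : (Finset.univ.filter fun y : F => y ^ 4 = w ^ 4) =
        (Polynomial.nthRootsFinset 4 (1 : F)).image (fun z => w * z) := by
      ext y
      simp only [Finset.mem_filter, Finset.mem_univ, true_and, Finset.mem_image,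
        Polynomial.mem_nthRootsFinset (show 0 < 4 by norm_num)]
      constructor
      · intro hy
        exact ⟨y / w, by rw [div_pow, hy, div_self ht], by field_simp⟩
      · rintro ⟨z, hz, rfl⟩
        rw [mul_pow, hz, mul_one]
    rw [himg, Finset.card_image_of_injective _ (mul_right_injective₀ hw), hcard]
    have : complexChar χ (w ^ 4) = 1 := by
      rw [map_pow, ← MulChar.pow_apply' _ four_ne_zero, complexChar_pow_four hg hχ,
        MulChar.one_apply hw.isUnit]
    rw [this]; norm_num
  · have hempty : (Finset.univ.filter fun y : F => y ^ 4 = t) = ∅ := by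
      rw [Finset.filter_eq_empty_iff]
      exact fun y _ hy => hex ⟨y, hy⟩
    have hne : complexChar χ t ≠ 1 := by
      intro h
      obtain ⟨m, rfl⟩ := exists_pow_eq hg ht
      rw [map_pow, complexChar_gen hχ, Complex.isPrimitiveRoot_I.pow_eq_one_iff_dvd] at h
      obtain ⟨c, rfl⟩ := h
      exact hex ⟨(g : F) ^ c, by rw [← pow_mul, mul_comm]⟩
    have h4 : complexChar χ t ^ 4 = 1 := by
      rw [← MulChar.pow_apply' _ four_ne_zero, complexChar_pow_four hg hχ,
        MulChar.one_apply (Ne.isUnit ht)]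
    rw [hempty, Finset.card_empty, Nat.cast_zero]
    refine (mul_left_cancel₀ (sub_ne_zero.mpr hne) ?_).symm
    linear_combination h4

/-- The value of the quartic Gauss sum `∑ y, ψ (a * y ^ 4)`, `a ≠ 0`, when `z` is the value of
the quartic character at `a`. -/
noncomputable def quarticValue (χ : MulChar F GaussianInt) (ψ : AddChar F ℂ) (z : ℂ) : ℂ :=
  z ^ 3 * gaussSum (complexChar χ) ψ + z ^ 2 * gaussSum (complexChar χ ^ 2) ψ
    + z * gaussSum (complexChar χ ^ 3) ψ

theorem sum_addChar_pow_four {k : ℕ} (hk : Fintype.card F = 4 * k + 1) (hkodd : Odd k)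
    (hg : ∀ x, x ∈ Subgroup.zpowers g) (hχ : χ g = ⟨0, 1⟩) {ψ : AddChar F ℂ}
    (hψ : ψ.IsPrimitive) {a : F} (ha : a ≠ 0) :
    ∑ y : F, ψ (a * y ^ 4) = quarticValue χ ψ (complexChar χ a) := by
  classical
  -- Group the `y` by their fourth power.
  have h1 : ∑ y : F, ψ (a * y ^ 4) = ∑ t : F,
      (1 + complexChar χ t + complexChar χ t ^ 2 + complexChar χ t ^ 3) * ψ (a * t) := by
    rw [← Finset.sum_fiberwise' Finset.univ (fun y : F => y ^ 4) (fun t => ψ (a * t))]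
    refine Finset.sum_congr rfl fun t _ => ?_
    rw [Finset.sum_const, nsmul_eq_mul, card_fourth_roots hk hkodd hg hχ]
  have h0 : ∑ t : F, ψ (a * t) = 0 := by
    have := AddChar.sum_mulShift a hψ
    rw [if_neg ha, Nat.cast_zero] at this
    simpa [mul_comm] using this
  have h4 : complexChar χ a ^ 4 = 1 := by
    rw [← MulChar.pow_apply' _ four_ne_zero, complexChar_pow_four hg hχ,
      MulChar.one_apply (Ne.isUnit ha)]
  have hsh : ∀ j, j ≠ 0 → complexChar χ a ^ j * ∑ t : F, complexChar χ t ^ j * ψ (a * t) =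
      gaussSum (complexChar χ ^ j) ψ := by
    intro j hj
    rw [← gaussSum_mulShift _ ψ (Units.mk0 a ha), ← MulChar.pow_apply' _ hj]
    simp only [gaussSum, Units.val_mk0, AddChar.mulShift_apply, MulChar.pow_apply' _ hj]
  have e1 := hsh 1 one_ne_zero
  have e2 := hsh 2 two_ne_zero
  have e3 := hsh 3 three_ne_zero
  rw [h1]
  simp only [add_mul, Finset.sum_add_distrib, one_mul, h0, zero_add]
  simp only [pow_one] at e1
  rw [quarticValue, ← e1, ← e2, ← e3]
  linear_combination (-(∑ t : F, complexChar χ t * ψ (a * t))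
    - (∑ t : F, complexChar χ t ^ 2 * ψ (a * t)) - (∑ t : F, complexChar χ t ^ 3 * ψ (a * t))) * h4

/-- The quartic character takes each of its four nonzero values equally often. -/
theorem sum_comp_complexChar [DecidableEq F] {k : ℕ} (hk : Fintype.card F = 4 * k + 1)
    (hg : ∀ x, x ∈ Subgroup.zpowers g) (hχ : χ g = ⟨0, 1⟩) (f : ℂ → ℂ) :
    ∑ a ∈ Finset.univ.erase (0 : F), f (complexChar χ a) =
      k * (f 1 + f (-1) + f Complex.I + f (-Complex.I)) := by
  -- Multiplication by the generator multiplies the value of the character by `i`, so averaging over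
  -- the four translates makes the summand constant.
  have hsh : ∀ f : ℂ → ℂ, ∑ a ∈ Finset.univ.erase (0 : F), f (complexChar χ a) =
      ∑ a ∈ Finset.univ.erase (0 : F), f (Complex.I * complexChar χ a) := by
    intro f
    refine (Finset.sum_equiv (Equiv.mulLeft₀ (g : F) g.ne_zero) ?_ ?_).symm
    · intro a; simp
    · intro a _
      simp [complexChar_gen hχ]
  have hI2 : ∀ z : ℂ, Complex.I * (Complex.I * z) = -z := fun z => by
    rw [← mul_assoc, Complex.I_mul_I, neg_one_mul]
  have s1 := hsh f
  have s2 := hsh (fun z => f (Complex.I * z))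
  have s3 := hsh (fun z => f (Complex.I * (Complex.I * z)))
  simp only [hI2] at s2 s3
  have hsum : ∑ a ∈ Finset.univ.erase (0 : F), (f (complexChar χ a) +
      f (Complex.I * complexChar χ a) + f (-complexChar χ a) +
      f (-(Complex.I * complexChar χ a))) =
      ∑ a ∈ Finset.univ.erase (0 : F), (f 1 + f (-1) + f Complex.I + f (-Complex.I)) := by
    refine Finset.sum_congr rfl fun a ha => ?_
    rcases complexChar_apply_eq hg hχ (Finset.ne_of_mem_erase ha) with h | h | h | h <;>
      rw [h] <;> simp <;> ring
  rw [Finset.sum_const, Finset.card_erase_of_mem (Finset.mem_univ _), Finset.card_univ, hk,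
    Nat.add_sub_cancel, nsmul_eq_mul] at hsum
  simp only [Finset.sum_add_distrib] at hsum
  push_cast at hsum
  have hneg : ∀ a, -(Complex.I * complexChar χ a) = Complex.I * -complexChar χ a := fun a => by ring
  simp only [hneg] at hsum
  linear_combination (1 / 4 : ℂ) * hsum + (3 / 4 : ℂ) * s1 + (1 / 2 : ℂ) * s2 + (1 / 4 : ℂ) * s3

/-- Orthogonality of additive characters, combined with the evaluation of the quartic Gauss sums. -/
theorem card_solutions_eq [DecidableEq F] {k : ℕ} (hk : Fintype.card F = 4 * k + 1) (hkodd : Odd k)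
    (hg : ∀ x, x ∈ Subgroup.zpowers g) (hχ : χ g = ⟨0, 1⟩) {ψ : AddChar F ℂ}
    (hψ : ψ.IsPrimitive) (n : ℕ) :
    (Fintype.card F : ℂ) * Fintype.card {x : Fin n → F // ∑ i, x i ^ 4 = 0} =
      (Fintype.card F : ℂ) ^ n + k * (quarticValue χ ψ 1 ^ n + quarticValue χ ψ (-1) ^ n +
        quarticValue χ ψ Complex.I ^ n + quarticValue χ ψ (-Complex.I) ^ n) := by
  have h1 : ∑ a : F, ∑ x : Fin n → F, ψ (a * ∑ i, x i ^ 4) =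
      (Fintype.card F : ℂ) * Fintype.card {x : Fin n → F // ∑ i, x i ^ 4 = 0} := by
    rw [Finset.sum_comm]
    simp_rw [AddChar.sum_mulShift _ hψ]
    rw [Fintype.card_subtype]
    simp [Finset.sum_ite, mul_comm]
  have h2 : ∀ a : F, ∑ x : Fin n → F, ψ (a * ∑ i, x i ^ 4) = (∑ y : F, ψ (a * y ^ 4)) ^ n := by
    intro a
    rw [Fintype.sum_pow]
    refine Finset.sum_congr rfl fun x _ => ?_
    rw [Finset.mul_sum]
    have hprod : ∀ t : Finset (Fin n),
        ψ (∑ i ∈ t, a * x i ^ 4) = ∏ i ∈ t, ψ (a * x i ^ 4) := by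
      intro t
      induction t using Finset.induction_on with
      | empty => simp
      | insert i t hi ih =>
        rw [Finset.sum_insert hi, Finset.prod_insert hi, AddChar.map_add_eq_mul, ih]
    exact hprod _
  rw [← h1]
  simp_rw [h2]
  rw [← Finset.add_sum_erase _ _ (Finset.mem_univ (0 : F)),
    ← sum_comp_complexChar hk hg hχ (fun z => quarticValue χ ψ z ^ n)]
  congr 1
  · simp
  · exact Finset.sum_congr rfl fun a ha => by
      rw [sum_addChar_pow_four hk hkodd hg hχ hψ (Finset.ne_of_mem_erase ha)]
end

/-- The sum of the two conjugate `n`th powers depends on `u` only through `u ^ 2`. -/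
theorem add_pow_add_sub_pow_congr {u v : ℂ} (h : u ^ 2 = v ^ 2) (r : ℂ) (n : ℕ) :
    (r + u) ^ n + (r - u) ^ n = (r + v) ^ n + (r - v) ^ n := by
  rcases eq_or_eq_neg_of_sq_eq_sq u v h with rfl | rfl
  · rfl
  · ring


/-! ### The closed formula -/

theorem stmt16 (p s n : ℕ) [Fact p.Prime] (hp : p % 8 = 5) (hs : 0 < s) (hn : 0 < n)
    (F : Type*) [Field F] [Fintype F] [DecidableEq F] (hcard : Fintype.card F = p ^ s)
    (hdvd : 4 ∣ p ^ s - 1) (hndvd : ¬ 8 ∣ p ^ s - 1)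
    (C D : ℤ) (hCD : (p : ℤ) ^ s = C ^ 2 + D ^ 2)
    (hC4 : C ≡ -1 [ZMOD 4]) (hpC : ¬ (p : ℤ) ∣ C) :
    (Fintype.card {x : Fin n → F // ∑ i, x i ^ 4 = 0} : ℂ) =
      ((p : ℂ) ^ s) ^ (n - 1) + (((p : ℂ) ^ s - 1) / (4 * (p : ℂ) ^ s)) *
        ((-(Real.sqrt ((p : ℝ) ^ s) : ℂ) + (((p : ℝ) ^ s) ^ ((1 : ℝ) / 4) : ℝ) * Complex.I *
            (Real.sqrt (2 * (Real.sqrt ((p : ℝ) ^ s) + (C : ℝ))) : ℝ)) ^ n +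
         (-(Real.sqrt ((p : ℝ) ^ s) : ℂ) - (((p : ℝ) ^ s) ^ ((1 : ℝ) / 4) : ℝ) * Complex.I *
            (Real.sqrt (2 * (Real.sqrt ((p : ℝ) ^ s) + (C : ℝ))) : ℝ)) ^ n +
         ((Real.sqrt ((p : ℝ) ^ s) : ℂ) + (((p : ℝ) ^ s) ^ ((1 : ℝ) / 4) : ℝ) * Complex.I *
            (Real.sqrt (2 * (Real.sqrt ((p : ℝ) ^ s) - (C : ℝ))) : ℝ)) ^ n +
         ((Real.sqrt ((p : ℝ) ^ s) : ℂ) - (((p : ℝ) ^ s) ^ ((1 : ℝ) / 4) : ℝ) * Complex.I *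
            (Real.sqrt (2 * (Real.sqrt ((p : ℝ) ^ s) - (C : ℝ))) : ℝ)) ^ n) := by
  classical
  obtain ⟨k, hk'⟩ := hdvd
  have hps : 0 < p ^ s := pow_pos (Fact.out (p := p.Prime)).pos s
  have hk : Fintype.card F = 4 * k + 1 := by omega
  have hkodd : Odd k := by
    rw [← Nat.not_even_iff_odd]
    rintro ⟨c, rfl⟩
    exact hndvd ⟨c, by omega⟩
  obtain ⟨χ, g, hg, hχ⟩ := exists_quarticChar hk
  have hψ := AddChar.FiniteField.primitiveChar_to_Complex_isPrimitive F
  set ψ := AddChar.FiniteField.primitiveChar_to_Complex F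
  obtain ⟨hρ, h13, hsq⟩ := gaussSum_relations hk hkodd hg hχ hψ
  have hN := card_solutions_eq hk hkodd hg hχ hψ n
  -- The prescribed `C` is minus the real part of the Jacobi sum.
  have hnorm := jacobiSum_norm hχ
  have hcardZ : (Fintype.card F : ℤ) = (p : ℤ) ^ s := by rw [hcard]; push_cast; rfl
  have hmod8 : Fintype.card F % 8 = 5 := by obtain ⟨c, rfl⟩ := hkodd; omega
  obtain ⟨hre, him⟩ := jacobiSum_re_im_mod hg hχ hmod8 hnorm
  have hJ := not_dvd_jacobiSum (p := p) (m := p / 4) (by omega) hcard hk hkodd hg hχ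
  rw [hcardZ] at hnorm
  have hpZ : Prime (p : ℤ) := Nat.prime_iff_prime_int.mp Fact.out
  have hC : -(jacobiSum χ (χ ^ 2)).re = C := by
    refine two_squares_unique (Fact.out (p := p.Prime)) (by omega)
      (b := (jacobiSum χ (χ ^ 2)).im) (by rw [← hnorm]; ring) hCD ?_ him hC4 ?_ hpC
    · unfold Int.ModEq; omega
    · intro h
      have hpre : (p : ℤ) ∣ (jacobiSum χ (χ ^ 2)).re := (dvd_neg).mp h
      have hpim : (p : ℤ) ∣ (jacobiSum χ (χ ^ 2)).im := by
        refine hpZ.dvd_of_dvd_pow (n := 2) ?_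
        have : (p : ℤ) ∣ (p : ℤ) ^ s := dvd_pow_self _ hs.ne'
        rw [← hnorm] at this
        exact (dvd_add_right (dvd_pow hpre two_ne_zero)).mp this
      exact hJ ((Zsqrtd.intCast_dvd (p : ℤ) _).mpr ⟨hpre, hpim⟩)
  have hCc : ((jacobiSum χ (χ ^ 2)).re : ℂ) = -C := by rw [← hC]; push_cast; ring
  rw [hCc] at hsq
  have hqc : (Fintype.card F : ℂ) = (p : ℂ) ^ s := by rw [hcard]; push_cast; rfl
  rw [hqc] at hρ h13 hN
  have hq0 : (p : ℂ) ^ s ≠ 0 := by exact_mod_cast hps.ne'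
  have hkc : (p : ℂ) ^ s - 1 = 4 * k := by rw [← hqc, hk]; push_cast; ring
  -- The real radicals and their squares.
  have hqR : (0 : ℝ) ≤ (p : ℝ) ^ s := by positivity
  have hCQ : |(C : ℝ)| ≤ √((p : ℝ) ^ s) := by
    refine Real.abs_le_sqrt ?_
    have : (p : ℝ) ^ s = (C : ℝ) ^ 2 + (D : ℝ) ^ 2 := by exact_mod_cast hCD
    rw [this]; nlinarith [sq_nonneg (D : ℝ)]
  obtain ⟨hC1, hC2⟩ := abs_le.mp hCQ
  have hQ2 : (√((p : ℝ) ^ s) : ℂ) ^ 2 = (p : ℂ) ^ s := by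
    exact_mod_cast Real.sq_sqrt hqR
  have hR2 : ((((p : ℝ) ^ s) ^ ((1 : ℝ) / 4) : ℝ) : ℂ) ^ 2 = (√((p : ℝ) ^ s) : ℂ) := by
    have : (((p : ℝ) ^ s) ^ ((1 : ℝ) / 4)) ^ 2 = √((p : ℝ) ^ s) := by
      rw [Real.sqrt_eq_rpow, ← Real.rpow_natCast, ← Real.rpow_mul hqR]
      norm_num
    exact_mod_cast this
  have hP2 : (√(2 * (√((p : ℝ) ^ s) + (C : ℝ))) : ℂ) ^ 2 = 2 * ((√((p : ℝ) ^ s) : ℂ) + C) := by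
    exact_mod_cast Real.sq_sqrt (show 0 ≤ 2 * (√((p : ℝ) ^ s) + (C : ℝ)) by linarith)
  have hM2 : (√(2 * (√((p : ℝ) ^ s) - (C : ℝ))) : ℂ) ^ 2 = 2 * ((√((p : ℝ) ^ s) : ℂ) - C) := by
    exact_mod_cast Real.sq_sqrt (show 0 ≤ 2 * (√((p : ℝ) ^ s) - (C : ℝ)) by linarith)
  set Q : ℂ := (√((p : ℝ) ^ s) : ℂ)
  set R : ℂ := ((((p : ℝ) ^ s) ^ ((1 : ℝ) / 4) : ℝ) : ℂ)
  set P : ℂ := (√(2 * (√((p : ℝ) ^ s) + (C : ℝ))) : ℂ)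
  set M : ℂ := (√(2 * (√((p : ℝ) ^ s) - (C : ℝ))) : ℂ)
  set q : ℂ := (p : ℂ) ^ s
  have hI3 : Complex.I ^ 3 = -Complex.I := Complex.I_pow_three
  have v1 : quarticValue χ ψ 1 = gaussSum (complexChar χ ^ 2) ψ +
      (gaussSum (complexChar χ) ψ + gaussSum (complexChar χ ^ 3) ψ) := by
    rw [quarticValue]; ring
  have v2 : quarticValue χ ψ (-1) = gaussSum (complexChar χ ^ 2) ψ -
      (gaussSum (complexChar χ) ψ + gaussSum (complexChar χ ^ 3) ψ) := by
    rw [quarticValue]; ring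
  have v3 : quarticValue χ ψ Complex.I = -gaussSum (complexChar χ ^ 2) ψ +
      Complex.I * (gaussSum (complexChar χ ^ 3) ψ - gaussSum (complexChar χ) ψ) := by
    rw [quarticValue, hI3, Complex.I_sq]; ring
  have v4 : quarticValue χ ψ (-Complex.I) = -gaussSum (complexChar χ ^ 2) ψ -
      Complex.I * (gaussSum (complexChar χ ^ 3) ψ - gaussSum (complexChar χ) ψ) := by
    rw [quarticValue, neg_sq, Odd.neg_pow (by decide), hI3, Complex.I_sq]; ring
  rw [v1, v2, v3, v4] at hN
  set ρ := gaussSum (complexChar χ ^ 2) ψ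
  set g1 := gaussSum (complexChar χ) ψ
  set g3 := gaussSum (complexChar χ ^ 3) ψ
  have hu : (g1 + g3) ^ 2 = 2 * C * ρ - 2 * q := by linear_combination hsq + 2 * h13
  have hv : (Complex.I * (g3 - g1)) ^ 2 = -(2 * C * ρ) - 2 * q := by
    rw [mul_pow, Complex.I_sq]; linear_combination -hsq + 2 * h13
  have hRP : (R * Complex.I * P) ^ 2 = -(2 * C * Q) - 2 * q := by
    rw [mul_pow, mul_pow, Complex.I_sq, hR2, hP2]; linear_combination -2 * hQ2
  have hRM : (R * Complex.I * M) ^ 2 = 2 * C * Q - 2 * q := by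
    rw [mul_pow, mul_pow, Complex.I_sq, hR2, hM2]; linear_combination -2 * hQ2
  have hT : (ρ + (g1 + g3)) ^ n + (ρ - (g1 + g3)) ^ n +
      (-ρ + Complex.I * (g3 - g1)) ^ n + (-ρ - Complex.I * (g3 - g1)) ^ n =
      (-Q + R * Complex.I * P) ^ n + (-Q - R * Complex.I * P) ^ n +
      (Q + R * Complex.I * M) ^ n + (Q - R * Complex.I * M) ^ n := by
    -- The sign of the quadratic Gauss sum only decides which pair of values is which.
    rcases eq_or_eq_neg_of_sq_eq_sq ρ Q (hρ.trans hQ2.symm) with h | h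
    · have e1 := add_pow_add_sub_pow_congr (hu.trans (by rw [hRM, h])) ρ n
      have e2 := add_pow_add_sub_pow_congr (hv.trans (by rw [hRP, h])) (-ρ) n
      rw [h] at e1 e2 ⊢
      linear_combination e1 + e2
    · have e1 := add_pow_add_sub_pow_congr (hu.trans (by rw [hRP, h]; ring)) ρ n
      have e2 := add_pow_add_sub_pow_congr (hv.trans (by rw [hRM, h]; ring)) (-ρ) n
      rw [h, neg_neg] at e2
      rw [h] at e1 ⊢
      rw [neg_neg]
      linear_combination e1 + e2
  rw [hT] at hN
  rw [hkc]
  have hqn : q ^ n = q * q ^ (n - 1) := by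
    rw [← pow_succ', Nat.sub_add_cancel hn]
  apply mul_left_cancel₀ hq0
  rw [hqn] at hN
  rw [hN]
  field_simp
end

section
/- Let p ≡ 3 (mod 8), q = p^s with 16 | (q-1), and define integers A_3, B_3 by p^{s/2} = A_3^2 + 2B_3^2, A_3 ≡ -1 (mod 4), p ∤ A_3 (B_3 determined up to sign). Then the number N of solutions in F_q^n to x_1^8 + ... + x_n^8 = 0 equals q^{n-1} + ((q-1)/(8q))·[ 2((q^{1/2}+4B_3 q^{1/4})^n + (q^{1/2}-4B_3 q^{1/4})^n) + 2 q^{n/2} + (-3q^{1/2}+4A_3 q^{1/4})^n + (-3q^{1/2}-4A_3 q^{1/4})^n ]. -/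
/-!
Let `ψ` be a nontrivial additive character of `F` (with `q` elements) that factors through the trace
to the prime field, `S(a) = ∑ x, ψ (a x⁸)`, and `g` a generator of `Fˣ`. By orthogonality `q N` is
the sum of `S(a) ^ n` over all `a` (`sum_eighthSum_pow`). As `S(0) = q` and `S(a)` depends only on
the class of `a` modulo eighth powers, the theorem amounts to the evaluation of the eight periods
`σ j = S(g ^ j)`. The hypothesis `16 ∣ q - 1` forces `s = 4k`; put `Q = p ^ (2k)`, so `q = Q²`.

* Every element of the prime field is an eighth power in `F`, and the eighth-power map is
  eight-to-one on `Fˣ`; hence the `σ j` are rational integers congruent to `1` modulo `8`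
  (`eighthSum_eq_int`). Frobenius gives `σ (p j) = σ j`, so that `σ 3 = σ 1`, `σ 6 = σ 2` and
  `σ 7 = σ 5`.
* The first moment and the correlations `∑ i, σ i * σ (m + i) = -8 Q²` for `8 ∤ m`
  (`sum_eighthSum_mul`), together with the congruences, force `σ 2 = Q`, `{σ 1, σ 5} = {Q ± 4b}` and
  `{σ 0, σ 4} = {-3Q ± 4a}`, where `a² + 2b² = Q²` (`solve_periods`).
* It remains to identify `a` and `b`. Twisting the second moment by the quadratic character `η`
  gives `τ W`, where `τ = ±Q` is a Gauss sum and `W = ∑ x, ∑ y, η (x⁸ + y⁸)` is an integer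
  (`sum_quadraticChar_eighthSum_sq`). With `w = (q - 1) / 8`, Euler's criterion yields
  `W ≡ 2 C(4w, w) + C(4w, 2w)` modulo `p` (`sum_quadraticChar_mod`), and by Lucas' theorem the first
  binomial coefficient is prime to `p` while the second is divisible by `p`
  (`not_dvd_choose_eighth`, `dvd_choose_quarter`). So `p ∤ W`, which means that `p ^ k` exactly
  divides `a` (`extract_power`), and `a = p ^ k α`, `b = p ^ k β` with `α² + 2β² = Q` and `p ∤ α`.
* Such a representation is unique up to signs (`partition_unique`), so `α = ±A` and `β = ±B`; the
  formula is symmetric under both sign changes.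
-/

/-! ### The system of equations for the periods, and the form `x² + 2y²` -/

/-- The linear and quadratic relations between the periods determine them up to a representation
`a² + 2b² = Q²`. The relations fix `s1 + s5` and `s2` only up to the choice of a root of a quadratic
equation; the congruences modulo `8` exclude the second root. -/
lemma solve_periods (Q s0 s1 s2 s4 s5 : ℤ) (hQ : Q % 8 = 1)
    (h1 : s1 % 8 = 1) (h2 : s2 % 8 = 1) (h5 : s5 % 8 = 1)
    (h0 : s0 % 8 = 1) (h4 : s4 % 8 = 1)
    (E : s0 + s4 + 2 * s1 + 2 * s5 + 2 * s2 = 0)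
    (E1 : (s1 + s5) * (s0 + s4 + 2 * s2) = -8 * Q ^ 2)
    (E2 : 2 * s2 * (s0 + s4) + (s1 + s5) ^ 2 = -8 * Q ^ 2)
    (E4 : 2 * s0 * s4 + 2 * s2 ^ 2 + 4 * s1 * s5 = -8 * Q ^ 2) :
    ∃ a b : ℤ, s0 = -3 * Q + 4 * a ∧ s4 = -3 * Q - 4 * a ∧ s1 = Q + 4 * b ∧ s5 = Q - 4 * b ∧
      s2 = Q ∧ a ^ 2 + 2 * b ^ 2 = Q ^ 2 := by
  have hs : s1 + s5 = 2 * Q := by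
    have : (s1 + s5 - 2 * Q) * (s1 + s5 + 2 * Q) = 0 := by
      have : s0 + s4 + 2 * s2 = -2 * (s1 + s5) := by linarith
      rw [this] at E1
      linarith
    rcases mul_eq_zero.mp this with h | h
    · linarith
    · omega
  have h2' : s2 = Q := by
    have : (s2 - Q) * (s2 + 3 * Q) = 0 := by
      have h04 : s0 + s4 = -4 * Q - 2 * s2 := by linarith
      rw [hs, h04] at E2
      linarith
    rcases mul_eq_zero.mp this with h | h
    · linarith
    · omega
  obtain ⟨a, ha⟩ : ∃ a, s0 = -3 * Q + 4 * a := ⟨(s0 + 3 * Q) / 4, by omega⟩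
  obtain ⟨b, hb⟩ : ∃ b, s1 = Q + 4 * b := ⟨(s1 - Q) / 4, by omega⟩
  have h4' : s4 = -3 * Q - 4 * a := by linarith
  have h5' : s5 = Q - 4 * b := by linarith
  refine ⟨a, b, ha, h4', hb, h5', h2', ?_⟩
  rw [ha, h4', hb, h5', h2'] at E4
  linarith

/-- If `a² + 2b² = p^(4k)` and `8a²` is related to `p^(2k)` times a `p`-adic unit `W` as in `h`, then
`p ^ k` exactly divides `a`, and dividing by `p ^ k` gives a primitive representation. -/
lemma extract_power (p k : ℕ) (hp : p.Prime) (hp2 : p ≠ 2) (hk : 0 < k) (a b W : ℤ)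
    (hab : a ^ 2 + 2 * b ^ 2 = ((p : ℤ) ^ (2 * k)) ^ 2)
    (h : (p : ℤ) ^ (2 * k) * W =
      (((p : ℤ) ^ (2 * k)) ^ 2 - 1) * (8 * a ^ 2 - 2 * ((p : ℤ) ^ (2 * k)) ^ 2))
    (hW : ¬ (p : ℤ) ∣ W) :
    ∃ α β : ℤ, a = p ^ k * α ∧ b = p ^ k * β ∧ ¬ (p : ℤ) ∣ α ∧
      α ^ 2 + 2 * β ^ 2 = (p : ℤ) ^ (2 * k) := by
  have hpp : Prime (p : ℤ) := Nat.prime_iff_prime_int.mp hp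
  have h2p : IsCoprime ((p : ℤ) ^ (2 * k)) 2 := by
    apply IsCoprime.pow_left
    have := (Nat.coprime_primes hp Nat.prime_two).2 hp2
    exact_mod_cast Nat.isCoprime_iff_coprime.2 this
  have hQ0 : (p : ℤ) ^ (2 * k) ≠ 0 := pow_ne_zero _ hpp.ne_zero
  have hpk : ((p : ℤ) ^ k) ^ 2 = (p : ℤ) ^ (2 * k) := by rw [← pow_mul, mul_comm]
  have hpQ : (p : ℤ) ∣ (p : ℤ) ^ (2 * k) := dvd_pow_self _ (by omega)
  have ha : (p : ℤ) ^ k ∣ a := by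
    have hc : IsCoprime ((p : ℤ) ^ (2 * k)) (((((p : ℤ) ^ (2 * k)) ^ 2 - 1)) * 2 ^ 3) := by
      refine IsCoprime.mul_right ⟨(p : ℤ) ^ (2 * k), -1, by ring⟩ h2p.pow_right
    rw [← Int.pow_dvd_pow_iff two_ne_zero, hpk]
    refine hc.dvd_of_dvd_mul_left
      ⟨W + 2 * (p : ℤ) ^ (2 * k) * (((p : ℤ) ^ (2 * k)) ^ 2 - 1), ?_⟩
    linear_combination -h
  obtain ⟨α, rfl⟩ := ha
  have hb : (p : ℤ) ^ k ∣ b := by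
    rw [← Int.pow_dvd_pow_iff two_ne_zero, hpk]
    refine h2p.dvd_of_dvd_mul_left ⟨(p : ℤ) ^ (2 * k) - α ^ 2, ?_⟩
    linear_combination hab - α ^ 2 * hpk
  obtain ⟨β, rfl⟩ := hb
  refine ⟨α, β, rfl, rfl, fun hα => hW ?_, ?_⟩
  · have hW' : W = (((p : ℤ) ^ (2 * k)) ^ 2 - 1) * (8 * α ^ 2 - 2 * (p : ℤ) ^ (2 * k)) := by
      apply mul_left_cancel₀ hQ0
      rw [h, mul_pow, hpk]
      ring
    rw [hW']
    exact Dvd.dvd.mul_left (dvd_sub (Dvd.dvd.mul_left (dvd_pow hα two_ne_zero) _)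
      (Dvd.dvd.mul_left hpQ _)) _
  · apply mul_left_cancel₀ hQ0
    rw [mul_pow, mul_pow, hpk] at hab
    linear_combination hab

/-- A representation of a positive power of an odd prime `p` by `x² + 2y²` with `p ∤ x` is unique up to
signs. -/
lemma partition_unique (p m : ℕ) (hp : p.Prime) (hp2 : p ≠ 2) (hm : 0 < m) (A B α β : ℤ)
    (h1 : A ^ 2 + 2 * B ^ 2 = (p : ℤ) ^ m) (h2 : α ^ 2 + 2 * β ^ 2 = (p : ℤ) ^ m)
    (hA : ¬ (p : ℤ) ∣ A) (hα : ¬ (p : ℤ) ∣ α) : (α = A ∨ α = -A) ∧ (β = B ∨ β = -B) := by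
  have hpp : Prime (p : ℤ) := Nat.prime_iff_prime_int.mp hp
  have hpos : 0 < (p : ℤ) ^ m := pow_pos (by exact_mod_cast hp.pos) _
  have hpQ : (p : ℤ) ∣ (p : ℤ) ^ m := dvd_pow_self _ (by omega)
  have h2p : IsCoprime (p : ℤ) 2 := by
    have := (Nat.coprime_primes hp Nat.prime_two).2 hp2
    exact_mod_cast Nat.isCoprime_iff_coprime.2 this
  have hB : ¬ (p : ℤ) ∣ B := fun h => hA <| hpp.dvd_of_dvd_pow (n := 2) <| by
    have : A ^ 2 = (p : ℤ) ^ m - 2 * B ^ 2 := by linarith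
    rw [this]
    exact dvd_sub hpQ (Dvd.dvd.mul_left (dvd_pow h two_ne_zero) _)
  suffices α ^ 2 = A ^ 2 by
    refine ⟨sq_eq_sq_iff_eq_or_eq_neg.mp this, sq_eq_sq_iff_eq_or_eq_neg.mp (by linarith)⟩
  -- whichever of `α B ± A β` is divisible by `p ^ m` vanishes, by the identity for norms
  have key : ∀ β : ℤ, α ^ 2 + 2 * β ^ 2 = (p : ℤ) ^ m → (p : ℤ) ^ m ∣ α * B - A * β →
      α ^ 2 = A ^ 2 := by
    intro β h2 hd
    have hn : (α * A + 2 * β * B) ^ 2 + 2 * (α * B - A * β) ^ 2 = ((p : ℤ) ^ m) ^ 2 := by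
      rw [sq ((p : ℤ) ^ m)]
      nth_rewrite 1 [← h1]
      rw [← h2]
      ring
    have h0 : α * B - A * β = 0 := by
      by_contra hne
      have h3 := Int.le_of_dvd (by positivity) ((pow_dvd_pow_of_dvd hd 2))
      nlinarith [sq_nonneg (α * A + 2 * β * B), pow_pos hpos 2]
    apply mul_left_cancel₀ hpos.ne'
    linear_combination 2 * (α * B + A * β) * h0 - α ^ 2 * h1 + A ^ 2 * h2
  have hprod : (p : ℤ) ^ m ∣ (α * B - A * β) * (α * B + A * β) := by
    refine (h2p.pow_left (m := m)).dvd_of_dvd_mul_left ⟨α ^ 2 - A ^ 2, ?_⟩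
    linear_combination α ^ 2 * h1 - A ^ 2 * h2
  by_cases hd : (p : ℤ) ∣ α * B - A * β
  · have hd' : ¬ (p : ℤ) ∣ α * B + A * β := fun h => by
      have : (p : ℤ) ∣ 2 * (α * B) := by
        have := dvd_add hd h
        ring_nf at this ⊢
        exact this
      have := h2p.dvd_of_dvd_mul_left this
      exact (hpp.dvd_or_dvd this).elim hα hB
    have hc : IsCoprime ((p : ℤ) ^ m) (α * B + A * β) :=
      ((Prime.coprime_iff_not_dvd hpp).2 hd').pow_left
    exact key β h2 (hc.dvd_of_dvd_mul_right hprod)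
  · have hc : IsCoprime ((p : ℤ) ^ m) (α * B - A * β) :=
      ((Prime.coprime_iff_not_dvd hpp).2 hd).pow_left
    refine key (-β) (by linarith) ?_
    have := hc.dvd_of_dvd_mul_left hprod
    simpa using this

/-! ### Binomial coefficients modulo `p` -/
lemma not_dvd_choose_of_lt (p : ℕ) (hp : p.Prime) {n k : ℕ} (hn : n < p) (hk : k ≤ n) :
    ¬ p ∣ n.choose k := fun h => by
  have h1 : p ∣ n.factorial := by
    rw [← Nat.choose_mul_factorial_mul_factorial hk, mul_assoc]
    exact h.mul_right _
  exact absurd ((Nat.Prime.dvd_factorial hp).1 h1) (by omega)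

/-- Lucas' congruence, splitting off the last base-`p` digit. -/
lemma dvd_choose_iff_digit (p : ℕ) [Fact p.Prime] (a b c d : ℕ) (hb : b < p) (hd : d < p) :
    p ∣ (p * a + b).choose (p * c + d) ↔ p ∣ b.choose d * a.choose c := by
  have hp := (Fact.out : p.Prime).pos
  have := Choose.choose_modEq_choose_mod_mul_choose_div_nat (n := p * a + b) (k := p * c + d)
    (p := p)
  rw [Nat.mul_add_mod, Nat.mul_add_mod, Nat.mod_eq_of_lt hb, Nat.mod_eq_of_lt hd,
    Nat.mul_add_div hp, Nat.mul_add_div hp, Nat.div_eq_of_lt hb, Nat.div_eq_of_lt hd] at this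
  exact this.dvd_iff dvd_rfl

/-- For `p = 8m + 3` the base-`p` digits of `w = (p^(2r) - 1) / 8` are alternately `3m + 1` and `m`,
and those of `4w` are all `4m + 1`, so no carry occurs and Lucas' theorem applies. -/
lemma not_dvd_choose_eighth (p : ℕ) [Fact p.Prime] (hp8 : p % 8 = 3) (r : ℕ) :
    ¬ p ∣ (4 * ((p ^ (2 * r) - 1) / 8)).choose ((p ^ (2 * r) - 1) / 8) := by
  have hp : p.Prime := Fact.out
  obtain ⟨m, hm⟩ : ∃ m, p = 8 * m + 3 := ⟨p / 8, by omega⟩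
  induction r with
  | zero => simpa using hp.one_lt.ne'
  | succ r ih =>
    obtain ⟨w, hw⟩ : ∃ w, p ^ (2 * r) = 8 * w + 1 := by
      have : p ^ (2 * r) % 8 = 1 := by
        rw [pow_mul, Nat.pow_mod, Nat.pow_mod p, hp8]; simp
      exact ⟨p ^ (2 * r) / 8, by omega⟩
    have e : (p ^ (2 * (r + 1)) - 1) / 8 = p * (p * w + m) + (3 * m + 1) := by
      have : p ^ (2 * (r + 1)) = 8 * (p * (p * w + m) + (3 * m + 1)) + 1 := by
        rw [mul_add, pow_add, hw, mul_one]
        rw [hm]; ring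
      omega
    have e2 : 4 * (p * (p * w + m) + (3 * m + 1)) = p * (p * (4 * w) + (4 * m + 1)) + (4 * m + 1) := by
      rw [hm]; ring
    rw [hw, Nat.add_sub_cancel, Nat.mul_div_cancel_left _ (by norm_num)] at ih
    rw [e, e2, dvd_choose_iff_digit _ _ _ _ _ (by omega) (by omega), hp.dvd_mul,
      dvd_choose_iff_digit _ _ _ _ _ (by omega) (by omega), hp.dvd_mul]
    rintro (h | h | h)
    · exact not_dvd_choose_of_lt p hp (by omega) (by omega) h
    · exact not_dvd_choose_of_lt p hp (by omega) (by omega) h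
    · exact ih h

/-- For `p = 8m + 3` the last base-`p` digit of `2w`, where `w = (p^(2r) - 1) / 8`, is `6m + 2`,
which exceeds the last digit `4m + 1` of `4w`. -/
lemma dvd_choose_quarter (p : ℕ) [Fact p.Prime] (hp8 : p % 8 = 3) (r : ℕ) (hr : 0 < r) :
    p ∣ (4 * ((p ^ (2 * r) - 1) / 8)).choose (2 * ((p ^ (2 * r) - 1) / 8)) := by
  have hp : p.Prime := Fact.out
  obtain ⟨m, hm⟩ : ∃ m, p = 8 * m + 3 := ⟨p / 8, by omega⟩
  obtain ⟨r, rfl⟩ : ∃ r', r = r' + 1 := ⟨r - 1, by omega⟩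
  obtain ⟨w, hw⟩ : ∃ w, p ^ (2 * r) = 8 * w + 1 := by
    have : p ^ (2 * r) % 8 = 1 := by
      rw [pow_mul, Nat.pow_mod, Nat.pow_mod p, hp8]; simp
    exact ⟨p ^ (2 * r) / 8, by omega⟩
  have e : (p ^ (2 * (r + 1)) - 1) / 8 = p * (p * w + m) + (3 * m + 1) := by
    have : p ^ (2 * (r + 1)) = 8 * (p * (p * w + m) + (3 * m + 1)) + 1 := by
      rw [mul_add, pow_add, hw, mul_one]
      rw [hm]; ring
    omega
  have e2 : 4 * (p * (p * w + m) + (3 * m + 1)) = p * (p * (4 * w) + (4 * m + 1)) + (4 * m + 1) := by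
    rw [hm]; ring
  have e3 : 2 * (p * (p * w + m) + (3 * m + 1)) = p * (p * (2 * w) + 2 * m) + (6 * m + 2) := by
    ring
  rw [e, e2, e3, dvd_choose_iff_digit _ _ _ _ _ (by omega) (by omega),
    Nat.choose_eq_zero_of_lt (by omega)]
  simp

/-! ### Sums over a finite field -/

open Finset in
lemma sum_eq_sum_powers {F M : Type*} [Field F] [Fintype F] [DecidableEq F] [AddCommMonoid M]
    (g : F) (hg : orderOf g = Fintype.card F - 1) (f : F → M) :
    ∑ x, f x = f 0 + ∑ i ∈ range (Fintype.card F - 1), f (g ^ i) := by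
  have hc : 1 < Fintype.card F := Fintype.one_lt_card
  have hinj : Set.InjOn (fun i : ℕ => g ^ i) (range (Fintype.card F - 1) : Set ℕ) := by
    rw [← hg, coe_range]
    exact pow_injOn_Iio_orderOf
  have hg0 : g ≠ 0 := by
    rintro rfl
    rw [orderOf_zero] at hg
    omega
  have h0 : (0 : F) ∉ (range (Fintype.card F - 1)).image (fun i => g ^ i) := by
    simp [hg0]
  have hu : (univ : Finset F) = insert 0 ((range (Fintype.card F - 1)).image (fun i => g ^ i)) := by
    symm
    rw [← card_eq_iff_eq_univ, card_insert_of_notMem h0, card_image_of_injOn hinj, card_range]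
    omega
  rw [hu, sum_insert h0, sum_image hinj]

open Finset in
lemma sum_range_mul_periodic {M : Type*} [AddCommMonoid M] (f : ℕ → M) (m k : ℕ)
    (hf : ∀ i, f (i + m) = f i) : ∑ i ∈ range (m * k), f i = k • ∑ i ∈ range m, f i := by
  induction k with
  | zero => simp
  | succ k ih =>
    rw [Nat.mul_succ, sum_range_add, ih, succ_nsmul]
    congr 1
    apply sum_congr rfl
    intro i _
    rw [add_comm, mul_comm]
    exact Function.Periodic.nat_mul hf k i

lemma exists_generator (F : Type*) [Field F] [Fintype F] :
    ∃ g : F, orderOf g = Fintype.card F - 1 := by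
  classical
  obtain ⟨u, hu⟩ := IsCyclic.exists_generator (α := Fˣ)
  refine ⟨u, ?_⟩
  rw [orderOf_units, orderOf_eq_card_of_forall_mem_zpowers hu, Nat.card_eq_fintype_card,
    Fintype.card_units]

/-- A primitive additive character of `F` that factors through an additive map `tr : F → 𝔽_p` which
is `𝔽_p`-linear, and that is invariant under Frobenius: the trace to the prime field, followed by a
nontrivial character of `ZMod p`. -/
lemma exists_trace_character (p : ℕ) [Fact p.Prime] (F : Type*) [Field F] [Fintype F]
    [CharP F p] : ∃ (ψ₀ : AddChar (ZMod p) ℂ) (tr : F →+ ZMod p) (ψ : AddChar F ℂ),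
      ψ₀ ≠ 1 ∧ ψ.IsPrimitive ∧ (∀ x, ψ x = ψ₀ (tr x)) ∧
      (∀ (t : ZMod p) (x : F), tr (t.cast * x) = t * tr x) ∧ ∀ x, ψ (x ^ p) = ψ x := by
  let _ : Algebra (ZMod p) F := ZMod.algebra F p
  have h0 : (ZMod.stdAddChar (N := p)) ≠ 1 := by
    have := ZMod.isPrimitive_stdAddChar p (one_ne_zero)
    rwa [AddChar.mulShift_one] at this
  refine ⟨ZMod.stdAddChar, (Algebra.trace (ZMod p) F).toAddMonoidHom,
    (ZMod.stdAddChar (N := p)).compAddMonoidHom (Algebra.trace (ZMod p) F).toAddMonoidHom,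
    h0, AddChar.IsPrimitive.of_ne_one ?_, fun x => rfl, ?_, ?_⟩
  · obtain ⟨t, ht⟩ := (AddChar.ne_one_iff).1 h0
    obtain ⟨x, hx⟩ := Algebra.trace_surjective (ZMod p) F t
    refine (AddChar.ne_one_iff).2 ⟨x, ?_⟩
    change ZMod.stdAddChar (Algebra.trace (ZMod p) F x) ≠ 1
    rwa [hx]
  · intro t x
    have := (Algebra.trace (ZMod p) F).map_smul t x
    rw [Algebra.smul_def] at this
    exact this
  · intro x
    change ZMod.stdAddChar (Algebra.trace (ZMod p) F (x ^ p)) =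
      ZMod.stdAddChar (Algebra.trace (ZMod p) F x)
    have := Algebra.trace_eq_of_algEquiv (FiniteField.frobeniusAlgEquivOfAlgebraic (ZMod p) F) x
    rw [FiniteField.coe_frobeniusAlgEquivOfAlgebraic, ZMod.card] at this
    rw [this]

open Finset in
lemma sum_pow_eq {F : Type*} [Field F] [Fintype F] [DecidableEq F] (i : ℕ) :
    ∑ x : F, x ^ i = if 0 < i ∧ Fintype.card F - 1 ∣ i then -1 else 0 := by
  rcases Nat.eq_zero_or_pos i with rfl | hi
  · simp
  · have h := FiniteField.sum_pow_units F i
    have h2 : ∑ x : Fˣ, (x ^ i : F) = ∑ x : F, x ^ i := by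
      rw [Fintype.sum_eq_add_sum_subtype_ne (fun x : F => x ^ i) 0, zero_pow hi.ne', zero_add]
      exact unitsEquivNeZero.sum_comp (fun x : {a : F // a ≠ 0} => (x : F) ^ i)
    rw [← h2, h]
    simp [hi]

open Finset in
/-- By Euler's criterion `η(x⁸ + y⁸) = (x⁸ + y⁸)^(4w)` in `F`; after binomial expansion only the
exponents of `x` and `y` that are positive multiples of `q - 1 = 8w` survive the summation. -/
lemma sum_quadraticChar_mod {F : Type*} [Field F] [Fintype F] [DecidableEq F] (w : ℕ)
    (hw : 0 < w) (hF : ringChar F ≠ 2) (hc : Fintype.card F = 8 * w + 1) :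
    ((∑ x : F, ∑ y : F, quadraticChar F (x ^ 8 + y ^ 8) : ℤ) : F) =
      2 * ((4 * w).choose w : F) + ((4 * w).choose (2 * w) : F) := by
  push_cast
  simp_rw [quadraticChar_eq_pow_of_char_ne_two' hF, hc,
    show (8 * w + 1) / 2 = 4 * w by omega, add_pow]
  have h1 : ∀ i ∈ range (4 * w + 1),
      ∑ x : F, ∑ y : F, (x ^ 8) ^ i * (y ^ 8) ^ (4 * w - i) * ((4 * w).choose i : F) =
      if i ∈ ({w, 2 * w, 3 * w} : Finset ℕ) then ((4 * w).choose i : F) else 0 := by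
    intro i hi
    rw [mem_range] at hi
    simp_rw [← pow_mul, ← sum_mul, ← mul_sum, ← sum_mul, sum_pow_eq, hc, Nat.add_sub_cancel]
    have e1 : 8 * w ∣ 8 * i ↔ w ∣ i := Nat.mul_dvd_mul_iff_left (by norm_num)
    have e2 : 8 * w ∣ 8 * (4 * w - i) ↔ w ∣ i := by
      rw [Nat.mul_dvd_mul_iff_left (by norm_num), Nat.dvd_sub_iff_right (by omega) ⟨4, by ring⟩]
    simp only [e1, e2]
    have e3 : i ∈ ({w, 2 * w, 3 * w} : Finset ℕ) ↔ w ∣ i ∧ 0 < i ∧ i < 4 * w := by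
      simp only [mem_insert, mem_singleton]
      constructor
      · rintro (rfl | rfl | rfl)
        · exact ⟨dvd_rfl, by omega, by omega⟩
        · exact ⟨⟨2, by ring⟩, by omega, by omega⟩
        · exact ⟨⟨3, by ring⟩, by omega, by omega⟩
      · rintro ⟨⟨c, rfl⟩, h1, h2⟩
        have : c < 4 := by
          by_contra h
          nlinarith
        interval_cases c
        · omega
        · left; ring
        · right; left; ring
        · right; right; ring
    by_cases hwi : w ∣ i
    · by_cases hi0 : 0 < i
      · by_cases hi4 : i < 4 * w
        · rw [if_pos ⟨by omega, hwi⟩, if_pos ⟨by omega, hwi⟩, if_pos (e3.2 ⟨hwi, hi0, hi4⟩)]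
          ring
        · rw [if_neg (c := 0 < 8 * (4 * w - i) ∧ w ∣ i) (by omega),
            if_neg (c := i ∈ _) (fun h => hi4 (e3.1 h).2.2)]
          ring
      · rw [if_neg (c := 0 < 8 * i ∧ w ∣ i) (by omega),
            if_neg (c := i ∈ _) (fun h => hi0 (e3.1 h).2.1)]
        ring
    · rw [if_neg (c := 0 < 8 * i ∧ w ∣ i) (fun h => hwi h.2),
        if_neg (c := i ∈ _) (fun h => hwi (e3.1 h).1)]
      ring
  have h2 : ∀ x : F, ∑ y : F, ∑ i ∈ range (4 * w + 1),
      (x ^ 8) ^ i * (y ^ 8) ^ (4 * w - i) * ((4 * w).choose i : F) =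
      ∑ i ∈ range (4 * w + 1), ∑ y : F,
        (x ^ 8) ^ i * (y ^ 8) ^ (4 * w - i) * ((4 * w).choose i : F) := fun x => sum_comm
  simp_rw [h2]
  rw [sum_comm, sum_congr rfl h1, ← sum_filter, filter_mem_eq_inter, inter_eq_right.2,
    sum_insert, sum_insert, sum_singleton, Nat.choose_symm_of_eq_add (show 4 * w = 3 * w + w by ring)]
  · ring
  · simp; omega
  · simp; omega
  · intro i
    simp only [mem_insert, mem_singleton, mem_range]
    omega

/-! ### The exponential sums `∑ x, ψ (a x⁸)` -/

/-- The exponential sum `∑ x, ψ (a x⁸)`. -/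
noncomputable def eighthSum {F : Type*} [Field F] [Fintype F] (ψ : AddChar F ℂ) (a : F) : ℂ :=
  ∑ x, ψ (a * x ^ 8)

section ExponentialSums

variable {F : Type*} [Field F] [Fintype F] [DecidableEq F] {ψ : AddChar F ℂ}

lemma eighthSum_zero : eighthSum ψ 0 = Fintype.card F := by
  simp [eighthSum]

lemma eighthSum_mul_pow (a : F) {u : F} (hu : u ≠ 0) :
    eighthSum ψ (a * u ^ 8) = eighthSum ψ a := by
  unfold eighthSum
  rw [← Equiv.sum_comp (Equiv.mulLeft₀ u hu) (fun x => ψ (a * x ^ 8))]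
  simp [mul_pow, mul_assoc]

open Finset in
/-- Orthogonality: the `n`-th moment of the exponential sums counts the solutions. -/
lemma sum_eighthSum_pow (hψ : ψ.IsPrimitive) (n : ℕ) :
    ∑ a, eighthSum ψ a ^ n =
      Fintype.card F * (Fintype.card {x : Fin n → F // ∑ i, x i ^ 8 = 0} : ℂ) := by
  have h1 : ∀ a, eighthSum ψ a ^ n = ∑ x : Fin n → F, ψ (a * ∑ i, x i ^ 8) := by
    intro a
    have := Finset.prod_univ_sum (fun _ : Fin n => (univ : Finset F)) (fun _ x => ψ (a * x ^ 8))
    rw [prod_const, card_univ, Fintype.card_fin, Fintype.piFinset_univ] at this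
    rw [eighthSum, this]
    refine sum_congr rfl fun x _ => ?_
    rw [mul_sum]
    exact (map_prod ψ.toMonoidHom (fun i => Multiplicative.ofAdd (a * x i ^ 8)) univ).symm
  simp_rw [h1]
  rw [sum_comm]
  have h2 : ∀ x : Fin n → F, ∑ a, ψ (a * ∑ i, x i ^ 8) =
      if ∑ i, x i ^ 8 = 0 then (Fintype.card F : ℂ) else 0 := by
    intro x
    rw [AddChar.sum_mulShift _ hψ]
    simp
  rw [sum_congr rfl fun x _ => h2 x, ← sum_filter, sum_const, nsmul_eq_mul, mul_comm,
    Fintype.card_subtype]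

open Finset in
/-- Orthogonality for the binary equation `x⁸ + t y⁸ = 0`, when it has only the trivial solution. -/
lemma sum_eighthSum_mul (hψ : ψ.IsPrimitive) (t : F)
    (ht : ∀ x y : F, x ^ 8 + t * y ^ 8 = 0 → x = 0 ∧ y = 0) :
    ∑ a, eighthSum ψ a * eighthSum ψ (t * a) = Fintype.card F := by
  have h1 : ∀ a, eighthSum ψ a * eighthSum ψ (t * a) =
      ∑ x : F, ∑ y : F, ψ (a * (x ^ 8 + t * y ^ 8)) := by
    intro a
    rw [eighthSum, eighthSum, sum_mul_sum]
    refine sum_congr rfl fun x _ => sum_congr rfl fun y _ => ?_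
    rw [← AddChar.map_add_eq_mul]
    congr 1
    ring
  simp_rw [h1]
  rw [sum_comm]
  have h2 : ∀ x : F, ∑ a, ∑ y : F, ψ (a * (x ^ 8 + t * y ^ 8)) =
      if x = 0 then (Fintype.card F : ℂ) else 0 := by
    intro x
    rw [sum_comm]
    have h3 : ∀ y : F, ∑ a, ψ (a * (x ^ 8 + t * y ^ 8)) =
        if y = 0 then (if x = 0 then (Fintype.card F : ℂ) else 0) else 0 := by
      intro y
      rw [AddChar.sum_mulShift _ hψ]
      by_cases h : x ^ 8 + t * y ^ 8 = 0
      · obtain ⟨rfl, rfl⟩ := ht x y h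
        simp
      · rw [if_neg h]
        by_cases hy : y = 0
        · have hx : x ≠ 0 := by
            rintro rfl
            simp [hy] at h
          simp [hx]
        · simp [hy]
    rw [sum_congr rfl fun y _ => h3 y]
    simp
  rw [sum_congr rfl fun x _ => h2 x]
  simp

/-- Inverting the Gauss sum `τ` of the quadratic character `η` turns the second moment of
`eighthSum` twisted by `η` into the integer `∑ η(x⁸ + y⁸)`. -/
lemma sum_quadraticChar_eighthSum_sq (hψ : ψ.IsPrimitive) (hF : ringChar F ≠ 2)
    (h1 : quadraticChar F (-1) = 1) :
    ∃ τ : ℂ, τ ^ 2 = Fintype.card F ∧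
      ∑ a, (quadraticChar F a : ℂ) * eighthSum ψ a ^ 2 =
        τ * ((∑ x : F, ∑ y : F, quadraticChar F (x ^ 8 + y ^ 8) : ℤ) : ℂ) := by
  set η : MulChar F ℂ := (quadraticChar F).ringHomComp (Int.castRingHom ℂ) with hη
  have hηa : ∀ a, η a = (quadraticChar F a : ℂ) := fun a => rfl
  have hη1 : η ≠ 1 := by
    obtain ⟨a, ha⟩ := quadraticChar_exists_neg_one' hF
    intro h
    have := hηa a
    rw [h, ha, MulChar.one_apply a.isUnit] at this
    norm_num at this
  have hηq : η.IsQuadratic := (quadraticChar_isQuadratic F).comp _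
  refine ⟨gaussSum η ψ, ?_, ?_⟩
  · rw [gaussSum_sq hη1 hηq hψ, hηa, h1]
    simp
  · have key : ∀ u : F, ∑ a, η a * ψ (a * u) = gaussSum η ψ * η u := by
      intro u
      by_cases hu : u = 0
      · subst hu
        simp [MulChar.sum_eq_zero_of_ne_one hη1, hηa 0]
      · have := gaussSum_mulShift_eq η ψ (Units.mk0 u hu)
        rw [hηq.inv] at this
        rw [mul_comm (gaussSum η ψ)]
        convert! this using 1
        simp [gaussSum, AddChar.mulShift_apply, mul_comm]
    have h2 : ∀ a, (quadraticChar F a : ℂ) * eighthSum ψ a ^ 2 =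
        ∑ x : F, ∑ y : F, η a * ψ (a * (x ^ 8 + y ^ 8)) := by
      intro a
      rw [eighthSum, sq, Finset.sum_mul_sum, Finset.mul_sum]
      refine Finset.sum_congr rfl fun x _ => ?_
      rw [Finset.mul_sum]
      refine Finset.sum_congr rfl fun y _ => ?_
      rw [← AddChar.map_add_eq_mul, hηa]
      congr 2
      ring
    simp_rw [h2]
    rw [Finset.sum_comm]
    push_cast
    rw [Finset.mul_sum]
    refine Finset.sum_congr rfl fun x _ => ?_
    rw [Finset.sum_comm, Finset.mul_sum]
    exact Finset.sum_congr rfl fun y _ => key _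

/-- The eighth-power map is eight-to-one on nonzero elements, so the number of nonzero `x` with a
condition on `x ^ 8` is a multiple of `8`. -/
lemma eight_dvd_card_filter (w : ℕ) (hc : Fintype.card F = 8 * w + 1) (P : F → Prop)
    [DecidablePred P] : 8 ∣ (Finset.univ.filter fun x : F => x ≠ 0 ∧ P (x ^ 8)).card := by
  obtain ⟨g, hg⟩ := exists_generator F
  have hw : 0 < w := by
    have : 1 < Fintype.card F := Fintype.one_lt_card
    omega
  have hg0 : g ≠ 0 := by
    rintro rfl
    rw [orderOf_zero] at hg
    omega
  have hgw : g ^ (8 * w) = 1 := by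
    rw [show 8 * w = orderOf g by omega]
    exact pow_orderOf_eq_one g
  rw [Finset.card_filter, sum_eq_sum_powers g hg, hc, Nat.add_sub_cancel, mul_comm 8 w,
    sum_range_mul_periodic]
  · simp
  · intro i
    have : (g ^ (i + w)) ^ 8 = (g ^ i) ^ 8 := by
      rw [pow_add, mul_pow, ← pow_mul g w, mul_comm w, hgw, mul_one]
    simp [this, hg0]

lemma exists_eighth_root (w : ℕ) (hc : Fintype.card F = 8 * w + 1) {u : F} (hu : u ^ w = 1)
    (hw : 0 < w) : ∃ v : F, v ^ 8 = u := by
  obtain ⟨g, hg⟩ := IsCyclic.exists_generator (α := Fˣ)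
  have hu0 : u ≠ 0 := by
    rintro rfl
    rw [zero_pow hw.ne'] at hu
    exact zero_ne_one hu
  obtain ⟨i, hi⟩ := mem_powers_iff_mem_zpowers.2 (hg (Units.mk0 u hu0))
  have hi' : g ^ i = Units.mk0 u hu0 := hi
  have ho : orderOf g = 8 * w := by
    rw [orderOf_eq_card_of_forall_mem_zpowers hg, Nat.card_eq_fintype_card, Fintype.card_units]
    omega
  have h1 : g ^ (i * w) = 1 := by
    rw [pow_mul, hi']
    ext
    simpa using hu
  have h2 : 8 ∣ i := by
    have := orderOf_dvd_of_pow_eq_one h1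
    rw [ho] at this
    exact Nat.dvd_of_mul_dvd_mul_right hw this
  obtain ⟨j, rfl⟩ := h2
  refine ⟨((g ^ j : Fˣ) : F), ?_⟩
  rw [← Units.val_pow_eq_pow_val, ← pow_mul, mul_comm, hi']
  rfl

/-- The sums `eighthSum ψ a` are rational integers, because every nonzero element of the prime
field is an eighth power in `F`, and they are `1` modulo `8`. -/
lemma eighthSum_eq_int (p : ℕ) [Fact p.Prime] [CharP F p] (w : ℕ) (hw : 0 < w)
    (hc : Fintype.card F = 8 * w + 1) (hpw : p - 1 ∣ w) (ψ₀ : AddChar (ZMod p) ℂ)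
    (tr : F →+ ZMod p) (h₀ : ψ₀ ≠ 1) (hψ : ∀ x, ψ x = ψ₀ (tr x))
    (htr : ∀ (t : ZMod p) (x : F), tr (t.cast * x) = t * tr x) (a : F) :
    ∃ z : ℤ, eighthSum ψ a = z ∧ z % 8 = 1 := by
  classical
  set M : ZMod p → ℕ := fun t => (Finset.univ.filter fun x : F => tr (a * x ^ 8) = t).card with hM
  have hM1 : ∀ t, t ≠ 0 → M t = M 1 := by
    intro t ht
    obtain ⟨c, hcc⟩ : ∃ c : F, c ^ 8 = t.cast := by
      refine exists_eighth_root w hc ?_ hw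
      obtain ⟨d, rfl⟩ := hpw
      have : (t.cast : F) ^ (p - 1) = 1 := by
        have h := congrArg (ZMod.castHom (dvd_refl p) F) (ZMod.pow_card_sub_one_eq_one ht)
        simpa using h
      rw [pow_mul, this, one_pow]
    have hc0 : c ≠ 0 := by
      rintro rfl
      have h : (ZMod.castHom (dvd_refl p) F) t = 0 := by
        rw [ZMod.castHom_apply, ← hcc]; simp
      exact ht ((map_eq_zero _).1 h)
    symm
    refine Finset.card_bij (fun x _ => c * x) ?_ ?_ ?_
    · intro x hx
      simp only [Finset.mem_filter, Finset.mem_univ, true_and] at hx ⊢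
      rw [mul_pow, hcc, mul_left_comm, htr, hx, mul_one]
    · intro x _ y _ h
      exact mul_left_cancel₀ hc0 h
    · intro y hy
      simp only [Finset.mem_filter, Finset.mem_univ, true_and] at hy ⊢
      refine ⟨c⁻¹ * y, ?_, by field_simp⟩
      apply mul_left_cancel₀ ht
      rw [← htr, ← hcc, mul_one, ← hy]
      congr 1
      field_simp
  have hS : eighthSum ψ a = ∑ t, (M t : ℂ) * ψ₀ t := by
    unfold eighthSum
    simp_rw [hψ]
    rw [← Finset.sum_fiberwise (s := Finset.univ) (g := fun x => tr (a * x ^ 8))]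
    refine Finset.sum_congr rfl fun t _ => ?_
    rw [Finset.sum_congr rfl (g := fun _ => ψ₀ t), Finset.sum_const, nsmul_eq_mul]
    intro x hx
    rw [(Finset.mem_filter.1 hx).2]
  have hsum0 : ∑ t, ψ₀ t = 0 := AddChar.sum_eq_zero_of_ne_one h₀
  refine ⟨(M 0 : ℤ) - M 1, ?_, ?_⟩
  · have h1 : ∀ t, (M t : ℂ) * ψ₀ t = M 1 * ψ₀ t + if t = 0 then ((M 0 : ℂ) - M 1) else 0 := by
      intro t
      by_cases ht : t = 0
      · subst ht
        simp
      · rw [hM1 t ht, if_neg ht, add_zero]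
    rw [hS, Finset.sum_congr rfl fun t _ => h1 t, Finset.sum_add_distrib, ← Finset.mul_sum, hsum0]
    simp
  · have hd1 : 8 ∣ M 1 := by
      have := eight_dvd_card_filter w hc (fun u : F => tr (a * u) = 1)
      have h2 : M 1 = (Finset.univ.filter fun x : F => x ≠ 0 ∧ tr (a * x ^ 8) = 1).card := by
        refine congrArg Finset.card (Finset.filter_congr fun x _ => ⟨fun h => ⟨?_, h⟩, fun h => h.2⟩)
        rintro rfl
        simp at h
      rw [h2]
      exact this
    have hd0 : 8 ∣ M 0 - 1 := by
      have := eight_dvd_card_filter w hc (fun u : F => tr (a * u) = 0)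
      have h2 : M 0 = (Finset.univ.filter fun x : F => x ≠ 0 ∧ tr (a * x ^ 8) = 0).card + 1 := by
        rw [← Finset.card_insert_of_notMem (a := (0 : F)) (by simp)]
        refine congrArg Finset.card ?_
        ext x
        simp only [Finset.mem_filter, Finset.mem_univ, true_and, Finset.mem_insert]
        by_cases hx : x = 0 <;> simp [hx]
      rw [h2, Nat.add_sub_cancel]
      exact this
    have h3 : 0 < M 0 := Finset.card_pos.2 ⟨0, by simp⟩
    omega

end ExponentialSums

/-! ### The periods and the number of solutions -/

/-- As `-1` is an eighth power when `16 ∣ q - 1`, a nontrivial zero of `x⁸ + g^m y⁸` would make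
`g ^ m` an eighth power. -/
lemma eq_zero_of_pow_eight_add_eq_zero {F : Type*} [Field F] (w : ℕ) (hw : 0 < w)
    (hw2 : Even w) (g : F) (hg : orderOf g = 8 * w) (hcard : ∀ x : F, x ≠ 0 → x ^ (8 * w) = 1)
    (m : ℕ) (hm : ¬ 8 ∣ m) (x y : F) (h : x ^ 8 + g ^ m * y ^ 8 = 0) : x = 0 ∧ y = 0 := by
  by_cases hy : y = 0
  · subst hy
    simpa using h
  · exfalso
    have hg0 : g ≠ 0 := by
      rintro rfl
      rw [orderOf_zero] at hg
      omega
    have hx : x ≠ 0 := by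
      rintro rfl
      simp [hg0, hy] at h
    have h1 : g ^ m * y ^ 8 = -x ^ 8 := by linear_combination h
    have h2 : g ^ (m * w) = 1 := by
      have := congrArg (· ^ w) h1
      simp only [mul_pow, hw2.neg_pow, ← pow_mul] at this
      rwa [hcard x hx, hcard y hy, mul_one] at this
    have h3 := orderOf_dvd_of_pow_eq_one h2
    rw [hg] at h3
    exact hm (Nat.dvd_of_mul_dvd_mul_right hw h3)

/-- The count of solutions, with the eight periods `eighthSum ψ (gʲ)` expressed through a primitive
representation `α² + 2β² = p^(2k)`. -/
lemma card_solutions_int (p k : ℕ) [Fact p.Prime] (hp8 : p % 8 = 3) (hk : 0 < k)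
    (F : Type*) [Field F] [Fintype F] [DecidableEq F] (hcard : Fintype.card F = p ^ (4 * k)) :
    ∃ (w : ℕ) (α β : ℤ), p ^ (4 * k) = 8 * w + 1 ∧ ¬ (p : ℤ) ∣ α ∧
      α ^ 2 + 2 * β ^ 2 = (p : ℤ) ^ (2 * k) ∧ ∀ n : ℕ, 0 < n →
      (p : ℤ) ^ (4 * k) * Fintype.card {x : Fin n → F // ∑ i, x i ^ 8 = 0} =
        ((p : ℤ) ^ (4 * k)) ^ n + w *
          (2 * (((p : ℤ) ^ (2 * k) + 4 * (p ^ k * β)) ^ n +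
              ((p : ℤ) ^ (2 * k) - 4 * (p ^ k * β)) ^ n) + 2 * ((p : ℤ) ^ (2 * k)) ^ n +
            (-3 * (p : ℤ) ^ (2 * k) + 4 * (p ^ k * α)) ^ n +
            (-3 * (p : ℤ) ^ (2 * k) - 4 * (p ^ k * α)) ^ n) := by
  have hp : p.Prime := Fact.out
  have : CharP F p := charP_of_card_eq_prime_pow hcard
  have hp2 : p ≠ 2 := by rintro rfl; omega
  have hF : ringChar F ≠ 2 := by rwa [ringChar.eq F p]
  obtain ⟨w, hq, hpw⟩ : ∃ w, p ^ (4 * k) = 8 * w + 1 ∧ p - 1 ∣ w := by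
    obtain ⟨m, hm⟩ : ∃ m, p = 8 * m + 3 := ⟨p / 8, by omega⟩
    have h1 : p ^ 4 = 8 * ((8 * m + 2) * ((2 * m + 1) * (32 * m ^ 2 + 24 * m + 5))) + 1 := by
      rw [hm]; ring
    have h2 : p ^ 4 - 1 ∣ (p ^ 4) ^ k - 1 := Nat.sub_one_dvd_pow_sub_one _ _
    obtain ⟨c, hc⟩ := h2
    have h3 : 0 < (p ^ 4) ^ k := pow_pos (pow_pos hp.pos _) _
    refine ⟨(8 * m + 2) * ((2 * m + 1) * (32 * m ^ 2 + 24 * m + 5)) * c, ?_, ?_⟩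
    · rw [pow_mul]
      rw [h1, Nat.add_sub_cancel, ← h1, mul_assoc] at hc
      omega
    · rw [show p - 1 = 8 * m + 2 by omega, mul_assoc]
      exact dvd_mul_right _ _
  have hw : 0 < w := by
    have : 1 < p ^ (4 * k) := Nat.one_lt_pow (by omega) hp.one_lt
    omega
  have hw2 : Even w := by
    obtain ⟨c, hc⟩ := hpw
    rw [hc]
    exact ((Nat.even_iff).2 (by omega)).mul_right _
  have hc : Fintype.card F = 8 * w + 1 := hcard.trans hq
  set Q : ℤ := (p : ℤ) ^ (2 * k) with hQ
  have hQ2 : (p : ℤ) ^ (4 * k) = Q ^ 2 := by rw [hQ, ← pow_mul]; congr 1; ring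
  have hQw : Q ^ 2 = 8 * w + 1 := by rw [← hQ2]; exact_mod_cast hq
  have hQC : (Fintype.card F : ℂ) = (Q : ℂ) ^ 2 := by rw [hc]; exact_mod_cast hQw.symm
  have hQ8 : Q % 8 = 1 := by
    have : p ^ (2 * k) % 8 = 1 := by
      rw [pow_mul, Nat.pow_mod, Nat.pow_mod p, hp8]; simp
    rw [hQ]
    exact_mod_cast this
  obtain ⟨ψ₀, tr, ψ, h₀, hψ, hψtr, htr, hfrob⟩ := exists_trace_character p F
  obtain ⟨g, hg⟩ := exists_generator F
  have hgw : orderOf g = 8 * w := by omega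
  have hg0 : g ≠ 0 := by
    rintro rfl
    rw [orderOf_zero] at hgw
    omega
  choose z hz hz8 using eighthSum_eq_int p w hw hc hpw ψ₀ tr h₀ hψtr htr
  -- the eight periods
  obtain ⟨σ, hσ⟩ : ∃ σ : ℕ → ℤ, ∀ j, σ j = z (g ^ j) := ⟨_, fun j => rfl⟩
  have hper : ∀ j, σ (j + 8) = σ j := by
    intro j
    have := eighthSum_mul_pow (ψ := ψ) (g ^ j) hg0
    rw [← pow_add, hz, hz] at this
    rw [hσ, hσ]
    exact_mod_cast this
  have hmod : ∀ j, σ j = σ (j % 8) := fun j => (Function.Periodic.map_mod_nat hper j).symm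
  -- Frobenius invariance of `ψ` identifies the periods at `j` and `p j`
  have hfr : ∀ j, σ (p * j) = σ j := by
    intro j
    have h1 : eighthSum ψ ((g ^ j) ^ p) = eighthSum ψ (g ^ j) := by
      unfold eighthSum
      rw [← Equiv.sum_comp (frobeniusEquiv F p).toEquiv]
      refine Finset.sum_congr rfl fun x _ => ?_
      rw [← hfrob (g ^ j * x ^ 8)]
      congr 1
      change (g ^ j) ^ p * (x ^ p) ^ 8 = _
      ring
    rw [hz, hz, ← pow_mul, mul_comm] at h1
    rw [hσ, hσ]
    exact_mod_cast h1
  have h3 : σ 3 = σ 1 := by rw [← hfr 1, hmod (p * 1)]; congr 1; omega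
  have h6 : σ 6 = σ 2 := by rw [← hfr 2, hmod (p * 2)]; congr 1; omega
  have h7 : σ 7 = σ 5 := by rw [← hfr 5, hmod (p * 5)]; congr 1; omega
  -- sums over the field in terms of periods
  have hsum : ∀ f : F → ℂ, (∀ j, f (g ^ (j + 8)) = f (g ^ j)) →
      ∑ a, f a = f 0 + w * ∑ i ∈ Finset.range 8, f (g ^ i) := by
    intro f hf
    rw [sum_eq_sum_powers g hg, hc, Nat.add_sub_cancel,
      sum_range_mul_periodic (fun i => f (g ^ i)) 8 w hf, nsmul_eq_mul]
  have hSσ : ∀ j, eighthSum ψ (g ^ j) = σ j := fun j => by rw [hz, hσ]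
  have hS8 : ∀ j, eighthSum ψ (g ^ (j + 8)) = eighthSum ψ (g ^ j) := fun j => by
    rw [hSσ, hSσ, hper]
  have hmom : ∀ n : ℕ, 0 < n →
      Q ^ 2 * Fintype.card {x : Fin n → F // ∑ i, x i ^ 8 = 0} =
        (Q ^ 2) ^ n + w * ∑ i ∈ Finset.range 8, σ i ^ n := by
    intro n hn
    have h1 := sum_eighthSum_pow hψ n
    rw [hsum _ (fun j => by rw [hS8]), eighthSum_zero, hQC] at h1
    simp_rw [hSσ] at h1
    exact_mod_cast h1.symm
  have hw0 : (w : ℤ) ≠ 0 := by exact_mod_cast hw.ne'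
  have E : σ 0 + σ 4 + 2 * σ 1 + 2 * σ 5 + 2 * σ 2 = 0 := by
    have h1 := hmom 1 one_pos
    have h2 : Fintype.card {x : Fin 1 → F // ∑ i, x i ^ 8 = 0} = 1 := by
      refine Fintype.card_eq_one_iff.2 ⟨⟨0, by simp⟩, ?_⟩
      rintro ⟨x, hx⟩
      ext i
      fin_cases i
      simpa using hx
    rw [h2] at h1
    simp only [Finset.sum_range_succ, Finset.sum_range_zero, h3, h6, h7] at h1
    have : (w : ℤ) * (σ 0 + σ 4 + 2 * σ 1 + 2 * σ 5 + 2 * σ 2) = 0 := by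
      push_cast at h1
      linear_combination -h1
    exact (mul_eq_zero.1 this).resolve_left hw0
  have hcorr : ∀ m, ¬ 8 ∣ m → ∑ i ∈ Finset.range 8, σ i * σ (m + i) = -8 * Q ^ 2 := by
    intro m hm
    have h1 := sum_eighthSum_mul hψ (g ^ m) (eq_zero_of_pow_eight_add_eq_zero w hw hw2 g hgw
      (fun x hx => by
        rw [← FiniteField.pow_card_sub_one_eq_one x hx, hc, Nat.add_sub_cancel]) m hm)
    rw [hsum _ (fun j => by rw [← pow_add, ← pow_add, ← add_assoc, hS8, hS8]), mul_zero,
      eighthSum_zero, hQC] at h1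
    simp_rw [← pow_add, hSσ] at h1
    have h2 : Q ^ (2 + 2) + w * ∑ i ∈ Finset.range 8, σ i * σ (m + i) = Q ^ 2 := by
      exact_mod_cast h1
    apply mul_left_cancel₀ hw0
    linear_combination h2 - Q ^ 2 * hQw
  have E1 := hcorr 1 (by norm_num)
  have E2 := hcorr 2 (by norm_num)
  have E4 := hcorr 4 (by norm_num)
  simp only [Finset.sum_range_succ, Finset.sum_range_zero, Nat.reduceAdd, hmod 8, hmod 9, hmod 10,
    hmod 11, Nat.reduceMod, h3, h6, h7] at E1 E2 E4
  have hσ8 : ∀ j, σ j % 8 = 1 := fun j => by rw [hσ]; exact hz8 _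
  obtain ⟨a, b, e0, e4, e1, e5, e2, hab⟩ := solve_periods Q (σ 0) (σ 1) (σ 2) (σ 4) (σ 5) hQ8
    (hσ8 _) (hσ8 _) (hσ8 _) (hσ8 _) (hσ8 _) E (by linear_combination E1)
    (by linear_combination E2) (by linear_combination E4)
  -- the quadratic twist bounds the `p`-adic valuation of `a`
  have hη : quadraticChar F g = -1 := by
    rw [quadraticChar_eq_pow_of_char_ne_two hF hg0, if_neg]
    rw [hc, show (8 * w + 1) / 2 = 4 * w by omega]
    intro h
    have := Nat.le_of_dvd (by omega) (orderOf_dvd_of_pow_eq_one h)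
    omega
  have hη1 : quadraticChar F (-1) = 1 := by
    rw [quadraticChar_eq_pow_of_char_ne_two hF (neg_ne_zero.2 one_ne_zero), if_pos]
    rw [hc, show (8 * w + 1) / 2 = 2 * (2 * w) by omega, pow_mul]
    simp
  obtain ⟨τ, hτ, htw⟩ := sum_quadraticChar_eighthSum_sq hψ hF hη1
  obtain ⟨W, hWdef⟩ : ∃ W, W = ∑ x : F, ∑ y : F, quadraticChar F (x ^ 8 + y ^ 8) := ⟨_, rfl⟩
  have hWp : ¬ (p : ℤ) ∣ W := by
    intro h
    have h1 := sum_quadraticChar_mod w hw hF hc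
    have hwr : (p ^ (2 * (2 * k)) - 1) / 8 = w := by
      rw [show 2 * (2 * k) = 4 * k by ring]
      omega
    have h2 := not_dvd_choose_eighth p hp8 (2 * k)
    have h4 := dvd_choose_quarter p hp8 (2 * k) (by omega)
    rw [hwr] at h2 h4
    rw [← hWdef, (CharP.intCast_eq_zero_iff F p W).2 h, (CharP.cast_eq_zero_iff F p _).2 h4,
      add_zero] at h1
    have h5 : ((2 * (4 * w).choose w : ℕ) : F) = 0 := by
      push_cast
      exact h1.symm
    rw [CharP.cast_eq_zero_iff F p, hp.dvd_mul] at h5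
    rcases h5 with h5 | h5
    · exact hp2 ((Nat.prime_dvd_prime_iff_eq hp Nat.prime_two).1 h5)
    · exact h2 h5
  rw [← hWdef, hsum _ (fun j => by rw [hS8, pow_add, map_mul, map_pow _ _ 8, hη]; simp)] at htw
  simp_rw [hSσ, map_pow, hη, MulChar.map_zero] at htw
  simp only [Finset.sum_range_succ, Finset.sum_range_zero, h3, h6, h7, e0, e1, e2, e4, e5] at htw
  obtain ⟨W', hW', hWQ⟩ : ∃ W', ¬ (p : ℤ) ∣ W' ∧ τ * W = Q * W' := by
    rw [hQC, sq_eq_sq_iff_eq_or_eq_neg] at hτ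
    rcases hτ with h | h
    · exact ⟨W, hWp, by rw [h]⟩
    · exact ⟨-W, by rwa [dvd_neg], by rw [h]; push_cast; ring⟩
  rw [hWQ] at htw
  have htw' : Q * W' = (Q ^ 2 - 1) * (8 * a ^ 2 - 2 * Q ^ 2) := by
    have h1 : Q * W' = w * ((-3 * Q + 4 * a) ^ 2 + (-3 * Q - 4 * a) ^ 2 + 2 * Q ^ 2 -
        2 * (Q + 4 * b) ^ 2 - 2 * (Q - 4 * b) ^ 2) := by
      have h2 : ((Q * W' : ℤ) : ℂ) = ((w * ((-3 * Q + 4 * a) ^ 2 + (-3 * Q - 4 * a) ^ 2 +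
          2 * Q ^ 2 - 2 * (Q + 4 * b) ^ 2 - 2 * (Q - 4 * b) ^ 2) : ℤ) : ℂ) := by
        push_cast at htw ⊢
        rw [← htw]
        ring
      exact_mod_cast h2
    rw [h1]
    linear_combination (-32 * w) * hab - (8 * a ^ 2 - 2 * Q ^ 2) * hQw
  obtain ⟨α, β, ha, hb, hα, hαβ⟩ := extract_power p k hp hp2 hk a b W' hab htw' hW'
  refine ⟨w, α, β, hq, hα, hαβ, fun n hn => ?_⟩
  rw [← ha, ← hb, hQ2, hmom n hn]
  simp only [Finset.sum_range_succ, Finset.sum_range_zero, h3, h6, h7, e0, e1, e2, e4, e5]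
  ring

theorem stmt17 (p s n : ℕ) [Fact p.Prime] (hp : p % 8 = 3) (hs : 0 < s) (hn : 0 < n)
    (F : Type*) [Field F] [Fintype F] [DecidableEq F] (hcard : Fintype.card F = p ^ s)
    (h16 : 16 ∣ p ^ s - 1)
    (A B : ℤ) (hAB : (p : ℤ) ^ (s / 2) = A ^ 2 + 2 * B ^ 2)
    (hA4 : A ≡ -1 [ZMOD 4]) (hpA : ¬ (p : ℤ) ∣ A) :
    (Fintype.card {x : Fin n → F // ∑ i, x i ^ 8 = 0} : ℝ) =
      ((p : ℝ) ^ s) ^ (n - 1) + (((p : ℝ) ^ s - 1) / (8 * (p : ℝ) ^ s)) *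
        (2 * ((Real.sqrt ((p : ℝ) ^ s) + 4 * B * ((p : ℝ) ^ s) ^ ((1 : ℝ) / 4)) ^ n +
              (Real.sqrt ((p : ℝ) ^ s) - 4 * B * ((p : ℝ) ^ s) ^ ((1 : ℝ) / 4)) ^ n) +
         2 * Real.sqrt ((p : ℝ) ^ s) ^ n +
         (-3 * Real.sqrt ((p : ℝ) ^ s) + 4 * A * ((p : ℝ) ^ s) ^ ((1 : ℝ) / 4)) ^ n +
         (-3 * Real.sqrt ((p : ℝ) ^ s) - 4 * A * ((p : ℝ) ^ s) ^ ((1 : ℝ) / 4)) ^ n) := by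
  have hp' : p.Prime := Fact.out
  have hp2 : p ≠ 2 := by rintro rfl; omega
  -- `16 ∣ p ^ s - 1` forces `4 ∣ s`, as `p` has order `4` modulo `16`
  obtain ⟨k, rfl⟩ : ∃ k, s = 4 * k := by
    have h1 : p ^ s % 16 = 1 := by
      have := pow_pos hp'.pos s
      omega
    have h4 : p ^ 4 % 16 = 1 := by
      rcases (by omega : p % 16 = 3 ∨ p % 16 = 11) with h | h <;> rw [Nat.pow_mod, h]
    have h2 : p ^ s % 16 = p ^ (s % 4) % 16 := by
      conv_lhs => rw [← Nat.div_add_mod s 4, pow_add, pow_mul, Nat.mul_mod, Nat.pow_mod, h4]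
      simp
    have h3 : s % 4 < 4 := Nat.mod_lt _ (by norm_num)
    refine ⟨s / 4, ?_⟩
    suffices s % 4 = 0 by omega
    by_contra h0
    rw [h1] at h2
    generalize s % 4 = r at h2 h3 h0
    rcases (by omega : p % 16 = 3 ∨ p % 16 = 11) with h | h <;> rw [Nat.pow_mod, h] at h2 <;>
      interval_cases r <;> omega
  have hk : 0 < k := by omega
  obtain ⟨w, α, β, hq, hα, hαβ, hN⟩ := card_solutions_int p k hp hk F hcard
  rw [show 4 * k / 2 = 2 * k by omega] at hAB
  obtain ⟨hαA, hβB⟩ := partition_unique p (2 * k) hp' hp2 (by omega) A B α β hAB.symm hαβ hpA hα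
  have hp0 : (0 : ℝ) < p := by exact_mod_cast hp'.pos
  have hsqrt : Real.sqrt ((p : ℝ) ^ (4 * k)) = (p : ℝ) ^ (2 * k) := by
    rw [show 4 * k = 2 * k * 2 by ring, pow_mul, Real.sqrt_sq (by positivity)]
  have hroot : ((p : ℝ) ^ (4 * k)) ^ ((1 : ℝ) / 4) = (p : ℝ) ^ k := by
    have := Real.pow_rpow_inv_natCast (pow_nonneg hp0.le k) (four_ne_zero)
    rw [← pow_mul, mul_comm k 4] at this
    rw [one_div]
    exact_mod_cast this
  have hNR := congrArg (fun z : ℤ => (z : ℝ)) (hN n hn)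
  have hw : (p : ℝ) ^ (4 * k) = 8 * w + 1 := by exact_mod_cast hq
  have hq0 : (p : ℝ) ^ (4 * k) ≠ 0 := by positivity
  push_cast at hNR
  rw [hsqrt, hroot]
  apply mul_left_cancel₀ hq0
  rw [hNR, mul_add ((p : ℝ) ^ (4 * k)), ← pow_succ', Nat.sub_add_cancel hn]
  congr 1
  rw [← mul_assoc ((p : ℝ) ^ (4 * k)), show (p : ℝ) ^ (4 * k) * (((p : ℝ) ^ (4 * k) - 1) / (8 * (p : ℝ) ^ (4 * k))) =
    w by field_simp; linarith]
  congr 1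
  -- the formula is invariant under `A ↦ -A` and `B ↦ -B`
  have hα' : (-3 * (p : ℝ) ^ (2 * k) + 4 * (p ^ k * α)) ^ n +
      (-3 * (p : ℝ) ^ (2 * k) - 4 * (p ^ k * α)) ^ n =
      (-3 * (p : ℝ) ^ (2 * k) + 4 * A * p ^ k) ^ n +
      (-3 * (p : ℝ) ^ (2 * k) - 4 * A * p ^ k) ^ n := by
    rcases hαA with rfl | rfl <;> push_cast <;> ring
  have hβ' : ((p : ℝ) ^ (2 * k) + 4 * (p ^ k * β)) ^ n +
      ((p : ℝ) ^ (2 * k) - 4 * (p ^ k * β)) ^ n =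
      ((p : ℝ) ^ (2 * k) + 4 * B * p ^ k) ^ n +
      ((p : ℝ) ^ (2 * k) - 4 * B * p ^ k) ^ n := by
    rcases hβB with rfl | rfl <;> push_cast <;> ring
  rw [← hβ']
  linear_combination hα'
end
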